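/- arXiv:2212.08644 — 2 statements merged into one kernel-verified Lean document; each statement's English description precedes it below -/
import Mathlib

section
/- Structure of h-formally smooth hfp algebras: let (A, I) be a Henselian pair and let B be an A-algebra which is hfp over A with respect to I and such that A → B is h-formally smooth. Then there exist a smooth A-algebra R, an A-algebra H together with an A-algebra homomorphism R → H exhibiting H as a Henselization of the pair (R, I·R), and a finitely generated ideal J of H with J ⊆ ⋂_{r ≥ 1} I^r·H, such that B is isomorphic as an A-algebra to H/J. -/
universe u

/-- A ring homomorphism `ρ : R →+* H` exhibits `H` as a Henselization of the pair `(R, K)`: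
`(H, K·H)` is a Henselian pair, and every map from `(R, K)` to a Henselian pair factors
uniquely through `ρ`. -/
def IsHenselization {R H : Type u} [CommRing R] [CommRing H]
    (K : Ideal R) (ρ : R →+* H) : Prop :=
  HenselianRing H (K.map ρ) ∧
    ∀ (C : Type u) [CommRing C] (J : Ideal C), HenselianRing C J →
      ∀ f : R →+* C, K.map f ≤ J → ∃! g : H →+* C, g.comp ρ = f

/-- `φ : A →+* B` is Henselian finitely presented (hfp) with respect to `I`:
`B` is a Henselization of `(R, I·R)` for some finitely presented `A`-algebra `R`. -/
def IsHfp {A B : Type u} [CommRing A] [CommRing B] (φ : A →+* B) (I : Ideal A) : Prop :=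
  ∃ (R : Type u) (_ : CommRing R) (ψ : A →+* R) (ρ : R →+* B),
    ψ.FinitePresentation ∧ ρ.comp ψ = φ ∧ IsHenselization (I.map ψ) ρ

/-- `φ : A →+* B` is h-formally étale with respect to `I`. -/
def IsHFormallyEtale {A B : Type u} [CommRing A] [CommRing B] (φ : A →+* B) (I : Ideal A) :
    Prop :=
  ∀ (E C : Type u) [CommRing E] [CommRing C] (e : A →+* E) (c : A →+* C)
    (p : E →+* C) (u : B →+* C),
    p.comp e = c → u.comp φ = c →
    (∃ N : ℕ, 1 ≤ N ∧ Ideal.map e (I ^ N) = ⊥ ∧ Ideal.map c (I ^ N) = ⊥) →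
    Function.Surjective p →
    (∃ M : ℕ, 1 ≤ M ∧ RingHom.ker p ^ M = ⊥) →
    ∃! v : B →+* E, v.comp φ = e ∧ p.comp v = u

/-- `φ : A →+* B` is h-formally smooth with respect to `I`. -/
def IsHFormallySmooth {A B : Type u} [CommRing A] [CommRing B] (φ : A →+* B) (I : Ideal A) :
    Prop :=
  ∀ (E C : Type u) [CommRing E] [CommRing C] (e : A →+* E) (c : A →+* C)
    (p : E →+* C) (u : B →+* C),
    p.comp e = c → u.comp φ = c →
    (∃ N : ℕ, 1 ≤ N ∧ Ideal.map e (I ^ N) = ⊥ ∧ Ideal.map c (I ^ N) = ⊥) →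
    Function.Surjective p →
    (∃ M : ℕ, 1 ≤ M ∧ RingHom.ker p ^ M = ⊥) →
    ∃ v : B →+* E, v.comp φ = e ∧ p.comp v = u

/-- `φ : A →+* B` is h-étale with respect to `I`: `B` is a Henselization of `(R, I·R)`
for some étale `A`-algebra `R`. -/
def IsHEtale {A B : Type u} [CommRing A] [CommRing B] (φ : A →+* B) (I : Ideal A) : Prop :=
  ∃ (R : Type u) (_ : CommRing R) (_ : Algebra A R) (ρ : R →+* B),
    Algebra.Etale A R ∧ ρ.comp (algebraMap A R) = φ ∧
      IsHenselization (I.map (algebraMap A R)) ρ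

/-- `φ : A →+* B` is h-smooth with respect to `I`: `B` is a Henselization of `(R, I·R)`
for some smooth `A`-algebra `R`. -/
def IsHSmooth {A B : Type u} [CommRing A] [CommRing B] (φ : A →+* B) (I : Ideal A) : Prop :=
  ∃ (R : Type u) (_ : CommRing R) (_ : Algebra A R) (ρ : R →+* B),
    Algebra.Smooth A R ∧ ρ.comp (algebraMap A R) = φ ∧
      IsHenselization (I.map (algebraMap A R)) ρ

/-- A ring homomorphism is flat if it makes the target into a flat module over the source. -/
def RingHomFlat {A C : Type u} [CommRing A] [CommRing C] (f : A →+* C) : Prop :=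
  letI := f.toAlgebra
  Module.Flat A C

/-- A ring homomorphism is smooth if it makes the target into a smooth algebra over the
source (smooth = formally smooth + finitely presented). -/
def RingHomSmooth {A C : Type u} [CommRing A] [CommRing C] (f : A →+* C) : Prop :=
  letI := f.toAlgebra
  Algebra.Smooth A C

/-- A ring homomorphism is étale if it makes the target into an étale algebra over the
source (étale = formally étale + finitely presented). -/
def RingHomEtale {A C : Type u} [CommRing A] [CommRing C] (f : A →+* C) : Prop :=
  letI := f.toAlgebra
  Algebra.Etale A C

/-!
Write `B` as the Henselization of `P / J`, where `P` is a polynomial ring over `A` and `J` is a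
finitely generated ideal. Formal smoothness modulo powers of `I` splits the conormal map of `J`
modulo `I`: there are `h j ∈ J` with `F ≡ ∑ j, ∂F/∂X j * h j` modulo `J ^ 2 + I P` for every
`F ∈ J`. Hence the Jacobian matrix of `h` is idempotent modulo `J + I P`. Since `B` is Henselian,
this idempotent lifts to an idempotent matrix `E` over an étale `P`-algebra mapping to `B`. After a
localization that makes the Jacobian invertible on the image of `E`, the equations `E h = 0` define
a smooth `A`-algebra `R` with a map to `B` that is an isomorphism modulo `I`.

A lift of the identity of `B` along `R / I ^ r → B / I ^ r` exists by formal smoothness, so these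
maps are isomorphisms for all `r`, and the kernel of the Henselization `H` of `R` onto `B` lies in
every `I ^ r H`. That kernel is generated by the image of `J`.

Henselizations are obtained as values of formal expressions built from `R` by ring operations and
by solving `z = 1 + G(z)` with `G` having coefficients in the ideal: this form of Hensel's lemma
has a unique solution, so no choice of a simple root has to be recorded in the expressions.
-/

open Polynomial

section HenselianPairs

variable {S : Type*} [CommRing S] {J : Ideal S}

theorem eval_mem_of_mem_map_C {G : S[X]} (hG : G ∈ J.map C) (x : S) : G.eval x ∈ J := by
  rw [eval_eq_sum_range]
  exact Ideal.sum_mem _ fun l _ ↦ J.mul_mem_right _ (Ideal.mem_map_C_iff.1 hG l)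

theorem exists_eval_sub_eval_eq_mul {G : S[X]} (hG : G ∈ J.map C) (x y : S) :
    ∃ q ∈ J, G.eval x - G.eval y = (x - y) * q := by
  choose q hq using fun l : ℕ ↦ sub_dvd_pow_sub_pow x y l
  refine ⟨∑ l ∈ Finset.range (G.natDegree + 1), G.coeff l * q l,
    Ideal.sum_mem _ fun l _ ↦ J.mul_mem_right _ (Ideal.mem_map_C_iff.1 hG l), ?_⟩
  simp only [eval_eq_sum_range, ← Finset.sum_sub_distrib, Finset.mul_sum, ← mul_sub, hq]
  exact Finset.sum_congr rfl fun l _ ↦ by ring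

theorem isUnit_of_mk_of_le_jacobson (hJ : J ≤ Ideal.jacobson ⊥) {x : S}
    (hx : IsUnit (Ideal.Quotient.mk J x)) : IsUnit x :=
  (isLocalHom_of_le_jacobson_bot J hJ).map_nonunit x hx

theorem eq_of_eq_one_add_eval (hJ : J ≤ Ideal.jacobson ⊥) {G : S[X]} (hG : G ∈ J.map C) {x y : S}
    (hx : x = 1 + G.eval x) (hy : y = 1 + G.eval y) : x = y := by
  obtain ⟨q, hq, h⟩ := exists_eval_sub_eval_eq_mul hG x y
  have hunit : IsUnit (1 - q) := Ideal.isUnit_of_sub_one_mem_jacobson_bot _ (hJ (by simpa using hq))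
  have hmul : (x - y) * (1 - q) = 0 := by linear_combination hx - hy + h
  exact sub_eq_zero.1 (hunit.mul_left_eq_zero.1 hmul)

/-- The fixed point form of Hensel's lemma: `z = 1 + G(z)` is solvable for every polynomial `G`
with coefficients in `J`. It characterizes Henselian pairs by equations with no unit or monicity
conditions, which makes it easy to transport along ring homomorphisms. -/
def HasFixedPoints (J : Ideal S) : Prop :=
  ∀ G ∈ J.map C, ∃ z, z = 1 + G.eval z

-- The inverse of `z` is the simple root `w ≡ 1` of `w ^ (d + 1) - w ^ d + w ^ d * G(1 / w)`.
theorem exists_eq_one_add_mul_eval [HenselianRing S J] {G : S[X]} (hG : G ∈ J.map C) :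
    ∃ z, z = 1 + z * G.eval z := by
  set d := G.natDegree
  set r := reflect d G
  have hr : r ∈ J.map C := Ideal.mem_map_C_iff.2 fun n ↦ by
    rw [coeff_reflect]; exact Ideal.mem_map_C_iff.1 hG _
  have hr' : r.derivative ∈ J.map C := Ideal.mem_map_C_iff.2 fun n ↦ by
    rw [coeff_derivative]; exact J.mul_mem_right _ (Ideal.mem_map_C_iff.1 hr _)
  have hrd : r.degree < (d + 1 : ℕ) := by
    refine (degree_lt_iff_coeff_zero _ _).2 fun m hm ↦ ?_
    rw [coeff_reflect, revAt_eq_self_of_lt (by lia)]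
    exact coeff_eq_zero_of_natDegree_lt (by lia)
  have hXd : (X ^ d : S[X]).degree < (d + 1 : ℕ) :=
    (degree_X_pow_le d).trans_lt (by exact_mod_cast d.lt_succ_self)
  obtain ⟨w, hroot, hw⟩ := HenselianRing.is_henselian (I := J) (X ^ (d + 1) + (r - X ^ d))
    (monic_X_pow_add ((degree_sub_le _ _).trans_lt (max_lt hrd hXd))) 1
    (by simpa using eval_mem_of_mem_map_C hr 1)
    (by simp [derivative_X_pow,
      Ideal.Quotient.eq_zero_iff_mem.2 (eval_mem_of_mem_map_C hr' 1)])
  obtain ⟨w, rfl⟩ : IsUnit w :=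
    Ideal.isUnit_of_sub_one_mem_jacobson_bot _ (HenselianRing.jac (I := J) hw)
  have hrw : r.eval (w : S) = w ^ d * G.eval (↑w⁻¹ : S) := by
    have := eval₂_reflect_mul_pow (RingHom.id S) (↑w⁻¹ : S) d G le_rfl
    rw [invOf_units, inv_inv, eval₂_id, eval₂_id] at this
    rw [← this, mul_left_comm, ← mul_pow, w.mul_inv, one_pow, mul_one]
  have hw0 : (w : S) ^ d * (w - 1 + G.eval (↑w⁻¹ : S)) = 0 := by
    have : eval (w : S) (X ^ (d + 1) + (r - X ^ d)) = 0 := hroot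
    simp only [eval_add, eval_sub, eval_pow, eval_X, hrw] at this
    linear_combination this
  rw [(w.isUnit.pow d).mul_right_eq_zero] at hw0
  exact ⟨(↑w⁻¹ : S), by linear_combination w.mul_inv - (↑w⁻¹ : S) * hw0⟩

theorem HasFixedPoints.of_henselianRing [HenselianRing S J] : HasFixedPoints J := by
  intro G hG
  set u := 1 + G.coeff 0 with hu
  have hdivX : G.divX ∈ J.map C := Ideal.mem_map_C_iff.2 fun n ↦ by
    rw [coeff_divX]; exact Ideal.mem_map_C_iff.1 hG _
  have hcomp : G.divX.comp (C u * X) ∈ J.map C := by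
    have := Ideal.mem_map_of_mem (compRingHom (C u * X)) hdivX
    rwa [Ideal.map_map, show (compRingHom (C u * X)).comp C = C by ext; simp] at this
  obtain ⟨y, hy⟩ := exists_eq_one_add_mul_eval hcomp
  refine ⟨u * y, ?_⟩
  have hG0 := congrArg (eval (u * y)) G.divX_mul_X_add
  simp only [eval_add, eval_mul, eval_X, eval_C, eval_comp] at hG0 hy
  linear_combination u * hy + hG0 + hu

theorem HasFixedPoints.le_jacobson (h : HasFixedPoints J) : J ≤ Ideal.jacobson ⊥ := by
  intro x hx
  rw [Ideal.mem_jacobson_bot]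
  intro y
  obtain ⟨z, hz⟩ := h (C x * (-C y * X))
    (Ideal.mul_mem_right _ _ (Ideal.mem_map_of_mem C hx))
  refine IsUnit.of_mul_eq_one z ?_
  simp only [eval_mul, eval_neg, eval_C, eval_X] at hz
  linear_combination hz

-- With `u = f'(a)`, the correction `x = -f(a) u⁻¹ z` is a root of the Taylor expansion of `f` at
-- `a` exactly when `z` is a fixed point.
theorem HasFixedPoints.henselianRing (h : HasFixedPoints J) : HenselianRing S J := by
  refine ⟨h.le_jacobson, fun f _ a ha hunit ↦ ?_⟩
  obtain ⟨u, hu⟩ := isUnit_of_mk_of_le_jacobson h.le_jacobson hunit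
  set Q := (taylor a f).divX.divX
  have htaylor (x : S) : f.eval (x + a) = f.eval a + u * x + Q.eval x * x ^ 2 := by
    rw [← taylor_eval, ← (taylor a f).divX_mul_X_add, ← (taylor a f).divX.divX_mul_X_add,
      coeff_divX, zero_add, taylor_coeff_one, taylor_coeff_zero, hu]
    simp only [eval_add, eval_mul, eval_X, eval_C, Q]
    ring
  obtain ⟨z, hz⟩ := h (C (f.eval a) * (C ((↑u⁻¹ : S) ^ 2) * X ^ 2 *
      Q.comp (C (-f.eval a * (↑u⁻¹ : S)) * X)))
    (Ideal.mul_mem_right _ _ (Ideal.mem_map_of_mem C ha))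
  simp only [eval_mul, eval_C, eval_pow, eval_X, eval_comp] at hz
  refine ⟨-f.eval a * (↑u⁻¹ : S) * z + a, ?_, ?_⟩
  · rw [IsRoot.def, htaylor]
    linear_combination -f.eval a * hz - f.eval a * z * u.mul_inv
  · rw [add_sub_cancel_right, mul_assoc]
    exact J.mul_mem_right _ (neg_mem ha)

theorem henselianRing_map_of_surjective [HenselianRing S J] {D : Type*} [CommRing D]
    (π : S →+* D) (hπ : Function.Surjective π) : HenselianRing D (J.map π) := by
  refine HasFixedPoints.henselianRing fun G hG ↦ ?_
  have hmap : (J.map π).map C = (J.map C).map (mapRingHom π) := by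
    rw [Ideal.map_map, Ideal.map_map, mapRingHom_comp_C]
  rw [hmap, Ideal.mem_map_iff_of_surjective _ (Polynomial.map_surjective π hπ)] at hG
  obtain ⟨G, hG, rfl⟩ := hG
  obtain ⟨z, hz⟩ := HasFixedPoints.of_henselianRing G hG
  exact ⟨π z, by rw [coe_mapRingHom, eval_map_apply, ← map_one π, ← map_add, ← hz]⟩

theorem henselianRing_of_pow_eq_bot {n : ℕ} (hJ : J ^ n = ⊥) : HenselianRing S J := by
  refine HasFixedPoints.henselianRing fun G hG ↦ ?_
  have approx (k : ℕ) : ∃ z, z - (1 + G.eval z) ∈ J ^ k := by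
    induction k with
    | zero => exact ⟨1, by simp⟩
    | succ k ih =>
      obtain ⟨z, hz⟩ := ih
      obtain ⟨q, hq, h⟩ := exists_eval_sub_eval_eq_mul hG z (1 + G.eval z)
      refine ⟨1 + G.eval z, ?_⟩
      rw [show 1 + G.eval z - (1 + G.eval (1 + G.eval z)) = (z - (1 + G.eval z)) * q by
        linear_combination h, pow_succ]
      exact Ideal.mul_mem_mul hz hq
  obtain ⟨z, hz⟩ := approx n
  exact ⟨z, by rwa [hJ, Ideal.mem_bot, sub_eq_zero] at hz⟩

end HenselianPairs

section Henselization

variable {R : Type u} [CommRing R] {K : Ideal R}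

/-- Formal expressions for the elements of the Henselization of `(R, K)`. Besides the ring
operations there is a fixed point `z` of `z = 1 + ∑ s, i s * ∑ l < d, t s l * z ^ l` for every
family of coefficients; presenting them as explicit combinations of elements `i s` of `K` makes
them lie in the correct ideal wherever the expression is evaluated. -/
inductive HenselTerm (R : Type u) [CommRing R] (K : Ideal R) : Type u
  | of (r : R) : HenselTerm R K
  | add (a b : HenselTerm R K) : HenselTerm R K
  | mul (a b : HenselTerm R K) : HenselTerm R K
  | neg (a : HenselTerm R K) : HenselTerm R K
  | fix (m d : ℕ) (i : Fin m → K) (t : Fin m → ℕ → HenselTerm R K) : HenselTerm R K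

/-- A map from the pair `(R, K)` to a Henselian pair `(C, J)`; the Henselization is cut out of the
product of all of these. -/
structure HenselTarget (R : Type u) [CommRing R] (K : Ideal R) : Type (u + 1) where
  C : Type u
  [commRing : CommRing C]
  J : Ideal C
  [henselianRing : HenselianRing C J]
  f : R →+* C
  map_le : K.map f ≤ J

attribute [instance] HenselTarget.commRing HenselTarget.henselianRing

/-- The polynomial `∑ s, c s * ∑ l < d, a s l * X ^ l` of a fixed point expression. -/
noncomputable def fixPoly {S : Type*} [CommRing S] {m : ℕ} (d : ℕ) (c : Fin m → S)
    (a : Fin m → ℕ → S) : S[X] :=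
  ∑ s, C (c s) * ∑ l ∈ Finset.range d, C (a s l) * X ^ l

theorem fixPoly_mem_map_C {S : Type*} [CommRing S] {J : Ideal S} {m : ℕ} (d : ℕ) {c : Fin m → S}
    (hc : ∀ s, c s ∈ J) (a : Fin m → ℕ → S) : fixPoly d c a ∈ J.map C :=
  Ideal.sum_mem _ fun s _ ↦ Ideal.mul_mem_right _ _ (Ideal.mem_map_of_mem C (hc s))

theorem map_eval_fixPoly {S T : Type*} [CommRing S] [CommRing T] (g : S →+* T) {m : ℕ} (d : ℕ)
    (c : Fin m → S) (a : Fin m → ℕ → S) (z : S) :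
    g ((fixPoly d c a).eval z) = (fixPoly d (fun s ↦ g (c s)) fun s l ↦ g (a s l)).eval (g z) := by
  simp [fixPoly, eval_finsetSum]

theorem exists_eq_fixPoly_of_mem_map {S : Type*} [CommRing S] {f : R →+* S} {G : S[X]}
    (hG : G ∈ (K.map f).map C) :
    ∃ (m d : ℕ) (i : Fin m → K) (a : Fin m → ℕ → S), G = fixPoly d (fun s ↦ f (i s)) a := by
  rw [Ideal.map_map, Ideal.map, Ideal.span, Submodule.mem_span_set'] at hG
  obtain ⟨m, F, g, rfl⟩ := hG
  choose i hiK hi using fun s ↦ (g s).2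
  set d := (Finset.univ.sup fun s ↦ (F s).natDegree) + 1
  have hd (s : Fin m) : (F s).natDegree < d :=
    Nat.lt_succ_of_le (Finset.le_sup (f := fun s ↦ (F s).natDegree) (Finset.mem_univ s))
  refine ⟨m, d, fun s ↦ ⟨i s, hiK s⟩, fun s l ↦ (F s).coeff l,
    Finset.sum_congr rfl fun s _ ↦ ?_⟩
  beta_reduce
  rw [← as_sum_range_C_mul_X_pow' _ (hd s), smul_eq_mul, mul_comm, ← hi s, RingHom.comp_apply]

namespace HenselTerm

/-- The value of an expression in a Henselian target; `Classical.epsilon` picks the unique fixed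
point. -/
noncomputable def eval (Y : HenselTarget R K) : HenselTerm R K → Y.C
  | of r => Y.f r
  | add a b => a.eval Y + b.eval Y
  | mul a b => a.eval Y * b.eval Y
  | neg a => -a.eval Y
  | fix _ d i t => Classical.epsilon fun z ↦
      z = 1 + (fixPoly d (fun s ↦ Y.f (i s)) fun s l ↦ (t s l).eval Y).eval z

theorem fixPoly_eval_mem (Y : HenselTarget R K) {m : ℕ} (d : ℕ) (i : Fin m → K)
    (a : Fin m → ℕ → Y.C) : fixPoly d (fun s ↦ Y.f (i s)) a ∈ Y.J.map C :=
  fixPoly_mem_map_C d (fun s ↦ Y.map_le (Ideal.mem_map_of_mem _ (i s).2)) a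

theorem eval_fix (Y : HenselTarget R K) {m : ℕ} (d : ℕ) (i : Fin m → K)
    (t : Fin m → ℕ → HenselTerm R K) :
    (fix m d i t).eval Y = 1 +
      (fixPoly d (fun s ↦ Y.f (i s)) fun s l ↦ (t s l).eval Y).eval ((fix m d i t).eval Y) :=
  Classical.epsilon_spec (HasFixedPoints.of_henselianRing _ (fixPoly_eval_mem Y d i _))

end HenselTerm

/-- A model of the Henselization of `(R, K)`, in a larger universe: the values of all expressions
in the product of all Henselian targets. -/
noncomputable def HenselTermRing (R : Type u) [CommRing R] (K : Ideal R) :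
    Subring (∀ Y : HenselTarget R K, Y.C) where
  carrier := Set.range fun (t : HenselTerm R K) Y ↦ t.eval Y
  mul_mem' := by rintro _ _ ⟨a, rfl⟩ ⟨b, rfl⟩; exact ⟨.mul a b, rfl⟩
  one_mem' := ⟨.of 1, funext fun Y ↦ map_one Y.f⟩
  add_mem' := by rintro _ _ ⟨a, rfl⟩ ⟨b, rfl⟩; exact ⟨.add a b, rfl⟩
  zero_mem' := ⟨.of 0, funext fun Y ↦ map_zero Y.f⟩
  neg_mem' := by rintro _ ⟨a, rfl⟩; exact ⟨.neg a, rfl⟩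

namespace HenselTermRing

instance : Small.{u} (HenselTermRing R K) :=
  inferInstanceAs (Small.{u} (Set.range fun (t : HenselTerm R K) Y ↦ t.eval Y))

/-- The element of the Henselization described by an expression. -/
noncomputable def mk (t : HenselTerm R K) : HenselTermRing R K :=
  ⟨fun Y ↦ t.eval Y, t, rfl⟩

theorem mk_surjective : Function.Surjective (mk : HenselTerm R K → HenselTermRing R K) := by
  rintro ⟨_, t, rfl⟩
  exact ⟨t, rfl⟩

/-- The map from the Henselization to a Henselian target. -/
noncomputable def proj (Y : HenselTarget R K) : HenselTermRing R K →+* Y.C :=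
  (Pi.evalRingHom _ Y).comp (HenselTermRing R K).subtype

/-- The structure map of the Henselization. -/
noncomputable def of (K : Ideal R) : R →+* HenselTermRing R K :=
  (RingHom.pi fun Y ↦ Y.f).codRestrict _ fun r ↦ ⟨.of r, rfl⟩

theorem mk_fix {m : ℕ} (d : ℕ) (i : Fin m → K) (t : Fin m → ℕ → HenselTerm R K) :
    mk (.fix m d i t) = 1 +
      (fixPoly d (fun s ↦ of K (i s)) fun s l ↦ mk (t s l)).eval (mk (.fix m d i t)) := by
  refine Subtype.ext (funext fun Y ↦ ?_)
  change _ = proj Y (_ + _)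
  rw [map_add, map_one, map_eval_fixPoly]
  exact HenselTerm.eval_fix Y d i t

theorem henselianRing (K : Ideal R) : HenselianRing (HenselTermRing R K) (K.map (of K)) := by
  refine HasFixedPoints.henselianRing fun G hG ↦ ?_
  obtain ⟨m, d, i, a, rfl⟩ := exists_eq_fixPoly_of_mem_map hG
  choose t ht using fun s l ↦ mk_surjective (a s l)
  refine ⟨mk (.fix m d i t), ?_⟩
  simpa only [ht] using mk_fix d i t

theorem eq_proj (Y : HenselTarget R K) {g : HenselTermRing R K →+* Y.C}
    (hg : g.comp (of K) = Y.f) : g = proj Y := by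
  have hof (r : R) : g (of K r) = Y.f r := RingHom.congr_fun hg r
  have hmk (t : HenselTerm R K) : g (mk t) = t.eval Y := by
    induction t with
    | of r => exact hof r
    | add a b iha ihb => rw [HenselTerm.eval, ← iha, ← ihb, ← map_add]; rfl
    | mul a b iha ihb => rw [HenselTerm.eval, ← iha, ← ihb, ← map_mul]; rfl
    | neg a iha => rw [HenselTerm.eval, ← iha, ← map_neg]; rfl
    | fix m d i t ih =>
      refine eq_of_eq_one_add_eval HenselianRing.jac (HenselTerm.fixPoly_eval_mem Y d i _) ?_
        (HenselTerm.eval_fix Y d i t)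
      simpa only [map_add, map_one, map_eval_fixPoly, hof, ih] using congrArg g (mk_fix d i t)
  ext a
  obtain ⟨t, rfl⟩ := mk_surjective a
  exact hmk t

end HenselTermRing

theorem exists_isHenselization (K : Ideal R) :
    ∃ (H : Type u) (_ : CommRing H) (ρ : R →+* H), IsHenselization K ρ := by
  let e : Shrink.{u} (HenselTermRing R K) ≃+* HenselTermRing R K := Shrink.ringEquiv _
  refine ⟨Shrink.{u} (HenselTermRing R K), inferInstance,
    (e.symm : HenselTermRing R K →+* _).comp (HenselTermRing.of K), ?_, fun C _ J _ f hf ↦ ?_⟩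
  · have := HenselTermRing.henselianRing K
    rw [← Ideal.map_map]
    exact henselianRing_map_of_surjective _ e.symm.surjective
  · let Y : HenselTarget R K := { C, J, f, map_le := hf }
    refine ⟨(HenselTermRing.proj Y).comp (e : _ →+* HenselTermRing R K), ?_, fun g hg ↦ ?_⟩
    · ext r
      exact congrArg (HenselTermRing.proj Y) (e.apply_symm_apply _)
    · rw [← HenselTermRing.eq_proj Y (g := g.comp (e.symm : HenselTermRing R K →+* _))
        (by rw [RingHom.comp_assoc]; exact hg)]
      ext x
      simp

end Henselization

section Comparison

variable {R H : Type u} [CommRing R] [CommRing H] {K : Ideal R} {ρ : R →+* H}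

namespace IsHenselization

theorem exists_comp_eq_mk (hρ : IsHenselization K ρ) (r : ℕ) :
    ∃ g : H →+* R ⧸ K ^ r, g.comp ρ = Ideal.Quotient.mk (K ^ r) := by
  have hnil : (K.map (Ideal.Quotient.mk (K ^ r))) ^ r = ⊥ := by
    rw [← Ideal.map_pow, Ideal.map_quotient_self]
  exact (hρ.2 _ _ (henselianRing_of_pow_eq_bot hnil) _ le_rfl).exists

theorem mem_pow_of_map_mem (hρ : IsHenselization K ρ) {r : ℕ} {z : R}
    (hz : ρ z ∈ (K ^ r).map ρ) : z ∈ K ^ r := by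
  obtain ⟨g, hg⟩ := hρ.exists_comp_eq_mk r
  have := Ideal.mem_map_of_mem g hz
  rwa [Ideal.map_map, hg, Ideal.map_quotient_self, Ideal.mem_bot, ← RingHom.comp_apply, hg,
    Ideal.Quotient.eq_zero_iff_mem] at this

-- Both `H → H / K ^ r H` and `H → R / K ^ r → H / K ^ r H` extend `R → H / K ^ r H`.
theorem exists_sub_mem_map_pow (hρ : IsHenselization K ρ) (r : ℕ) (h : H) :
    ∃ x, h - ρ x ∈ (K ^ r).map ρ := by
  obtain ⟨g, hg⟩ := hρ.exists_comp_eq_mk r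
  let m : H →+* H ⧸ (K ^ r).map ρ := Ideal.Quotient.mk _
  let φ : R ⧸ K ^ r →+* H ⧸ (K ^ r).map ρ := Ideal.quotientMap _ ρ Ideal.le_comap_map
  have := hρ.1
  have hm : m = φ.comp g := by
    have hens := henselianRing_map_of_surjective (J := K.map ρ) m Ideal.Quotient.mk_surjective
    refine (hρ.2 _ _ hens (m.comp ρ) (by rw [Ideal.map_map])).unique rfl ?_
    rw [RingHom.comp_assoc, hg]
    rfl
  obtain ⟨x, hx⟩ := Ideal.Quotient.mk_surjective (g h)
  refine ⟨x, Ideal.Quotient.eq.1 ?_⟩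
  change m h = φ (Ideal.Quotient.mk _ x)
  rw [hx, hm, RingHom.comp_apply]

end IsHenselization

end Comparison

section FiniteType

variable {P Q : Type*} [CommRing P] [CommRing Q] [Algebra P Q]

theorem exists_sub_algebraMap_mem {q : Ideal Q}
    (hsurj : Function.Surjective (algebraMap P (Q ⧸ q))) (x : Q) :
    ∃ p, x - algebraMap P Q p ∈ q := by
  obtain ⟨p, hp⟩ := hsurj (Ideal.Quotient.mk q x)
  exact ⟨p, Ideal.Quotient.eq.1 hp.symm⟩

theorem surjective_algebraMap_quotient {q : Ideal Q} (h : ∀ x, ∃ p, x - algebraMap P Q p ∈ q) :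
    Function.Surjective (algebraMap P (Q ⧸ q)) := by
  intro y
  obtain ⟨x, rfl⟩ := Ideal.Quotient.mk_surjective y
  obtain ⟨p, hp⟩ := h x
  exact ⟨p, (Ideal.Quotient.eq.2 hp).symm⟩

-- The ideal `D` generated by the differences `f x - g x` satisfies `D = I D`.
theorem algHom_eq_of_finiteType [Algebra.FiniteType P Q] {I : Ideal P}
    (hsurj : Function.Surjective (algebraMap P (Q ⧸ I.map (algebraMap P Q))))
    {C : Type*} [CommRing C] [Algebra P C] (hC : I.map (algebraMap P C) ≤ Ideal.jacobson ⊥)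
    (f g : Q →ₐ[P] C) : f = g := by
  obtain ⟨s, hs⟩ := Algebra.FiniteType.out (R := P) (A := Q)
  let D : Ideal C := Ideal.span ((fun x ↦ f x - g x) '' (s : Set Q))
  have hfg : (Ideal.Quotient.mkₐ P D).comp f = (Ideal.Quotient.mkₐ P D).comp g :=
    AlgHom.ext_of_adjoin_eq_top hs fun x hx ↦
      Ideal.Quotient.eq.2 (Ideal.subset_span ⟨x, hx, rfl⟩)
  have hD (x : Q) : f x - g x ∈ D := Ideal.Quotient.eq.1 (AlgHom.congr_fun hfg x)
  let δ : Q →ₗ[P] C := f.toLinearMap - g.toLinearMap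
  have hID : (I • ⊤ : Submodule P Q).map δ ≤ I • D.restrictScalars P := by
    rw [Submodule.map_smul'']
    exact smul_mono_right I (Submodule.map_le_iff_le_comap.2 fun x _ ↦ hD x)
  have hDle : D ≤ I.map (algebraMap P C) • D := by
    refine Ideal.span_le.2 ?_
    rintro _ ⟨x, -, rfl⟩
    obtain ⟨p, hp⟩ := exists_sub_algebraMap_mem hsurj x
    have hx : x - algebraMap P Q p ∈ (I • ⊤ : Submodule P Q) := by
      rwa [Ideal.smul_top_eq_map]
    have := hID (Submodule.mem_map_of_mem hx)
    rw [← Ideal.smul_restrictScalars] at this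
    have hδ : δ (x - algebraMap P Q p) = f x - g x := by simp [δ]
    rwa [hδ] at this
  have hDbot : D = ⊥ := Submodule.eq_bot_of_le_smul_of_le_jacobson_bot _ _
    (Submodule.fg_span (s.finite_toSet.image _)) hDle hC
  ext x
  exact sub_eq_zero.1 ((Submodule.mem_bot C).1 (hDbot ▸ hD x))

theorem exists_fg_le_sup_map_comap [Algebra.FiniteType P Q] {q : Ideal Q}
    (hsurj : Function.Surjective (algebraMap P (Q ⧸ q))) :
    ∃ q₀ : Ideal Q, q₀.FG ∧ q₀ ≤ q ∧
      q ≤ q₀ ⊔ (q.comap (algebraMap P Q)).map (algebraMap P Q) := by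
  obtain ⟨s, hs⟩ := Algebra.FiniteType.out (R := P) (A := Q)
  choose c hc using exists_sub_algebraMap_mem hsurj
  let q₀ : Ideal Q := Ideal.span ((fun x ↦ x - algebraMap P Q (c x)) '' (s : Set Q))
  have hq₀ : q₀ ≤ q := Ideal.span_le.2 (by rintro _ ⟨x, -, rfl⟩; exact hc x)
  have hadjoin : Algebra.adjoin P (s : Set Q) ≤
      (⊥ : Subalgebra P (Q ⧸ q₀)).comap (Ideal.Quotient.mkₐ P q₀) :=
    Algebra.adjoin_le fun x hx ↦ by
      have hcx : x - algebraMap P Q (c x) ∈ q₀ := Ideal.subset_span ⟨x, hx, rfl⟩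
      exact Algebra.mem_bot.2 ⟨c x, (Ideal.Quotient.eq.2 hcx).symm⟩
  refine ⟨q₀, Submodule.fg_span (s.finite_toSet.image _), hq₀, fun x hx ↦ ?_⟩
  obtain ⟨p, hp⟩ := Algebra.mem_bot.1 (hadjoin (hs ▸ Algebra.mem_top : x ∈ _))
  have hxp : x - algebraMap P Q p ∈ q₀ := Ideal.Quotient.eq.1 hp.symm
  have hpq : algebraMap P Q p ∈ q := by simpa using sub_mem hx (hq₀ hxp)
  simpa using add_mem (Ideal.mem_sup_left hxp)
    (Ideal.mem_sup_right (Ideal.mem_map_of_mem (algebraMap P Q) (Ideal.mem_comap.2 hpq)))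

theorem exists_sub_one_mem_forall_mul_mem {q q₀ N : Ideal Q} (hfg : q₀.FG) (hq₀ : q₀ ≤ q)
    (hq : q ≤ q₀ ⊔ N) (hsq : q ≤ q ^ 2 ⊔ N) : ∃ t, t - 1 ∈ q ∧ ∀ x ∈ q, t * x ∈ N := by
  have hle : q₀ ≤ N ⊔ q • q₀ := by
    refine hq₀.trans (hsq.trans (sup_le ?_ le_sup_left))
    calc q ^ 2 ≤ q * (q₀ ⊔ N) := by rw [pow_two]; exact Ideal.mul_mono_right hq
      _ = q * q₀ ⊔ q * N := Ideal.mul_sup _ _ _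
      _ ≤ N ⊔ q • q₀ := sup_le le_sup_right (Ideal.mul_le_right.trans le_sup_left)
  obtain ⟨t, ht, h⟩ := Submodule.exists_sub_one_mem_and_smul_le_of_fg_of_le_sup hfg le_rfl hle
  refine ⟨t, ht, fun x hx ↦ ?_⟩
  obtain ⟨y, hy, z, hz, rfl⟩ := Submodule.mem_sup.1 (hq hx)
  rw [mul_add]
  exact add_mem (h (Submodule.smul_mem_pointwise_smul y t q₀ hy)) (Ideal.mul_mem_left _ _ hz)

end FiniteType

section FormallyUnramified

variable {P Q : Type*} [CommRing P] [CommRing Q] [Algebra P Q]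

-- `S → S / n → S` and the identity of `S` agree modulo `n`.
theorem eq_bot_of_formallyUnramified [Algebra.FormallyUnramified P Q] {n : Ideal Q}
    (hn : IsNilpotent n) (hsurj : Function.Surjective (algebraMap P (Q ⧸ n)))
    (hker : (n.comap (algebraMap P Q)).map (algebraMap P Q) = ⊥) : n = ⊥ := by
  let c : P →ₐ[P] Q ⧸ n := Algebra.ofId P _
  let s : Q ⧸ n →ₐ[P] Q := c.liftOfSurjective hsurj (Algebra.ofId P Q) fun p hp ↦ by
    have : algebraMap P Q p ∈ n := Ideal.Quotient.eq_zero_iff_mem.1 hp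
    replace this : p ∈ n.comap (algebraMap P Q) := this
    simpa [hker] using Ideal.mem_map_of_mem (algebraMap P Q) this
  have hs : AlgHom.id P Q = s.comp (Ideal.Quotient.mkₐ P n) := by
    refine Algebra.FormallyUnramified.ext n hn fun x ↦ ?_
    obtain ⟨p, hp⟩ := hsurj (Ideal.Quotient.mk n x)
    change Ideal.Quotient.mk n x = Ideal.Quotient.mk n (s (Ideal.Quotient.mk n x))
    rw [← hp, s.commutes]
    rfl
  refine (Submodule.eq_bot_iff n).2 fun x hx ↦ ?_
  calc x = s (Ideal.Quotient.mk n x) := AlgHom.congr_fun hs x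
    _ = 0 := by rw [Ideal.Quotient.eq_zero_iff_mem.2 hx, map_zero]

theorem le_sq_sup_map_comap_of_formallyUnramified {q : Ideal Q} {Δ : Q}
    (hΔ : IsUnit (Ideal.Quotient.mk q Δ)) (Q' : Type*) [CommRing Q'] [Algebra P Q'] [Algebra Q Q']
    [IsScalarTower P Q Q'] [IsLocalization.Away Δ Q'] [Algebra.FormallyUnramified P Q']
    (hsurj : Function.Surjective (algebraMap P (Q ⧸ q))) :
    q ≤ q ^ 2 ⊔ (q.comap (algebraMap P Q)).map (algebraMap P Q) := by
  set m := q ^ 2 ⊔ (q.comap (algebraMap P Q)).map (algebraMap P Q)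
  let n : Ideal (Q ⧸ m) := q.map (Ideal.Quotient.mk m)
  have hmq : m ≤ q := sup_le (Ideal.pow_le_self two_ne_zero) Ideal.map_comap_le
  have hn : IsNilpotent n := ⟨2, by
    rw [← Ideal.map_pow, Ideal.zero_eq_bot, Ideal.map_eq_bot_iff_le_ker, Ideal.mk_ker]
    exact le_sup_left⟩
  have hunit : IsUnit (Ideal.Quotient.mk m Δ) :=
    (IsNilpotent.isUnit_quotient_mk_iff hn).1
      (hΔ.map (Ideal.quotientMap n (Ideal.Quotient.mk m) Ideal.le_comap_map))
  let F : Q' →ₐ[P] Q ⧸ m := IsLocalization.liftAlgHom (M := Submonoid.powers Δ)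
    (f := Ideal.Quotient.mkₐ P m) (by rintro ⟨_, k, rfl⟩; simpa using hunit.pow k)
  have hF (x : Q) : F (algebraMap Q Q' x) = Ideal.Quotient.mk m x := by simp [F]
  have := Algebra.FormallyUnramified.of_surjective F fun y ↦ by
    obtain ⟨x, rfl⟩ := Ideal.Quotient.mk_surjective y
    exact ⟨_, hF x⟩
  have hnbot : n = ⊥ := by
    refine eq_bot_of_formallyUnramified (P := P) hn (surjective_algebraMap_quotient fun y ↦ ?_) ?_
    · obtain ⟨x, rfl⟩ := Ideal.Quotient.mk_surjective y
      obtain ⟨p, hp⟩ := exists_sub_algebraMap_mem hsurj x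
      exact ⟨p, by simpa using Ideal.mem_map_of_mem (Ideal.Quotient.mk m) hp⟩
    · have hcomap : n.comap (algebraMap P (Q ⧸ m)) = q.comap (algebraMap P Q) := by
        rw [IsScalarTower.algebraMap_eq P Q, ← Ideal.comap_comap, Ideal.Quotient.algebraMap_eq,
          Ideal.comap_map_quotientMk, sup_eq_right.2 hmq]
      rw [hcomap, IsScalarTower.algebraMap_eq P Q, ← Ideal.map_map, Ideal.Quotient.algebraMap_eq,
        Ideal.map_eq_bot_iff_le_ker, Ideal.mk_ker]
      exact le_sup_right
  rwa [Ideal.map_eq_bot_iff_le_ker, Ideal.mk_ker] at hnbot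

end FormallyUnramified

section FiniteAlgebra

variable {B F : Type*} [CommRing B] [CommRing F] [Algebra B F] {I : Ideal B}

theorem exists_monic_aeval_eq_zero_of_forall_sub_smul_mem {M ι : Type*} [AddCommGroup M]
    [Module B M] [Fintype ι] {x : ι → M} (hx : Submodule.span B (Set.range x) = ⊤)
    (f : Module.End B M) {d : ι → B} (hd : ∀ i, f (x i) - d i • x i ∈ (I • ⊤ : Submodule B M)) :
    ∃ G : B[X], G.Monic ∧ aeval f G = 0 ∧
      G.map (Ideal.Quotient.mk I) = ∏ i, (X - C (Ideal.Quotient.mk I (d i))) := by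
  classical
  have hI (i : ι) : ∃ a : ι → B, (∀ j, a j ∈ I) ∧ ∑ j, a j • x j = f (x i) - d i • x i := by
    have := hd i
    rw [← hx, Submodule.mem_ideal_smul_span_iff_exists_sum] at this
    obtain ⟨a, ha, h⟩ := this
    exact ⟨a, ha, by rw [← h, Finsupp.sum_fintype _ _ (by simp)]⟩
  choose a ha hax using hI
  let β : Matrix ι ι B := Matrix.diagonal d + (Matrix.of a).transpose
  have hβ : β.Represents x f := by
    refine Matrix.represents_iff'.2 fun j ↦ ?_
    simp [β, add_smul, Finset.sum_add_distrib, hax, Matrix.diagonal_apply, ite_smul]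
  have hβI : β.map (Ideal.Quotient.mk I) = Matrix.diagonal fun i ↦ Ideal.Quotient.mk I (d i) := by
    ext i j
    simp [β, Matrix.diagonal_apply, apply_ite (Ideal.Quotient.mk I),
      Ideal.Quotient.eq_zero_iff_mem.2 (ha j i)]
  refine ⟨β.charpoly, β.charpoly_monic, ?_, ?_⟩
  · let β' : Matrix.isRepresentation B x := ⟨β, f, hβ⟩
    have hzero : aeval β' β.charpoly = 0 := Subtype.ext <|
      (aeval_algHom_apply (Matrix.isRepresentation B x).val β' _).symm.trans β.aeval_self_charpoly
    rw [← Matrix.isRepresentation.eq_toEnd_of_represents B x hx β' hβ, aeval_algHom_apply, hzero,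
      map_zero]
  · rw [← Matrix.charpoly_map, hβI, Matrix.charpoly_diagonal]

-- Modulo `I`, multiplication by `b` is the projection onto the line spanned by `b`.
theorem exists_monic_map_eq_X_sub_one_mul_X_pow [Module.Finite B F] (hI : I ≤ Ideal.jacobson ⊥)
    {b : F} (hb : ∀ x : F, ∃ c : B, b * x - algebraMap B F c * b ∈ I.map (algebraMap B F))
    (hbb : b * b - b ∈ I.map (algebraMap B F)) :
    ∃ (G : B[X]) (m : ℕ), G.Monic ∧ aeval b G = 0 ∧
      G.map (Ideal.Quotient.mk I) = (X - 1) * X ^ m := by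
  have hIF {z : F} (hz : z ∈ I.map (algebraMap B F)) : z ∈ (I • ⊤ : Submodule B F) := by
    rwa [Ideal.smul_top_eq_map]
  obtain ⟨s, hs⟩ := Module.Finite.fg_top (R := B) (M := F)
  let x : Option s → F := fun o ↦ o.elim b fun y ↦ (1 - b) * y
  have hx : Submodule.span B (Set.range x) = ⊤ := by
    refine top_le_iff.1 (Submodule.le_of_le_smul_of_le_jacobson_bot Module.Finite.fg_top hI ?_)
    have hcompl : (⊤ : Submodule B F).map (LinearMap.mulLeft B (1 - b)) ≤
        Submodule.span B (Set.range x) := by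
      rw [← hs, Submodule.map_span_le]
      exact fun y hy ↦ Submodule.subset_span ⟨some ⟨y, hy⟩, rfl⟩
    rintro z -
    obtain ⟨c, hc⟩ := hb z
    rw [show z = (c • b + (1 - b) * z) + (b * z - algebraMap B F c * b) by
      rw [Algebra.smul_def]; ring]
    exact add_mem (Submodule.mem_sup_left (add_mem
      (Submodule.smul_mem _ _ (Submodule.subset_span ⟨none, rfl⟩))
      (hcompl (Submodule.mem_map_of_mem Submodule.mem_top))))
      (Submodule.mem_sup_right (hIF hc))
  obtain ⟨G, hG, hGb, hGI⟩ := exists_monic_aeval_eq_zero_of_forall_sub_smul_mem (I := I) hx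
    (LinearMap.mulLeft B b) (d := fun o ↦ o.elim 1 fun _ ↦ 0) (by
      rintro (_ | y)
      · simpa [x] using hIF hbb
      · refine hIF ?_
        have : b * ((1 - b) * y) = -y * (b * b - b) := by ring
        simpa [x, this] using Ideal.mul_mem_left _ _ hbb)
  refine ⟨G, s.card, hG, ?_, ?_⟩
  · have hlmul : Algebra.lmul B F (aeval b G) = 0 := by
      rw [← aeval_algHom_apply]
      exact hGb
    simpa using LinearMap.congr_fun hlmul 1
  · rw [hGI, Fintype.prod_option]
    simp

theorem exists_isRoot_isUnit_derivative [HenselianRing B I] {G : B[X]} (hG : G.Monic) {m : ℕ}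
    (hGI : G.map (Ideal.Quotient.mk I) = (X - 1) * X ^ m) :
    ∃ a, G.IsRoot a ∧ a - 1 ∈ I ∧ IsUnit (G.derivative.eval a) := by
  have hder {a : B} (ha : a - 1 ∈ I) : IsUnit (Ideal.Quotient.mk I (G.derivative.eval a)) := by
    have ha' : Ideal.Quotient.mk I a = 1 := Ideal.Quotient.eq.2 ha
    rw [← eval_map_apply, ← derivative_map, hGI, ha']
    simp
  obtain ⟨a, ha, ha1⟩ := HenselianRing.is_henselian (I := I) G hG 1
    (by rw [← Ideal.Quotient.eq_zero_iff_mem, ← eval_map_apply, hGI]; simp) (hder (by simp))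
  exact ⟨a, ha, ha1, isUnit_of_mk_of_le_jacobson HenselianRing.jac (hder ha1)⟩

-- With `G = (X - a) q`, take `r = q / q(a)`.
theorem exists_isIdempotentElem_aeval {b : F} {G : B[X]} (hGb : aeval b G = 0) {a : B}
    (ha : G.IsRoot a) (hunit : IsUnit (G.derivative.eval a)) :
    ∃ r : B[X], r.eval a = 1 ∧ IsIdempotentElem (aeval b r) ∧ b * aeval b r = a • aeval b r := by
  obtain ⟨q, rfl⟩ := dvd_iff_isRoot.2 ha
  obtain ⟨w, hw⟩ := IsUnit.exists_left_inv (a := q.eval a) (by simpa using hunit)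
  have hmul (s : B[X]) : aeval b s * aeval b (C w * q) = s.eval a • aeval b (C w * q) := by
    obtain ⟨t, ht⟩ : X - C a ∣ s - C (s.eval a) := dvd_iff_isRoot.2 (by simp)
    have : aeval b (s * (C w * q) - C (s.eval a) * (C w * q)) = 0 := by
      rw [show s * (C w * q) - C (s.eval a) * (C w * q) = C w * t * ((X - C a) * q) by
        linear_combination C w * q * ht, map_mul, hGb, mul_zero]
    rwa [map_sub, map_mul, map_mul _ (C (s.eval a)), aeval_C, ← Algebra.smul_def,
      sub_eq_zero] at this
  have heval : (C w * q).eval a = 1 := by simpa using hw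
  exact ⟨C w * q, heval, by rw [IsIdempotentElem, hmul, heval, one_smul], by
    simpa using hmul X⟩

theorem mul_mem_span_singleton_of_mul_eq_smul [Module.Finite B F] (hI : I ≤ Ideal.jacobson ⊥)
    {b e : F} {a : B} (ha : IsUnit a) (hbe : b * e = a • e)
    (hb : ∀ x : F, ∃ c : B, b * x - algebraMap B F c * b ∈ I.map (algebraMap B F)) (x : F) :
    e * x ∈ Submodule.span B {e} := by
  suffices h : LinearMap.range (LinearMap.mulLeft B e) ≤ Submodule.span B {e} from h ⟨x, rfl⟩
  refine Submodule.le_of_le_smul_of_le_jacobson_bot ?_ hI ?_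
  · rw [← Submodule.map_top]
    exact Module.Finite.fg_top.map _
  rintro _ ⟨x, rfl⟩
  obtain ⟨v, hv⟩ := ha.exists_left_inv
  obtain ⟨c, hc⟩ := hb x
  have hdecomp : LinearMap.mulLeft B e x =
      c • e + v • LinearMap.mulLeft B e (b * x - algebraMap B F c * b) := by
    have hv' : algebraMap B F v * algebraMap B F a = 1 := by rw [← map_mul, hv, map_one]
    simp only [LinearMap.mulLeft_apply, Algebra.smul_def] at hbe ⊢
    linear_combination (algebraMap B F v * algebraMap B F c - algebraMap B F v * x) * hbe +
      (algebraMap B F c * e - e * x) * hv'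
  have hmem : LinearMap.mulLeft B e (b * x - algebraMap B F c * b) ∈
      I • LinearMap.range (LinearMap.mulLeft B e) := by
    rw [← Submodule.map_top, ← Submodule.map_smul'']
    exact Submodule.mem_map_of_mem (by rwa [Ideal.smul_top_eq_map])
  rw [hdecomp]
  exact add_mem
    (Submodule.mem_sup_left (Submodule.smul_mem _ _ (Submodule.mem_span_singleton_self e)))
    (Submodule.mem_sup_right (Submodule.smul_mem _ _ hmem))

theorem exists_isIdempotentElem_mul_mem_span [Module.Finite B F] [HenselianRing B I]
    (φ : F →ₐ[B] B ⧸ I) {b : F} (hb1 : φ b = 1)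
    (hb : ∀ x : F, φ x = 0 → b * x ∈ I.map (algebraMap B F)) :
    ∃ e : F, IsIdempotentElem e ∧ φ e = 1 ∧ ∀ x, e * x ∈ Submodule.span B {e} := by
  have hI : I ≤ Ideal.jacobson ⊥ := HenselianRing.jac
  have hline (x : F) : ∃ c : B, b * x - algebraMap B F c * b ∈ I.map (algebraMap B F) := by
    obtain ⟨c, hc⟩ := Ideal.Quotient.mk_surjective (φ x)
    refine ⟨c, ?_⟩
    rw [mul_comm _ b, ← mul_sub]
    exact hb _ (by rw [map_sub, φ.commutes, Ideal.Quotient.algebraMap_eq, hc, sub_self])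
  have hbb : b * b - b ∈ I.map (algebraMap B F) := by
    simpa only [mul_sub, mul_one] using hb (b - 1) (by rw [map_sub, hb1, map_one, sub_self])
  obtain ⟨G, m, hG, hGb, hGI⟩ := exists_monic_map_eq_X_sub_one_mul_X_pow hI hline hbb
  obtain ⟨a, hroot, ha, hunit⟩ := exists_isRoot_isUnit_derivative hG hGI
  obtain ⟨r, hr, hidem, hbr⟩ := exists_isIdempotentElem_aeval hGb hroot hunit
  refine ⟨aeval b r, hidem, ?_, mul_mem_span_singleton_of_mul_eq_smul hI
    (Ideal.isUnit_of_sub_one_mem_jacobson_bot _ (hI ha)) hbr hline⟩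
  have ha' : φ b = algebraMap B (B ⧸ I) a := hb1.trans (Ideal.Quotient.eq.2 ha).symm
  rw [← aeval_algHom_apply, ha', aeval_algebraMap_apply, coe_aeval_eq_eval, hr, map_one]

end FiniteAlgebra

section LiftEtale

variable {B F F' : Type*} [CommRing B] [CommRing F] [CommRing F'] [Algebra B F] [Algebra B F']
  [Algebra F F'] [IsScalarTower B F F']

theorem formallySmooth_of_isLocalizationAway_of_isUnit (T : Type*) [CommRing T] [Algebra B T]
    [Algebra F T] [IsScalarTower B F T] (Δ e : F) [IsLocalization.Away Δ F']
    [IsLocalization.Away e T] (hΔ : IsUnit (algebraMap F T Δ)) [Algebra.FormallySmooth B F'] :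
    Algebra.FormallySmooth B T := by
  let f : F' →ₐ[F] T := IsLocalization.Away.liftAlgHom (f := Algebra.ofId F T) Δ hΔ
  let : Algebra F' T := f.toAlgebra
  have : IsScalarTower F F' T := .of_algebraMap_eq fun x ↦ (f.commutes x).symm
  have : IsScalarTower B F' T := .of_algebraMap_eq fun x ↦ by
    rw [IsScalarTower.algebraMap_apply B F T, IsScalarTower.algebraMap_apply F F' T,
      IsScalarTower.algebraMap_apply B F F']
  have : IsLocalization.Away (algebraMap F T Δ) T :=
    IsLocalization.away_of_isUnit_of_bijective T hΔ Function.bijective_id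
  have : IsLocalization.Away (algebraMap F F' e) T := IsLocalization.Away.commutes F' T T Δ e
  have := Algebra.FormallySmooth.of_isLocalization (R := F') (Rₘ := T)
    (Submonoid.powers (algebraMap F F' e))
  exact Algebra.FormallySmooth.comp B F' T

theorem bijective_algebraMap_of_formallySmooth {T : Type*} [CommRing T] [Algebra B T]
    [Algebra.FormallySmooth B T] [Algebra.FinitePresentation B T]
    (hsurj : Function.Surjective (algebraMap B T))
    (hker : RingHom.ker (algebraMap B T) ≤ Ideal.jacobson ⊥) :
    Function.Bijective (algebraMap B T) := by
  refine ⟨(RingHom.injective_iff_ker_eq_bot _).2 ?_, hsurj⟩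
  have hidem := (Algebra.FormallySmooth.iff_of_surjective hsurj).1 ‹_›
  exact Submodule.eq_bot_of_le_smul_of_le_jacobson_bot _ _
    (Algebra.FinitePresentation.ker_fG_of_surjective (Algebra.ofId B T) hsurj) hidem.ge hker

variable {I : Ideal B} [HenselianRing B I]

theorem exists_isIdempotentElem_of_formallyUnramified [Module.Finite B F]
    [Algebra.FormallyUnramified B F'] (Δ : F) [IsLocalization.Away Δ F'] (φ : F →ₐ[B] B ⧸ I)
    (hΔ : IsUnit (φ Δ)) :
    ∃ e : F, IsIdempotentElem e ∧ φ e = 1 ∧ ∀ x, e * x ∈ Submodule.span B {e} := by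
  set q : Ideal F := RingHom.ker φ
  have hφ : Function.Surjective φ := fun y ↦ by
    obtain ⟨c, rfl⟩ := Ideal.Quotient.mk_surjective y
    exact ⟨algebraMap B F c, φ.commutes c⟩
  let ε : (F ⧸ q) ≃ₐ[B] B ⧸ I := Ideal.quotientKerAlgEquivOfSurjective hφ
  have hε (x : F) : ε (Ideal.Quotient.mk q x) = φ x := rfl
  have hsurj : Function.Surjective (algebraMap B (F ⧸ q)) := fun y ↦ by
    obtain ⟨c, hc⟩ := Ideal.Quotient.mk_surjective (ε y)
    exact ⟨c, ε.injective ((ε.commutes c).trans hc)⟩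
  have hcomap : q.comap (algebraMap B F) = I := by
    rw [← Ideal.mk_ker (I := I), ← Ideal.Quotient.algebraMap_eq, ← φ.comp_algebraMap]
    exact RingHom.comap_ker _ _
  have hqΔ : IsUnit (Ideal.Quotient.mk q Δ) := by
    rwa [← MulEquiv.isUnit_map ε, hε]
  obtain ⟨q₀, hfg, hq₀, hq⟩ := exists_fg_le_sup_map_comap hsurj
  have hsq := le_sq_sup_map_comap_of_formallyUnramified hqΔ F' hsurj
  rw [hcomap] at hq hsq
  obtain ⟨b, hb1, hb⟩ := exists_sub_one_mem_forall_mul_mem hfg hq₀ hq hsq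
  refine exists_isIdempotentElem_mul_mem_span φ ?_ hb
  rwa [RingHom.mem_ker, map_sub, map_one, sub_eq_zero] at hb1

theorem exists_algHom_lift_of_surjective {T : Type*} [CommRing T] [Algebra B T] [Algebra F T]
    [IsScalarTower B F T] [Algebra.FinitePresentation B T] [Algebra.FormallySmooth B F'] (Δ e : F)
    [IsLocalization.Away Δ F'] [IsLocalization.Away e T]
    (hsurj : Function.Surjective (algebraMap B T)) (φ : F' →ₐ[B] B ⧸ I) (θ : T →ₐ[B] B ⧸ I)
    (hθ : ∀ x : F, θ (algebraMap F T x) = φ (algebraMap F F' x)) :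
    ∃ l : F' →ₐ[B] B, (Ideal.Quotient.mkₐ B I).comp l = φ := by
  have hI : I ≤ Ideal.jacobson ⊥ := HenselianRing.jac
  have hΔ : IsUnit (algebraMap F T Δ) := by
    obtain ⟨δ, hδ⟩ := hsurj (algebraMap F T Δ)
    have hmk : Ideal.Quotient.mk I δ = φ (algebraMap F F' Δ) := by
      rw [← hθ, ← hδ]
      exact (θ.commutes δ).symm
    have hunit : IsUnit (Ideal.Quotient.mk I δ) :=
      hmk ▸ (IsLocalization.Away.algebraMap_isUnit Δ).map φ
    exact hδ ▸ (isUnit_of_mk_of_le_jacobson hI hunit).map (algebraMap B T)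
  have := formallySmooth_of_isLocalizationAway_of_isUnit (B := B) (F' := F') T Δ e hΔ
  have hker : RingHom.ker (algebraMap B T) ≤ I := fun c hc ↦ by
    rw [← Ideal.Quotient.eq_zero_iff_mem, ← Ideal.Quotient.algebraMap_eq, ← θ.commutes,
      RingHom.mem_ker.1 hc, map_zero]
  let ε := AlgEquiv.ofBijective (Algebra.ofId B T)
    (bijective_algebraMap_of_formallySmooth hsurj (hker.trans hI))
  let π : F' →ₐ[B] T := IsLocalization.Away.liftAlgHom (f := IsScalarTower.toAlgHom B F T) Δ hΔ
  have hmk (y : T) : Ideal.Quotient.mk I (ε.symm y) = θ y := by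
    obtain ⟨c, rfl⟩ := hsurj y
    rw [θ.commutes, AlgEquiv.commutes]
    rfl
  refine ⟨(ε.symm : T →ₐ[B] B).comp π,
    IsLocalization.algHom_ext (Submonoid.powers Δ) (AlgHom.ext fun x ↦ ?_)⟩
  refine (hmk _).trans ((congrArg θ ?_).trans (hθ x))
  exact IsLocalization.Away.lift_eq Δ hΔ x

theorem exists_algHom_lift_of_isLocalizationAway_finite [Module.Finite B F]
    [Algebra.FinitePresentation B F] [Algebra.FormallyEtale B F'] (Δ : F)
    [IsLocalization.Away Δ F'] (φ : F' →ₐ[B] B ⧸ I) :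
    ∃ l : F' →ₐ[B] B, (Ideal.Quotient.mkₐ B I).comp l = φ := by
  let ψ : F →ₐ[B] B ⧸ I := φ.comp (IsScalarTower.toAlgHom B F F')
  have hψΔ : IsUnit (ψ Δ) := (IsLocalization.Away.algebraMap_isUnit Δ).map φ
  obtain ⟨e, he, hψe, hline⟩ := exists_isIdempotentElem_of_formallyUnramified (F' := F') Δ ψ hψΔ
  let D : Ideal F := Ideal.span {1 - e}
  have hψD (x : F) (hx : x ∈ D) : ψ x = 0 := by
    obtain ⟨z, rfl⟩ := Ideal.mem_span_singleton'.1 hx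
    rw [map_mul, map_sub, map_one, hψe, sub_self, mul_zero]
  have hsurj : Function.Surjective (algebraMap B (F ⧸ D)) :=
    surjective_algebraMap_quotient fun x ↦ by
      obtain ⟨c, hc⟩ := Submodule.mem_span_singleton.1 (hline x)
      rw [Algebra.smul_def] at hc
      exact ⟨c, Ideal.mem_span_singleton'.2 ⟨x - algebraMap B F c, by linear_combination hc⟩⟩
  have := IsLocalization.Away.quotient_of_isIdempotentElem he
  have : Algebra.FinitePresentation B (F ⧸ D) := .quotient (Submodule.fg_span_singleton _)
  exact exists_algHom_lift_of_surjective Δ e hsurj φ (Ideal.Quotient.liftₐ D ψ hψD) fun x ↦ rfl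

end LiftEtale

section MatrixPolynomial

variable {P R ι : Type*} [CommRing P] [CommRing R] [Fintype ι] [DecidableEq ι] (c : P →+* R)
  (M : Matrix ι ι P)

theorem mapMatrix_aeval (r : P[X]) :
    c.mapMatrix (aeval M r) = aeval (c.mapMatrix M) (r.map c) := by
  refine map_aeval_eq_aeval_map (φ := c) (ψ := c.mapMatrix) (RingHom.ext fun x ↦ ?_) r M
  simp only [RingHom.comp_apply, Matrix.algebraMap_eq_diagonal, RingHom.mapMatrix_apply]
  rw [Matrix.diagonal_map (map_zero c)]
  rfl

theorem exists_monic_aeval_eq_zero_of_isIdempotentElem_mapMatrix [Nontrivial (Matrix ι ι P)]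
    (hM : IsIdempotentElem (c.mapMatrix M)) :
    ∃ n ≠ 0, ∃ g : MonicDegreeEq P (n + n),
      aeval M g.1 = 0 ∧ g.1.map c = X ^ n * (X - 1) ^ n := by
  have hcard : Fintype.card ι ≠ 0 := fun h ↦
    have := Fintype.card_eq_zero_iff.1 h
    not_subsingleton (Matrix ι ι P) inferInstance
  have : Nontrivial P := not_subsingleton_iff_nontrivial.1 fun _ ↦
    not_subsingleton (Matrix ι ι P) inferInstance
  have hdeg : (X * X - X : P[X]).natDegree = 2 := by compute_degree!
  have hmonic : (X * X - X : P[X]).Monic := by monicity!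
  let χ := (M * M - M).charpoly
  have hχ : χ.Monic := Matrix.charpoly_monic _
  refine ⟨Fintype.card ι, hcard, .mk (χ.comp (X * X - X))
    (hχ.comp hmonic (by rw [hdeg]; exact two_ne_zero)) ?_, ?_, ?_⟩
  · rw [natDegree_comp_eq_of_mul_ne_zero, hdeg, Matrix.charpoly_natDegree_eq_dim, mul_two]
    rw [hχ.leadingCoeff, hmonic.leadingCoeff, one_pow, mul_one]
    exact one_ne_zero
  · rw [MonicDegreeEq.mk_coe, aeval_comp, map_sub, map_mul, aeval_X]
    exact Matrix.aeval_self_charpoly _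
  · rw [MonicDegreeEq.mk_coe, map_comp, ← Matrix.charpoly_map, ← RingHom.mapMatrix_apply, map_sub,
      map_mul, hM.eq, sub_self, Matrix.charpoly_zero, pow_comp, X_comp, ← mul_pow,
      Polynomial.map_sub, Polynomial.map_mul, map_X, mul_sub, mul_one]

end MatrixPolynomial

section LiftIdempotent

variable {P : Type u} {B : Type*} [CommRing P] [CommRing B] [Algebra P B] (I : Ideal B)
  [HenselianRing B I]

open UniversalCoprimeFactorizationRing in
theorem exists_etale_coprime_factorization {m k : ℕ} (g : MonicDegreeEq P (m + k))
    (q₁ : MonicDegreeEq (B ⧸ I) m) (q₂ : MonicDegreeEq (B ⧸ I) k)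
    (hq : q₁.1 * q₂.1 = g.1.map ((Ideal.Quotient.mk I).comp (algebraMap P B)))
    (hcop : IsCoprime q₁.1 q₂.1) :
    ∃ (P' : Type u) (_ : CommRing P') (_ : Algebra P P') (_ : Algebra.Etale P P') (l : P' →ₐ[P] B)
      (f₁ f₂ : P'[X]), f₁ * f₂ = g.1.map (algebraMap P P') ∧ IsCoprime f₁ f₂ ∧
        f₁.map ((Ideal.Quotient.mk I).comp l) = q₁.1 ∧
        f₂.map ((Ideal.Quotient.mk I).comp l) = q₂.1 := by
  let G := g.map (algebraMap P B)
  have hG : q₁.1 * q₂.1 = G.1.map (algebraMap B (B ⧸ I)) := by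
    rw [MonicDegreeEq.map_coe, map_map]
    exact hq
  obtain ⟨s, hs⟩ := exists_algHom_lift_of_isLocalizationAway_finite (I := I)
    (UniversalFactorizationRing.presentation m k rfl G).jacobian
    ((homEquiv (B ⧸ I) m k rfl G).symm ⟨(q₁, q₂), hG, hcop⟩)
  let F := homEquiv B m k rfl G s
  let l : UniversalCoprimeFactorizationRing m k rfl g →ₐ[P] B :=
    (homEquiv B m k rfl g).symm ⟨F.1, F.2.1.trans map_id, F.2.2⟩
  let f := homEquiv _ m k rfl g (AlgHom.id P _)
  have hfl : F.1.1 = f.1.1.map l ∧ F.1.2 = f.1.2.map l := by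
    have h₁ := homEquiv_comp_fst _ m k rfl g (AlgHom.id P _) l
    have h₂ := homEquiv_comp_snd _ m k rfl g (AlgHom.id P _) l
    rw [AlgHom.comp_id, Equiv.apply_symm_apply] at h₁ h₂
    exact ⟨h₁, h₂⟩
  have hFq : q₁ = F.1.1.map (Ideal.Quotient.mk I) ∧ q₂ = F.1.2.map (Ideal.Quotient.mk I) := by
    have h₁ := homEquiv_comp_fst B m k rfl G s (Ideal.Quotient.mkₐ B I)
    have h₂ := homEquiv_comp_snd B m k rfl G s (Ideal.Quotient.mkₐ B I)
    rw [hs, Equiv.apply_symm_apply] at h₁ h₂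
    exact ⟨h₁, h₂⟩
  refine ⟨_, _, _, inferInstance, l, f.1.1.1, f.1.2.1, f.2.1, f.2.2, ?_, ?_⟩
  · rw [hFq.1, hfl.1, MonicDegreeEq.map_coe, MonicDegreeEq.map_coe, map_map]
  · rw [hFq.2, hfl.2, MonicDegreeEq.map_coe, MonicDegreeEq.map_coe, map_map]

theorem exists_etale_dvd_mul_self_sub_self {n : ℕ} (hn : n ≠ 0) (g : MonicDegreeEq P (n + n))
    (hg : g.1.map ((Ideal.Quotient.mk I).comp (algebraMap P B)) = X ^ n * (X - 1) ^ n) :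
    ∃ (P' : Type u) (_ : CommRing P') (_ : Algebra P P') (_ : Algebra.Etale P P') (l : P' →ₐ[P] B)
      (r : P'[X]), g.1.map (algebraMap P P') ∣ r * r - r ∧
        X * X - X ∣ r.map ((Ideal.Quotient.mk I).comp l) - X := by
  let q₁ : MonicDegreeEq ℤ n := .mk (X ^ n) (monic_X_pow n) (natDegree_X_pow n)
  let q₂ : MonicDegreeEq ℤ n := .mk ((X - C 1) ^ n) ((monic_X_sub_C 1).pow n)
    (by rw [natDegree_pow, natDegree_X_sub_C, mul_one])
  let ι := Int.castRingHom (B ⧸ I)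
  have hq₁ : (q₁.map ι).1 = X ^ n := by
    simp only [q₁, MonicDegreeEq.map_coe, MonicDegreeEq.mk_coe, Polynomial.map_pow, map_X]
  have hq₂ : (q₂.map ι).1 = (X - 1) ^ n := by
    simp only [q₂, MonicDegreeEq.map_coe, MonicDegreeEq.mk_coe, Polynomial.map_pow,
      Polynomial.map_sub, map_X, Polynomial.map_one, map_one]
  have hcop : IsCoprime (X : (B ⧸ I)[X]) (X - 1) := ⟨1, -1, by ring⟩
  obtain ⟨P', _, _, _, l, f₁, f₂, hf, ⟨u, v, huv⟩, hf₁, hf₂⟩ :=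
    exists_etale_coprime_factorization I g (q₁.map ι) (q₂.map ι) (by rw [hq₁, hq₂, hg])
      (by rw [hq₁, hq₂]; exact hcop.pow)
  rw [hq₁] at hf₁
  rw [hq₂] at hf₂
  refine ⟨P', _, _, ‹_›, l, u * f₁, ⟨-(u * v), ?_⟩, ?_⟩
  · linear_combination -u * v * hf + u * f₁ * huv
  have huv' := congrArg (Polynomial.map ((Ideal.Quotient.mk I).comp (l : P' →+* B))) huv
  rw [Polynomial.map_add, Polynomial.map_mul, Polynomial.map_mul, Polynomial.map_one, hf₁, hf₂]
    at huv'
  rw [Polynomial.map_mul, hf₁, show X * X - X = X * (X - 1 : (B ⧸ I)[X]) by ring]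
  refine hcop.mul_dvd (dvd_sub ?_ dvd_rfl) ?_
  · exact (dvd_pow_self X hn).mul_left _
  · obtain ⟨w, hw⟩ := (dvd_pow_self (X - 1 : (B ⧸ I)[X]) hn).mul_left
      (v.map ((Ideal.Quotient.mk I).comp (l : P' →+* B)))
    exact ⟨-1 - w, by linear_combination huv' - hw⟩

theorem exists_etale_isIdempotentElem_matrix {ι : Type*} [Fintype ι] [DecidableEq ι]
    (M : Matrix ι ι P)
    (hM : IsIdempotentElem (((Ideal.Quotient.mk I).comp (algebraMap P B)).mapMatrix M)) :
    ∃ (P' : Type u) (_ : CommRing P') (_ : Algebra P P') (_ : Algebra.Etale P P')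
      (l : P' →ₐ[P] B) (E : Matrix ι ι P'), IsIdempotentElem E ∧
        ((Ideal.Quotient.mk I).comp l).mapMatrix E =
          ((Ideal.Quotient.mk I).comp (algebraMap P B)).mapMatrix M := by
  rcases subsingleton_or_nontrivial (Matrix ι ι P) with _ | _
  · exact ⟨P, _, _, inferInstance, Algebra.ofId P B, M, Subsingleton.elim _ _, rfl⟩
  obtain ⟨n, hn, g, hgM, hg⟩ := exists_monic_aeval_eq_zero_of_isIdempotentElem_mapMatrix _ M hM
  obtain ⟨P', _, _, _, l, r, hr, hrX⟩ := exists_etale_dvd_mul_self_sub_self I hn g hg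
  let M' : Matrix ι ι P' := (algebraMap P P').mapMatrix M
  refine ⟨P', _, _, ‹_›, l, aeval M' r, ?_, ?_⟩
  · have hgM' : aeval M' (g.1.map (algebraMap P P')) = 0 := by
      rw [← mapMatrix_aeval, hgM, map_zero]
    rw [IsIdempotentElem, ← sub_eq_zero, ← map_mul, ← map_sub]
    exact zero_dvd_iff.1 (hgM' ▸ map_dvd _ hr)
  · have hMl : ((Ideal.Quotient.mk I).comp (l : P' →+* B)).mapMatrix M' =
        ((Ideal.Quotient.mk I).comp (algebraMap P B)).mapMatrix M := by
      rw [← l.comp_algebraMap]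
      rfl
    have hXX : aeval (((Ideal.Quotient.mk I).comp (algebraMap P B)).mapMatrix M)
        (X * X - X : (B ⧸ I)[X]) = 0 := by
      rw [map_sub, map_mul, aeval_X, sub_eq_zero]
      exact hM
    rw [mapMatrix_aeval, hMl, ← sub_eq_zero]
    conv_lhs => enter [2]; rw [← aeval_X (R := B ⧸ I) (RingHom.mapMatrix _ M)]
    rw [← map_sub]
    exact zero_dvd_iff.1 (hXX ▸ map_dvd _ hrX)

end LiftIdempotent

section FormallySmoothQuotient

variable {A Q : Type*} [CommRing A] [CommRing Q] [Algebra A Q]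

-- By formal étaleness `Ω[Q⁄A]` is the base change of `Ω[P⁄A]`.
theorem exists_derivation_extending {P : Type*} [CommRing P] [Algebra A P] [Algebra P Q]
    [IsScalarTower A P Q] [Algebra.FormallyEtale P Q] (d : Derivation A P P) :
    ∃ d' : Derivation A Q Q, ∀ x, d' (algebraMap P Q x) = algebraMap P Q (d x) := by
  let f : Ω[P⁄A] →ₗ[P] Q := (Algebra.linearMap P Q).comp d.liftKaehlerDifferential
  let f' : Ω[Q⁄A] →ₗ[Q] Q := (f.liftBaseChange Q).comp
    (KaehlerDifferential.tensorKaehlerEquivOfFormallyEtale A P Q).symm.toLinearMap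
  refine ⟨f'.compDer (KaehlerDifferential.D A Q), fun x ↦ ?_⟩
  change f.liftBaseChange Q ((KaehlerDifferential.tensorKaehlerEquivOfFormallyEtale A P Q).symm
    (KaehlerDifferential.D A Q (algebraMap P Q x))) = _
  rw [KaehlerDifferential.tensorKaehlerEquivOfFormallyEtale_symm_D_algebraMap,
    LinearMap.liftBaseChange_tmul, one_smul, LinearMap.comp_apply,
    Derivation.liftKaehlerDifferential_comp_D, Algebra.linearMap_apply]

-- `x ↦ x - D x` is multiplicative modulo `J ^ 2` and splits `Q ⧸ J ^ 2 → Q ⧸ J`.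
theorem formallySmooth_quotient_of_derivation [Algebra.FormallySmooth A Q] (S : Set Q)
    (D : Derivation A Q Q) (hD : ∀ x, D x ∈ Ideal.span S)
    (hS : ∀ x ∈ S, x - D x ∈ Ideal.span S ^ 2) :
    Algebra.FormallySmooth A (Q ⧸ Ideal.span S) := by
  let f : Q →ₐ[A] Q ⧸ Ideal.span S := Ideal.Quotient.mkₐ A (Ideal.span S)
  have hf : RingHom.ker f.toRingHom = Ideal.span S := Ideal.mk_ker
  let π := Ideal.Quotient.mkₐ A (RingHom.ker f.toRingHom ^ 2)
  let σ : Q →ₐ[A] Q ⧸ RingHom.ker f.toRingHom ^ 2 := AlgHom.ofLinearMap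
    (π.toLinearMap.comp (LinearMap.id - (D : Q →ₗ[A] Q)))
    (by simp only [LinearMap.comp_apply, LinearMap.sub_apply, LinearMap.id_apply,
      Derivation.coeFn_coe, Derivation.map_one_eq_zero, sub_zero]; exact map_one π)
    fun x y ↦ by
      simp only [LinearMap.comp_apply, AlgHom.toLinearMap_apply, LinearMap.sub_apply,
        LinearMap.id_apply, Derivation.coeFn_coe, Derivation.leibniz, smul_eq_mul]
      rw [← map_mul]
      refine Ideal.Quotient.eq.2 ?_
      rw [hf, show x * y - (x * D y + y * D x) - (x - D x) * (y - D y) = -(D x * D y) by ring,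
        pow_two]
      exact neg_mem (Ideal.mul_mem_mul (hD x) (hD y))
  have hσ (x : Q) (hx : x ∈ Ideal.span S) : σ x = 0 := by
    suffices Ideal.span S ≤ RingHom.ker σ from this hx
    refine Ideal.span_le.2 fun y hy ↦ Ideal.Quotient.eq_zero_iff_mem.2 ?_
    rw [hf]
    exact hS y hy
  refine .of_split f (Ideal.Quotient.liftₐ _ σ hσ) (Ideal.Quotient.algHom_ext _ ?_)
  ext x
  change f (x - D x) = f x
  rw [map_sub, sub_eq_self]
  exact Ideal.Quotient.eq_zero_iff_mem.2 (hD x)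

variable {ι : Type*} [Fintype ι] {d : ι → Derivation A Q Q} {E : Matrix ι ι Q}

theorem derivation_sub_mul_apply_mem_span {g : ι → Q} (hEg : E.mulVec g = g) (i j : ι) :
    d j (g i) - (E * Matrix.of (fun i j ↦ d j (g i))) i j ∈ Ideal.span (Set.range g) := by
  have hg : g i = ∑ k, E i k * g k := (congrFun hEg i).symm
  have hd : d j (g i) = ∑ k, (E i k * d j (g k) + g k * d j (E i k)) := by
    conv_lhs => rw [hg]
    simp only [map_sum, Derivation.leibniz, smul_eq_mul]
  rw [hd, Matrix.mul_apply, ← Finset.sum_sub_distrib]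
  refine sum_mem fun k _ ↦ ?_
  rw [Matrix.of_apply, add_sub_cancel_left]
  exact Ideal.mul_mem_right _ _ (Ideal.subset_span ⟨k, rfl⟩)

variable [DecidableEq ι]

theorem mul_mulVec_eq_of_isIdempotentElem {R : Type*} [Ring R] {E M : Matrix ι ι R} {g s : ι → R}
    (hE : IsIdempotentElem E) (hEg : E.mulVec g = g) (hs : (E * M * E + (1 - E)).mulVec s = g) :
    (E * M).mulVec s = g := by
  have hE' : (1 - E) * (E * M * E + (1 - E)) = 1 - E := by
    rw [mul_add, hE.one_sub.eq, ← mul_assoc, ← mul_assoc, hE.one_sub_mul_self, zero_mul, zero_mul,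
      zero_add]
  have hEs : E.mulVec s = s := by
    have h := congrArg (1 - E).mulVec hs
    rw [Matrix.mulVec_mulVec, hE', Matrix.sub_mulVec, Matrix.sub_mulVec, hEg, Matrix.one_mulVec,
      Matrix.one_mulVec, sub_self, sub_eq_zero] at h
    exact h.symm
  rw [Matrix.add_mulVec, Matrix.sub_mulVec, ← Matrix.mulVec_mulVec, hEs, Matrix.one_mulVec,
    sub_self, add_zero] at hs
  exact hs

/-- The Jacobian matrix `(d j (g i))`, read as an endomorphism of the image of `E` and extended by
the identity on the image of `1 - E`. -/
def projectedJacobian (d : ι → Derivation A Q Q) (E : Matrix ι ι Q) (g : ι → Q) : Matrix ι ι Q :=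
  E * Matrix.of (fun i j ↦ d j (g i)) * E + (1 - E)

theorem formallySmooth_quotient_of_isUnit_projectedJacobian [Algebra.FormallySmooth A Q]
    {g : ι → Q} (hE : IsIdempotentElem E) (hEg : E.mulVec g = g)
    (hunit : IsUnit (projectedJacobian d E g).det) :
    Algebra.FormallySmooth A (Q ⧸ Ideal.span (Set.range g)) := by
  let W := projectedJacobian d E g
  let s := W⁻¹.mulVec g
  have hs (i : ι) : s i ∈ Ideal.span (Set.range g) :=
    sum_mem fun j _ ↦ Ideal.mul_mem_left _ _ (Ideal.subset_span ⟨j, rfl⟩)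
  have hWs : W.mulVec s = g := by
    rw [Matrix.mulVec_mulVec, Matrix.mul_nonsing_inv _ hunit, Matrix.one_mulVec]
  have hEMs := mul_mulVec_eq_of_isIdempotentElem hE hEg hWs
  have hD (x : Q) : (∑ j, s j • d j) x = ∑ j, s j * d j x := by
    refine (congrFun (map_sum Derivation.coeFnAddMonoidHom (fun j ↦ s j • d j) _) x).trans ?_
    rw [Finset.sum_apply]
    rfl
  refine formallySmooth_quotient_of_derivation (Set.range g) (∑ j, s j • d j) ?_ ?_
  · exact fun x ↦ hD x ▸ sum_mem fun j _ ↦ Ideal.mul_mem_right _ _ (hs j)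
  · rintro _ ⟨i, rfl⟩
    have hsum : g i - ∑ j, s j * d j (g i) =
        -∑ j, s j * (d j (g i) - (E * Matrix.of (fun i j ↦ d j (g i))) i j) := by
      conv_lhs => enter [1]; rw [← hEMs]
      simp only [Matrix.mulVec, dotProduct, mul_sub, Finset.sum_sub_distrib, neg_sub]
      exact congrArg (· - _) (Finset.sum_congr rfl fun j _ ↦ mul_comm _ _)
    rw [hD, hsum, pow_two]
    exact neg_mem (sum_mem fun j _ ↦
      Ideal.mul_mem_mul (hs j) (derivation_sub_mul_apply_mem_span hEg i j))

theorem det_projectedJacobian_sub_one_mem {q : Ideal Q} {h : ι → Q} (hE : IsIdempotentElem E)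
    (hh : ∀ i, h i ∈ q) (hEd : ∀ i j, E i j - d j (h i) ∈ q) :
    (projectedJacobian d E (E.mulVec h)).det - 1 ∈ q := by
  let π := Ideal.Quotient.mk q
  have hEE : IsIdempotentElem (π.mapMatrix E) := hE.map _
  have hM : π.mapMatrix (Matrix.of fun i j ↦ d j (E.mulVec h i)) = π.mapMatrix E := by
    rw [← hEE.eq, ← map_mul]
    ext i j
    refine Ideal.Quotient.eq.2 ?_
    have hd : d j (E.mulVec h i) - (E * E) i j =
        ∑ k, (d j (E i k) * h k - E i k * (E k j - d j (h k))) := by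
      simp only [Matrix.mulVec, dotProduct, map_sum, Derivation.leibniz, smul_eq_mul,
        Matrix.mul_apply]
      rw [← Finset.sum_sub_distrib]
      exact Finset.sum_congr rfl fun k _ ↦ by ring
    rw [Matrix.of_apply, hd]
    exact sum_mem fun k _ ↦
      sub_mem (Ideal.mul_mem_left _ _ (hh k)) (Ideal.mul_mem_left _ _ (hEd k j))
  have hone : π.mapMatrix (projectedJacobian d E (E.mulVec h)) = 1 := by
    rw [projectedJacobian, map_add, map_sub, map_mul, map_mul, hM, hEE.eq, hEE.eq, map_one,
      add_sub_cancel]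
  rw [← Ideal.Quotient.eq, map_one, RingHom.map_det, hone, Matrix.det_one]

theorem map_projectedJacobian {Q' : Type*} [CommRing Q'] [Algebra A Q'] [Algebra Q Q']
    {d' : ι → Derivation A Q' Q'}
    (hd : ∀ j x, d' j (algebraMap Q Q' x) = algebraMap Q Q' (d j x)) (g : ι → Q) :
    (algebraMap Q Q').mapMatrix (projectedJacobian d E g) =
      projectedJacobian d' ((algebraMap Q Q').mapMatrix E) (algebraMap Q Q' ∘ g) := by
  have hM : (algebraMap Q Q').mapMatrix (Matrix.of fun i j ↦ d j (g i)) =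
      Matrix.of fun i j ↦ d' j ((algebraMap Q Q' ∘ g) i) := by
    ext i j
    exact (hd j (g i)).symm
  rw [projectedJacobian, projectedJacobian, map_add, map_mul, map_mul, map_sub, map_one, hM]

end FormallySmoothQuotient

section ConormalSplitting

variable {A P : Type*} [CommRing A] [CommRing P] [Algebra A P]

theorem derivation_mem_of_mem_sq {J : Ideal P} (D : Derivation A P P) {x : P} (hx : x ∈ J ^ 2) :
    D x ∈ J := by
  rw [pow_two] at hx
  refine Submodule.mul_induction_on hx (fun a ha b hb ↦ ?_) fun a b ha hb ↦ ?_
  · rw [Derivation.leibniz]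
    exact add_mem (Ideal.mul_mem_right _ _ ha) (Ideal.mul_mem_right _ _ hb)
  · rw [map_add]
    exact add_mem ha hb

theorem derivation_mem_map_algebraMap {I : Ideal A} (D : Derivation A P P) {x : P}
    (hx : x ∈ I.map (algebraMap A P)) : D x ∈ I.map (algebraMap A P) := by
  induction hx using Submodule.span_induction with
  | mem _ ha =>
    obtain ⟨a, -, rfl⟩ := ha
    rw [Derivation.map_algebraMap]
    exact zero_mem _
  | zero => rw [map_zero]; exact zero_mem _
  | add _ _ _ _ ha hb => rw [map_add]; exact add_mem ha hb
  | smul a b hb hDb =>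
    rw [smul_eq_mul, Derivation.leibniz]
    exact add_mem (Ideal.mul_mem_left _ _ hDb) (Ideal.mul_mem_right _ _ hb)

variable {ι : Type*} [Fintype ι]

/-- The conormal map `J ⧸ J ^ 2 → Ω[P⁄A] ⊗ P ⧸ J` splits modulo `I`. The splitting is recorded by
elements `h j` of `J` and derivations `d j` such that every `F ∈ J` is congruent to
`∑ j, d j F * h j`. -/
structure IsConormalSplitting (I : Ideal A) (J : Ideal P) (d : ι → Derivation A P P)
    (h : ι → P) : Prop where
  mem (i : ι) : h i ∈ J
  sub_sum_mem (F : P) : F ∈ J → F - ∑ j, d j F * h j ∈ J ^ 2 ⊔ I.map (algebraMap A P)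

namespace IsConormalSplitting

variable {I : Ideal A} {J : Ideal P} {d : ι → Derivation A P P} {h : ι → P}

-- Apply `d k` to the congruence `h i ≡ ∑ j, d j (h i) * h j`.
theorem isIdempotentElem_mapMatrix [DecidableEq ι] (hs : IsConormalSplitting I J d h)
    {R : Type*} [CommRing R] (c : P →+* R) (hc : J ⊔ I.map (algebraMap A P) ≤ RingHom.ker c) :
    IsIdempotentElem (c.mapMatrix (Matrix.of fun i j ↦ d j (h i))) := by
  ext i k
  have hd : c (d k (h i - ∑ j, d j (h i) * h j)) = 0 := by
    obtain ⟨x, hx, y, hy, hxy⟩ := Submodule.mem_sup.1 (hs.sub_sum_mem _ (hs.mem i))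
    rw [← hxy, map_add]
    exact hc (Submodule.add_mem_sup (derivation_mem_of_mem_sq (d k) hx)
      (derivation_mem_map_algebraMap (d k) hy))
  have hch (j : ι) : c (h j) = 0 := hc (Ideal.mem_sup_left (hs.mem j))
  simp only [map_sub, map_sum, Derivation.leibniz, smul_eq_mul, map_add, map_mul,
    hch, zero_mul, add_zero, sub_eq_zero] at hd
  simp only [Matrix.mul_apply, RingHom.mapMatrix_apply, Matrix.map_apply, Matrix.of_apply]
  exact hd.symm

variable {P' : Type*} [CommRing P'] [Algebra P P'] {q : Ideal P'} {E : Matrix ι ι P'}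

theorem map_le_sq_sup (hs : IsConormalSplitting I J d h) (hJ : J.map (algebraMap P P') ≤ q)
    (hE : ∀ i j, E i j - algebraMap P P' (d j (h i)) ∈ q) :
    J.map (algebraMap P P') ≤ q ^ 2 ⊔ (Ideal.span (Set.range (E.mulVec (algebraMap P P' ∘ h))) ⊔
      (I.map (algebraMap A P)).map (algebraMap P P')) := by
  set N := Ideal.span (Set.range (E.mulVec (algebraMap P P' ∘ h))) ⊔
    (I.map (algebraMap A P)).map (algebraMap P P')
  let φ := algebraMap P P'
  have hsum (F : P) (hF : F ∈ J) : φ (F - ∑ j, d j F * h j) ∈ q ^ 2 ⊔ N := by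
    have hmem := Ideal.mem_map_of_mem φ (hs.sub_sum_mem F hF)
    rw [Ideal.map_sup, Ideal.map_pow] at hmem
    exact sup_le_sup (Ideal.pow_right_mono hJ 2) le_sup_right hmem
  have hh (i : ι) : φ (h i) ∈ q ^ 2 ⊔ N := by
    have hdecomp : φ (h i) = φ (h i - ∑ j, d j (h i) * h j) -
        ∑ j, (E i j - φ (d j (h i))) * φ (h j) + E.mulVec (φ ∘ h) i := by
      simp only [map_sub, map_sum, map_mul, sub_mul, Finset.sum_sub_distrib, Matrix.mulVec,
        dotProduct, Function.comp_apply]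
      ring
    rw [hdecomp, pow_two]
    refine add_mem (sub_mem (pow_two q ▸ hsum _ (hs.mem i)) (Ideal.mem_sup_left ?_))
      (Ideal.mem_sup_right (Ideal.mem_sup_left (Ideal.subset_span ⟨i, rfl⟩)))
    exact sum_mem fun j _ ↦
      Ideal.mul_mem_mul (hE i j) (hJ (Ideal.mem_map_of_mem _ (hs.mem j)))
  refine Ideal.map_le_iff_le_comap.2 fun F hF ↦ ?_
  have hdecomp : φ F = φ (F - ∑ j, d j F * h j) + ∑ j, φ (d j F) * φ (h j) := by
    simp only [map_sub, map_sum, map_mul, sub_add_cancel]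
  exact Ideal.mem_comap.2 (hdecomp ▸
    add_mem (hsum F hF) (sum_mem fun j _ ↦ Ideal.mul_mem_left _ _ (hh j)))

theorem exists_sub_one_mem_forall_mul_mem [Algebra.FormallyUnramified P P']
    [Algebra.FiniteType P P'] (hs : IsConormalSplitting I J d h) (hfg : J.FG)
    (hJ : J.map (algebraMap P P') ≤ q)
    (hq : q.comap (algebraMap P P') ≤ J ⊔ I.map (algebraMap A P))
    (hsurj : Function.Surjective (algebraMap P (P' ⧸ q)))
    (hE : ∀ i j, E i j - algebraMap P P' (d j (h i)) ∈ q) :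
    ∃ t, t - 1 ∈ q ∧ ∀ x ∈ q, t * x ∈ Ideal.span (Set.range (E.mulVec (algebraMap P P' ∘ h))) ⊔
      (I.map (algebraMap A P)).map (algebraMap P P') := by
  have hq' : (q.comap (algebraMap P P')).map (algebraMap P P') ≤
      J.map (algebraMap P P') ⊔ (I.map (algebraMap A P)).map (algebraMap P P') := by
    rw [← Ideal.map_sup]
    exact Ideal.map_mono hq
  obtain ⟨q₀, hq₀fg, hq₀, hqq₀⟩ := exists_fg_le_sup_map_comap hsurj
  refine _root_.exists_sub_one_mem_forall_mul_mem
    (Submodule.FG.sup hq₀fg (hfg.map (algebraMap P P'))) (sup_le hq₀ hJ) (hqq₀.trans ?_) ?_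
  · rw [sup_assoc]
    exact sup_le_sup_left (hq'.trans (sup_le_sup_left le_sup_right _)) _
  · have : IsLocalization.Away (1 : P') P' :=
      IsLocalization.away_of_isUnit_of_bijective P' isUnit_one Function.bijective_id
    have hsq := le_sq_sup_map_comap_of_formallyUnramified (Δ := (1 : P')) (isUnit_one.map _) P'
      hsurj
    exact hsq.trans (sup_le le_sup_left (hq'.trans (sup_le (hs.map_le_sq_sup hJ hE)
      (le_sup_right.trans le_sup_right))))

end IsConormalSplitting

end ConormalSplitting

section SmoothModel

theorem exists_algHom_quotient_away {Q S B : Type*} [CommRing Q] [CommRing S] [CommRing B]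
    [Algebra Q S] [Algebra Q B] {Δ : Q} [IsLocalization.Away Δ S] {I J : Ideal Q}
    (hΔ : IsUnit (algebraMap Q B Δ)) (hJ : J ≤ RingHom.ker (algebraMap Q B))
    (hI : ∀ x, algebraMap Q B x ∈ I.map (algebraMap Q B) → Δ * x ∈ J ⊔ I) :
    ∃ τ : (S ⧸ J.map (algebraMap Q S)) →ₐ[Q] B, ∀ z, τ z ∈ I.map (algebraMap Q B) →
      z ∈ I.map (algebraMap Q (S ⧸ J.map (algebraMap Q S))) := by
  let J' := J.map (algebraMap Q S)
  let l : S →ₐ[Q] B := IsLocalization.liftAlgHom (M := Submonoid.powers Δ) (f := Algebra.ofId Q B)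
    (by rintro ⟨_, m, rfl⟩; exact map_pow (algebraMap Q B) Δ m ▸ hΔ.pow m)
  have hl : J' ≤ RingHom.ker l :=
    Ideal.map_le_iff_le_comap.2 fun x hx ↦ (l.commutes x).trans (hJ hx)
  refine ⟨Ideal.Quotient.liftₐ J' l hl, fun z hz ↦ ?_⟩
  obtain ⟨y, rfl⟩ := Ideal.Quotient.mk_surjective z
  obtain ⟨⟨x, ⟨_, m, rfl⟩⟩, hxy⟩ := IsLocalization.surj (Submonoid.powers Δ) y
  have hx : algebraMap Q B x ∈ I.map (algebraMap Q B) := by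
    rw [← l.commutes x, ← hxy, map_mul]
    exact Ideal.mul_mem_right _ _ hz
  have hmap : (J ⊔ I).map (algebraMap Q (S ⧸ J')) = I.map (algebraMap Q (S ⧸ J')) := by
    rw [Ideal.map_sup, IsScalarTower.algebraMap_eq Q S (S ⧸ J'), ← Ideal.map_map,
      Ideal.Quotient.algebraMap_eq, Ideal.map_quotient_self, bot_sup_eq]
  have hmem := hmap ▸ Ideal.mem_map_of_mem (algebraMap Q (S ⧸ J')) (hI x hx)
  have hunit : IsUnit (algebraMap Q (S ⧸ J') (Δ ^ (m + 1))) := by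
    rw [IsScalarTower.algebraMap_apply Q S, map_pow]
    exact ((IsLocalization.Away.algebraMap_isUnit Δ).pow _).map _
  have hfrac : algebraMap Q S (Δ ^ (m + 1)) * y = algebraMap Q S (Δ * x) := by
    rw [map_mul, ← hxy, pow_succ', map_mul, mul_assoc, mul_comm y]
  have hfrac' := congrArg (Ideal.Quotient.mk J') hfrac
  rw [map_mul] at hfrac'
  exact (Ideal.unit_mul_mem_iff_mem _ hunit).1 (hfrac' ▸ hmem)

variable {A : Type*} [CommRing A] {ι : Type*} [Fintype ι]

theorem smooth_quotient_map_of_isUnit_projectedJacobian [DecidableEq ι] {Q S : Type*}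
    [CommRing Q] [CommRing S] [Algebra A Q] [Algebra A S] [Algebra Q S] [IsScalarTower A Q S]
    [Algebra.FormallyEtale Q S] [Algebra.FormallySmooth A Q] [Algebra.FinitePresentation A S]
    {d : ι → Derivation A Q Q} {E : Matrix ι ι Q} {g : ι → Q} (hE : IsIdempotentElem E)
    (hEg : E.mulVec g = g) (hunit : IsUnit (algebraMap Q S (projectedJacobian d E g).det)) :
    Algebra.Smooth A (S ⧸ (Ideal.span (Set.range g)).map (algebraMap Q S)) := by
  have : Algebra.FormallySmooth A S := .comp A Q S
  choose d' hd' using fun j ↦ exists_derivation_extending (Q := S) (d j)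
  have hg : ((algebraMap Q S).mapMatrix E).mulVec (algebraMap Q S ∘ g) = algebraMap Q S ∘ g := by
    ext i
    exact (RingHom.map_mulVec (algebraMap Q S) E g i).symm.trans
      (congrArg (algebraMap Q S) (congrFun hEg i))
  rw [Ideal.map_span, ← Set.range_comp]
  exact ⟨formallySmooth_quotient_of_isUnit_projectedJacobian (d := d') (hE.map _) hg
      (by rwa [← map_projectedJacobian hd', ← RingHom.map_det]),
    .quotient (Submodule.fg_span (Set.finite_range _))⟩

theorem IsConormalSplitting.exists_isUnit_algebraMap [DecidableEq ι] {P P' B : Type*} [CommRing P]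
    [CommRing P'] [CommRing B] [Algebra A P] [Algebra A B] [Algebra P B] [Algebra A P']
    [Algebra P P'] [IsScalarTower A P P'] [Algebra.FormallyUnramified P P']
    [Algebra.FiniteType P P'] [Algebra P' B] [IsScalarTower P P' B] {I : Ideal A}
    [HenselianRing B (I.map (algebraMap A B))] {J : Ideal P} (hfg : J.FG)
    (hJ : J ≤ RingHom.ker (algebraMap P B))
    (hker : (I.map (algebraMap A B)).comap (algebraMap P B) ≤ J ⊔ I.map (algebraMap A P))
    (hsurj : Function.Surjective (algebraMap P (B ⧸ I.map (algebraMap A B))))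
    {d : ι → Derivation A P P} {d' : ι → Derivation A P' P'} {h : ι → P} {E : Matrix ι ι P'}
    (hs : IsConormalSplitting I J d h)
    (hd' : ∀ j x, d' j (algebraMap P P' x) = algebraMap P P' (d j x)) (hE : IsIdempotentElem E)
    (hEd : ∀ i j, algebraMap P' B (E i j - algebraMap P P' (d j (h i))) ∈
      I.map (algebraMap A B)) :
    ∃ Δ : P', IsUnit (algebraMap P' B Δ) ∧
      (projectedJacobian d' E (E.mulVec (algebraMap P P' ∘ h))).det ∣ Δ ∧
      ∀ x, algebraMap P' B x ∈ I.map (algebraMap A B) →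
        Δ * x ∈ Ideal.span (Set.range (E.mulVec (algebraMap P P' ∘ h))) ⊔
          I.map (algebraMap A P') := by
  let IB := I.map (algebraMap A B)
  let q := IB.comap (algebraMap P' B)
  have hJq : J.map (algebraMap P P') ≤ q := by
    rw [Ideal.map_le_iff_le_comap, Ideal.comap_comap, ← IsScalarTower.algebraMap_eq]
    exact hJ.trans (Ideal.comap_mono bot_le)
  have hq : q.comap (algebraMap P P') ≤ J ⊔ I.map (algebraMap A P) := by
    rwa [Ideal.comap_comap, ← IsScalarTower.algebraMap_eq]
  have hsurj' : Function.Surjective (algebraMap P (P' ⧸ q)) :=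
    surjective_algebraMap_quotient fun x ↦ by
      obtain ⟨p, hp⟩ := exists_sub_algebraMap_mem hsurj (algebraMap P' B x)
      refine ⟨p, Ideal.mem_comap.2 ?_⟩
      rwa [map_sub, ← IsScalarTower.algebraMap_apply]
  obtain ⟨t, ht, htq⟩ := hs.exists_sub_one_mem_forall_mul_mem hfg hJq hq hsurj' hEd
  have hW := det_projectedJacobian_sub_one_mem (d := d') hE
    (fun i ↦ hJq (Ideal.mem_map_of_mem _ (hs.mem i))) fun i j ↦ (hd' j (h i)).symm ▸ hEd i j
  set W := (projectedJacobian d' E (E.mulVec (algebraMap P P' ∘ h))).det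
  have hWt : W * t - 1 ∈ q := by
    rw [show W * t - 1 = W * (t - 1) + (W - 1) by ring]
    exact add_mem (Ideal.mul_mem_left _ _ ht) hW
  have hone : Ideal.Quotient.mk IB (algebraMap P' B (W * t)) = 1 := by
    rw [← sub_eq_zero, ← map_one (Ideal.Quotient.mk IB), ← map_one (algebraMap P' B), ← map_sub,
      ← map_sub]
    exact Ideal.Quotient.eq_zero_iff_mem.2 hWt
  refine ⟨W * t, isUnit_of_mk_of_le_jacobson (J := IB) HenselianRing.jac (hone ▸ isUnit_one),
    dvd_mul_right _ t, fun x hx ↦ ?_⟩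
  rw [mul_assoc, IsScalarTower.algebraMap_eq A P P', ← Ideal.map_map]
  exact Ideal.mul_mem_left _ _ (htq x hx)

theorem IsConormalSplitting.exists_etale_isIdempotentElem {P : Type u} {B : Type*} [CommRing P]
    [CommRing B] [Algebra A P] [Algebra A B] [Algebra P B] [IsScalarTower A P B] {I : Ideal A}
    [HenselianRing B (I.map (algebraMap A B))] {J : Ideal P}
    (hJ : J ≤ RingHom.ker (algebraMap P B)) {d : ι → Derivation A P P} {h : ι → P}
    (hs : IsConormalSplitting I J d h) :
    ∃ (P' : Type u) (_ : CommRing P') (_ : Algebra A P') (_ : Algebra P P')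
      (_ : IsScalarTower A P P') (_ : Algebra P' B) (_ : IsScalarTower P P' B)
      (E : Matrix ι ι P'), Algebra.Etale P P' ∧ IsIdempotentElem E ∧
        ∀ i j, algebraMap P' B (E i j - algebraMap P P' (d j (h i))) ∈ I.map (algebraMap A B) := by
  classical
  have hIJ : J ⊔ I.map (algebraMap A P) ≤
      RingHom.ker ((Ideal.Quotient.mk (I.map (algebraMap A B))).comp (algebraMap P B)) := by
    rw [← RingHom.comap_ker, Ideal.mk_ker]
    refine sup_le (hJ.trans (Ideal.comap_mono bot_le)) (Ideal.map_le_iff_le_comap.1 ?_)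
    rw [Ideal.map_map, ← IsScalarTower.algebraMap_eq]
  obtain ⟨P', _, _, _, l, E, hE, hEl⟩ := exists_etale_isIdempotentElem_matrix _ _
    (hs.isIdempotentElem_mapMatrix _ hIJ)
  let _ : Algebra A P' := ((algebraMap P P').comp (algebraMap A P)).toAlgebra
  let _ : Algebra P' B := l.toRingHom.toAlgebra
  have _ : IsScalarTower P P' B := .of_algebraMap_eq' l.comp_algebraMap.symm
  refine ⟨P', _, _, _, .of_algebraMap_eq' rfl, _, ‹_›, E, ‹_›, hE, fun i j ↦ ?_⟩
  rw [map_sub, ← IsScalarTower.algebraMap_apply]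
  exact Ideal.Quotient.eq.1 (congrFun (congrFun hEl i) j)

theorem IsConormalSplitting.exists_smooth_algHom {P : Type u} {B : Type*} [CommRing P]
    [CommRing B] [Algebra A P] [Algebra A B] [Algebra P B] [IsScalarTower A P B]
    [Algebra.FormallySmooth A P] [Algebra.FinitePresentation A P] {I : Ideal A}
    [HenselianRing B (I.map (algebraMap A B))] {J : Ideal P} (hfg : J.FG)
    (hJ : J ≤ RingHom.ker (algebraMap P B))
    (hker : (I.map (algebraMap A B)).comap (algebraMap P B) ≤ J ⊔ I.map (algebraMap A P))
    (hsurj : Function.Surjective (algebraMap P (B ⧸ I.map (algebraMap A B))))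
    {d : ι → Derivation A P P} {h : ι → P} (hs : IsConormalSplitting I J d h) :
    ∃ (R : Type u) (_ : CommRing R) (_ : Algebra A R) (_ : Algebra P R) (_ : IsScalarTower A P R)
      (τ : R →ₐ[P] B), Algebra.Smooth A R ∧ Algebra.FiniteType P R ∧
        (I.map (algebraMap A B)).comap τ ≤ I.map (algebraMap A R) := by
  classical
  obtain ⟨P', _, _, _, _, _, _, E, _, hE, hEd⟩ := hs.exists_etale_isIdempotentElem hJ
  have _ : IsScalarTower A P' B := .to₁₃₄ A P P' B
  choose d' hd' using fun j ↦ exists_derivation_extending (Q := P') (d j)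
  set g := E.mulVec (algebraMap P P' ∘ h)
  obtain ⟨Δ, hΔ, hdvd, hmul⟩ := hs.exists_isUnit_algebraMap hfg hJ hker hsurj hd' hE hEd
  have hg : Ideal.span (Set.range g) ≤ RingHom.ker (algebraMap P' B) := by
    refine Ideal.span_le.2 (Set.range_subset_iff.2 fun i ↦ (map_sum _ _ _).trans ?_)
    refine Finset.sum_eq_zero fun j _ ↦ ?_
    rw [map_mul, Function.comp_apply, ← IsScalarTower.algebraMap_apply, hJ (hs.mem j), mul_zero]
  let S := Localization.Away Δ
  have : Algebra.FormallySmooth A P' := .comp A P P'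
  have : Algebra.FormallyEtale P' S := .of_isLocalization (Submonoid.powers Δ)
  have : Algebra.FinitePresentation P' S := IsLocalization.Away.finitePresentation Δ
  have : Algebra.FinitePresentation A P' := .trans A P P'
  have : Algebra.FinitePresentation A S := .trans A P' S
  have hIB : (I.map (algebraMap A P')).map (algebraMap P' B) = I.map (algebraMap A B) := by
    rw [Ideal.map_map, ← IsScalarTower.algebraMap_eq]
  obtain ⟨τ, hτ⟩ := exists_algHom_quotient_away (S := S) (I := I.map (algebraMap A P')) hΔ hg
    (by rwa [hIB])
  have hunit : IsUnit (algebraMap P' S (projectedJacobian d' E g).det) :=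
    isUnit_of_dvd_unit (map_dvd _ hdvd) (IsLocalization.Away.algebraMap_isUnit Δ)
  refine ⟨S ⧸ (Ideal.span (Set.range g)).map (algebraMap P' S), inferInstance, inferInstance,
    inferInstance, inferInstance, τ.restrictScalars P,
    smooth_quotient_map_of_isUnit_projectedJacobian hE ?_ hunit, inferInstance, ?_⟩
  · rw [Matrix.mulVec_mulVec, hE.eq]
  · rw [hIB, Ideal.map_map, ← IsScalarTower.algebraMap_eq] at hτ
    exact hτ

end SmoothModel

section HFormallySmooth

theorem aeval_X_sub_sub_mem_sq {A σ : Type*} [CommRing A] [Fintype σ]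
    {J : Ideal (MvPolynomial σ A)} {h : σ → MvPolynomial σ A} (hh : ∀ i, h i ∈ J)
    (F : MvPolynomial σ A) :
    MvPolynomial.aeval (fun i ↦ MvPolynomial.X i - h i) F -
      (F - ∑ j, MvPolynomial.pderiv j F * h j) ∈ J ^ 2 := by
  classical
  induction F using MvPolynomial.induction_on with
  | C a =>
    simp only [MvPolynomial.aeval_C, MvPolynomial.algebraMap_eq, MvPolynomial.pderiv_C, zero_mul,
      Finset.sum_const_zero, sub_zero, sub_self, zero_mem]
  | add p q hp hq =>
    convert add_mem hp hq using 1
    simp only [map_add, add_mul, Finset.sum_add_distrib]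
    ring
  | mul_X p i hp =>
    let D := ∑ j, MvPolynomial.pderiv j p * h j
    have hleibniz : ∑ j, MvPolynomial.pderiv j (p * MvPolynomial.X i) * h j =
        D * MvPolynomial.X i + p * h i := by
      simp only [Derivation.leibniz, MvPolynomial.pderiv_X, smul_eq_mul, add_mul,
        Finset.sum_add_distrib, Pi.single_apply, mul_ite, mul_one, mul_zero, ite_mul, zero_mul,
        Finset.sum_ite_eq, Finset.mem_univ, if_true, D, Finset.sum_mul]
      rw [add_comm]
      exact congrArg (· + _) (Finset.sum_congr rfl fun j _ ↦ by ring)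
    have hDh : D * h i ∈ J ^ 2 :=
      pow_two J ▸ Ideal.mul_mem_mul (sum_mem fun j _ ↦ Ideal.mul_mem_left _ _ (hh j)) (hh i)
    convert add_mem (Ideal.mul_mem_right (MvPolynomial.X i - h i) _ hp) hDh using 1
    rw [hleibniz, map_mul, MvPolynomial.aeval_X]
    ring

theorem map_algebraMap_quotient_map_eq_bot {A R : Type*} [CommRing A] [CommRing R] [Algebra A R]
    (I : Ideal A) : I.map (algebraMap A (R ⧸ I.map (algebraMap A R))) = ⊥ := by
  rw [IsScalarTower.algebraMap_eq A R (R ⧸ I.map (algebraMap A R)), ← Ideal.map_map]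
  exact Ideal.map_quotient_self _

theorem surjective_of_range_sup_smul_top {A M N : Type*} [CommRing A] [AddCommGroup M]
    [AddCommGroup N] [Module A M] [Module A N] {I : Ideal A} {k : ℕ}
    (hI : I ^ k • (⊤ : Submodule A N) = ⊥) {f : M →ₗ[A] N}
    (hf : LinearMap.range f ⊔ I • ⊤ = ⊤) : Function.Surjective f := by
  have hpow (k : ℕ) : LinearMap.range f ⊔ I ^ k • ⊤ = ⊤ := by
    induction k with
    | zero => rw [pow_zero, Ideal.one_eq_top, Submodule.top_smul, sup_top_eq]
    | succ k ih =>
      rw [eq_top_iff]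
      calc ⊤ = LinearMap.range f ⊔ I ^ k • (LinearMap.range f ⊔ I • ⊤) := by rw [hf, ih]
        _ ≤ LinearMap.range f ⊔ I ^ (k + 1) • ⊤ := by
          rw [Submodule.smul_sup, ← Submodule.mul_smul, ← pow_succ]
          exact sup_le le_sup_left (sup_le_sup_right Submodule.smul_le_right _)
  rw [← LinearMap.range_eq_top, ← hpow k, hI, sup_bot_eq]

namespace IsHFormallySmooth

variable {A B : Type u} [CommRing A] [CommRing B] [Algebra A B] {I : Ideal A}

theorem exists_algHom_quotient (hfs : IsHFormallySmooth (algebraMap A B) I) {P : Type u}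
    [CommRing P] [Algebra A P] (η : P →ₐ[A] B) {T : Ideal P} {r M : ℕ} (hr : 1 ≤ r) (hM : 1 ≤ M)
    (hIT : (I ^ r).map (algebraMap A P) ≤ T) (hT : T ≤ ((I ^ r).map (algebraMap A B)).comap η)
    (hTM : ((I ^ r).map (algebraMap A B)).comap η ^ M ≤ T)
    (hsurj : ∀ b, ∃ x, b - η x ∈ (I ^ r).map (algebraMap A B)) :
    ∃ v : B →ₐ[A] P ⧸ T, ∀ b y, v b = Ideal.Quotient.mk T y →
      b - η y ∈ (I ^ r).map (algebraMap A B) := by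
  let IB := (I ^ r).map (algebraMap A B)
  let p : (P ⧸ T) →ₐ[A] B ⧸ IB := Ideal.quotientMapₐ IB η hT
  have hker : RingHom.ker (p : P ⧸ T →+* B ⧸ IB) ≤ (IB.comap η).map (Ideal.Quotient.mk T) :=
    fun y hy ↦ by
      obtain ⟨x, rfl⟩ := Ideal.Quotient.mk_surjective y
      exact Ideal.mem_map_of_mem _ (Ideal.Quotient.eq_zero_iff_mem (I := IB).1 hy)
  have hpM : RingHom.ker (p : P ⧸ T →+* B ⧸ IB) ^ M = ⊥ := by
    rw [eq_bot_iff]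
    refine (Ideal.pow_right_mono hker M).trans ?_
    rw [← Ideal.map_pow, ← Ideal.map_quotient_self T]
    exact Ideal.map_mono hTM
  have hp : Function.Surjective p := fun b ↦ by
    obtain ⟨b, rfl⟩ := Ideal.Quotient.mk_surjective b
    obtain ⟨x, hx⟩ := hsurj b
    exact ⟨Ideal.Quotient.mk T x, (Ideal.Quotient.eq.2 hx).symm⟩
  have hIP : (I ^ r).map (algebraMap A (P ⧸ T)) = ⊥ := by
    rw [IsScalarTower.algebraMap_eq A P (P ⧸ T), ← Ideal.map_map, eq_bot_iff,
      ← Ideal.map_quotient_self T]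
    exact Ideal.map_mono hIT
  have hIB : (I ^ r).map (algebraMap A (B ⧸ IB)) = ⊥ := map_algebraMap_quotient_map_eq_bot _
  obtain ⟨v, hvA, hpv⟩ := hfs (P ⧸ T) (B ⧸ IB) _ _ (p : P ⧸ T →+* B ⧸ IB) (Ideal.Quotient.mk IB)
    p.comp_algebraMap rfl ⟨r, hr, hIP, hIB⟩ hp ⟨M, hM, hpM⟩
  refine ⟨{ v with commutes' := RingHom.congr_fun hvA }, fun b y hby ↦ Ideal.Quotient.eq.1 ?_⟩
  rw [← RingHom.congr_fun hpv b]
  exact congrArg p hby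

theorem exists_isConormalSplitting (hfs : IsHFormallySmooth (algebraMap A B) I) {n : ℕ}
    [Algebra (MvPolynomial (Fin n) A) B] [IsScalarTower A (MvPolynomial (Fin n) A) B]
    {J : Ideal (MvPolynomial (Fin n) A)}
    (hJ : J ≤ RingHom.ker (algebraMap (MvPolynomial (Fin n) A) B))
    (hker : (I.map (algebraMap A B)).comap (algebraMap (MvPolynomial (Fin n) A) B) ≤
      J ⊔ I.map (algebraMap A (MvPolynomial (Fin n) A)))
    (hsurj : Function.Surjective
      (algebraMap (MvPolynomial (Fin n) A) (B ⧸ I.map (algebraMap A B)))) :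
    ∃ h, IsConormalSplitting I J (fun j ↦ MvPolynomial.pderiv j) h := by
  let P := MvPolynomial (Fin n) A
  let T : Ideal P := J ^ 2 ⊔ I.map (algebraMap A P)
  have hT : T ≤ (I.map (algebraMap A B)).comap (algebraMap P B) := by
    refine sup_le ?_ (Ideal.map_le_iff_le_comap.1 ?_)
    · exact (Ideal.pow_le_self two_ne_zero).trans (hJ.trans (Ideal.comap_mono bot_le))
    · rw [Ideal.map_map, ← IsScalarTower.algebraMap_eq]
  have hT3 : (I.map (algebraMap A B)).comap (algebraMap P B) ^ 3 ≤ T := by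
    refine (Ideal.pow_right_mono hker 3).trans ?_
    simpa only [pow_one] using
      Ideal.sup_pow_add_le_pow_sup_pow (I := J) (J := I.map (algebraMap A P)) (n := 2) (m := 1)
  obtain ⟨v, hv⟩ := hfs.exists_algHom_quotient (r := 1) (M := 3) (T := T)
    (IsScalarTower.toAlgHom A P B) le_rfl (by decide) (by rw [pow_one]; exact le_sup_right)
    (by rwa [pow_one]) (by rwa [pow_one]) (by rw [pow_one]; exact exists_sub_algebraMap_mem hsurj)
  rw [pow_one] at hv
  have hX (j : Fin n) : ∃ h ∈ J, v (algebraMap P B (MvPolynomial.X j)) =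
      Ideal.Quotient.mk T (MvPolynomial.X j - h) := by
    obtain ⟨y, hy⟩ := Ideal.Quotient.mk_surjective (v (algebraMap P B (MvPolynomial.X j)))
    have hXy := hv _ y hy.symm
    rw [IsScalarTower.coe_toAlgHom', ← map_sub] at hXy
    obtain ⟨h, hh, z, hz, hhz⟩ := Submodule.mem_sup.1 (hker hXy)
    refine ⟨h, hh, hy.symm.trans (Ideal.Quotient.eq.2 ?_)⟩
    rw [show y - (MvPolynomial.X j - h) = -z by linear_combination hhz]
    exact Ideal.mem_sup_right (neg_mem hz)
  choose h hh hvh using hX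
  have hvT : v.comp (IsScalarTower.toAlgHom A P B) = (Ideal.Quotient.mkₐ A T).comp
      (MvPolynomial.aeval fun i ↦ MvPolynomial.X i - h i) :=
    MvPolynomial.algHom_ext fun j ↦ (hvh j).trans <| by
      rw [AlgHom.comp_apply, MvPolynomial.aeval_X, Ideal.Quotient.mkₐ_eq_mk]
  refine ⟨h, hh, fun F hF ↦ ?_⟩
  have hvF : v (algebraMap P B F) = _ := AlgHom.congr_fun hvT F
  rw [hJ hF, map_zero] at hvF
  have hmem : MvPolynomial.aeval (fun i ↦ MvPolynomial.X i - h i) F ∈ T :=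
    Ideal.Quotient.eq_zero_iff_mem.1 hvF.symm
  have hsub := sub_mem hmem (Ideal.mem_sup_left (aeval_X_sub_sub_mem_sq hh F))
  rwa [sub_sub_cancel] at hsub

theorem comap_map_pow_le (hfs : IsHFormallySmooth (algebraMap A B) I) {R : Type u} [CommRing R]
    [Algebra A R] (τ : R →ₐ[A] B) {r : ℕ}
    (hsurj : ∀ b, ∃ x, b - τ x ∈ (I ^ r).map (algebraMap A B))
    (hτ : (I.map (algebraMap A B)).comap τ ≤ I.map (algebraMap A R)) :
    ((I ^ r).map (algebraMap A B)).comap τ ≤ (I ^ r).map (algebraMap A R) := by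
  rcases r.eq_zero_or_pos with rfl | hr
  · rw [pow_zero, Ideal.one_eq_top, Ideal.map_top, Ideal.map_top]
    exact le_top
  let T := (I ^ r).map (algebraMap A R)
  have hle : (I ^ r).map (algebraMap A B) ≤ I.map (algebraMap A B) :=
    Ideal.map_mono (Ideal.pow_le_self hr.ne')
  have hT : T ≤ ((I ^ r).map (algebraMap A B)).comap τ := by
    refine Ideal.map_le_iff_le_comap.2 fun a ha ↦ Ideal.mem_comap.2 (Ideal.mem_comap.2 ?_)
    exact τ.commutes a ▸ Ideal.mem_map_of_mem _ ha
  have hTr : ((I ^ r).map (algebraMap A B)).comap τ ^ r ≤ T := by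
    refine (Ideal.pow_right_mono ((Ideal.comap_mono hle).trans hτ) r).trans ?_
    rw [← Ideal.map_pow]
  obtain ⟨v, hv⟩ := hfs.exists_algHom_quotient τ hr hr le_rfl hT hTr hsurj
  have htop : LinearMap.range v.toLinearMap ⊔ I • ⊤ = ⊤ := by
    rw [eq_top_iff]
    rintro y -
    obtain ⟨x, rfl⟩ := Ideal.Quotient.mk_surjective y
    obtain ⟨x', hx'⟩ := Ideal.Quotient.mk_surjective (v (τ x))
    have hxx' : x - x' ∈ I.map (algebraMap A R) :=
      hτ (Ideal.mem_comap.2 (map_sub τ x x' ▸ hle (hv _ x' hx'.symm)))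
    have hmem := Ideal.mem_map_of_mem (Ideal.Quotient.mk T) hxx'
    rw [Ideal.map_map, map_sub, hx'] at hmem
    rw [← add_sub_cancel (v (τ x)) (Ideal.Quotient.mk T x), Ideal.smul_top_eq_map]
    exact Submodule.add_mem_sup ⟨τ x, rfl⟩ hmem
  have hTbot : (I ^ r).map (algebraMap A (R ⧸ T)) = ⊥ := map_algebraMap_quotient_map_eq_bot _
  have hvsurj : Function.Surjective v := surjective_of_range_sup_smul_top (k := r)
    (by rw [Ideal.smul_top_eq_map, hTbot, Submodule.restrictScalars_bot]) htop
  intro z hz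
  obtain ⟨b, hb⟩ := hvsurj (Ideal.Quotient.mk T z)
  have hbI : b ∈ (I ^ r).map (algebraMap A B) := by
    have := add_mem (hv b z hb) hz
    rwa [sub_add_cancel] at this
  have hvb := Ideal.mem_map_of_mem (v : B →+* R ⧸ T) hbI
  rw [RingHom.coe_coe, Ideal.map_map, v.comp_algebraMap, hTbot, Ideal.mem_bot, hb] at hvb
  exact Ideal.Quotient.eq_zero_iff_mem.1 hvb

end IsHFormallySmooth

end HFormallySmooth

section Presentation

theorem IsHfp.exists_mvPolynomial {A B : Type u} [CommRing A] [CommRing B] [Algebra A B]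
    {I : Ideal A} (h : IsHfp (algebraMap A B) I) :
    ∃ (n : ℕ) (_ : Algebra (MvPolynomial (Fin n) A) B)
      (_ : IsScalarTower A (MvPolynomial (Fin n) A) B) (R₀ : Type u) (_ : CommRing R₀)
      (π : MvPolynomial (Fin n) A →+* R₀) (ρ₀ : R₀ →+* B),
      Function.Surjective π ∧ (RingHom.ker π).FG ∧ ρ₀.comp π = algebraMap _ B ∧
        IsHenselization ((I.map (algebraMap A (MvPolynomial (Fin n) A))).map π) ρ₀ := by
  obtain ⟨R₀, _, ψ, ρ₀, hψ, hψB, hρ₀⟩ := h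
  let _ : Algebra A R₀ := ψ.toAlgebra
  obtain ⟨n, π, hπ, hfg⟩ := Algebra.FinitePresentation.out (R := A) (A := R₀) (self := hψ)
  have hπA : (π : MvPolynomial (Fin n) A →+* R₀).comp (algebraMap A _) = ψ := π.comp_algebraMap
  let _ : Algebra (MvPolynomial (Fin n) A) B := (ρ₀.comp (π : _ →+* R₀)).toAlgebra
  refine ⟨n, inferInstance, .of_algebraMap_eq' ?_, R₀, inferInstance, π, ρ₀, hπ, hfg, rfl, ?_⟩
  · rw [RingHom.algebraMap_toAlgebra, RingHom.comp_assoc, hπA, hψB]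
  · rwa [Ideal.map_map, hπA]

namespace IsHenselization

variable {P R₀ B H : Type u} [CommRing P] [CommRing R₀] [CommRing B] [CommRing H]
  {π : P →+* R₀} {K : Ideal P} {ρ₀ : R₀ →+* B}

theorem comap_map_comp_le (hρ₀ : IsHenselization (K.map π) ρ₀) (hπ : Function.Surjective π) :
    (K.map (ρ₀.comp π)).comap (ρ₀.comp π) ≤ RingHom.ker π ⊔ K := by
  have hle : ((K.map π).map ρ₀).comap ρ₀ ≤ K.map π := fun z hz ↦ by
    rw [← pow_one (K.map π)] at hz ⊢
    exact hρ₀.mem_pow_of_map_mem hz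
  rw [← Ideal.map_map, ← Ideal.comap_comap, sup_comm]
  refine (Ideal.comap_mono hle).trans ?_
  rw [Ideal.comap_map_of_surjective _ hπ]
  rfl

theorem exists_sub_comp_mem_map_pow (hρ₀ : IsHenselization (K.map π) ρ₀)
    (hπ : Function.Surjective π) (r : ℕ) (b : B) :
    ∃ p, b - ρ₀.comp π p ∈ (K ^ r).map (ρ₀.comp π) := by
  obtain ⟨x, hx⟩ := hρ₀.exists_sub_mem_map_pow r b
  obtain ⟨p, rfl⟩ := hπ x
  exact ⟨p, by rwa [← Ideal.map_pow, Ideal.map_map] at hx⟩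

-- The image of `β` is Henselian and contains `R₀`, so the universal property retracts `B` onto it.
theorem surjective_of_comp_eq (hρ₀ : IsHenselization (K.map π) ρ₀) (hπ : Function.Surjective π)
    {φ : P →+* H} [HenselianRing H (K.map φ)] {β : H →+* B} (hβ : β.comp φ = ρ₀.comp π) :
    Function.Surjective β := by
  have hS := henselianRing_map_of_surjective (J := K.map φ) β.rangeRestrict
    β.rangeRestrict_surjective
  let f : R₀ →+* β.range := ρ₀.codRestrict β.range fun x ↦ by
    obtain ⟨p, rfl⟩ := hπ x
    exact ⟨φ p, RingHom.congr_fun hβ p⟩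
  have hf : f.comp π = β.rangeRestrict.comp φ :=
    RingHom.ext fun p ↦ Subtype.ext (RingHom.congr_fun hβ p).symm
  obtain ⟨g, hg, -⟩ := hρ₀.2 _ _ hS f (by rw [Ideal.map_map, Ideal.map_map, hf])
  have hid : β.range.subtype.comp g = RingHom.id B :=
    (hρ₀.2 B _ hρ₀.1 ρ₀ le_rfl).unique (by rw [RingHom.comp_assoc, hg]; rfl) rfl
  intro b
  obtain ⟨x, hx⟩ := (g b).2
  exact ⟨x, hx.trans (RingHom.congr_fun hid b)⟩

variable {R : Type u} [CommRing R] [Algebra P R] [Algebra.FiniteType P R] {ρ : R →+* H}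

theorem ringHom_ext_of_finiteType (hρ : IsHenselization (K.map (algebraMap P R)) ρ)
    (hsurj : Function.Surjective (algebraMap P (R ⧸ K.map (algebraMap P R))))
    {C : Type u} [CommRing C] {J : Ideal C} [HenselianRing C J] {f g : H →+* C}
    (hJ : K.map ((f.comp ρ).comp (algebraMap P R)) ≤ J)
    (hfg : (f.comp ρ).comp (algebraMap P R) = (g.comp ρ).comp (algebraMap P R)) : f = g := by
  let _ : Algebra P C := ((f.comp ρ).comp (algebraMap P R)).toAlgebra
  have hρfg : f.comp ρ = g.comp ρ := congrArg AlgHom.toRingHom <|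
    algHom_eq_of_finiteType hsurj (hJ.trans HenselianRing.jac)
      { f.comp ρ with commutes' := fun _ ↦ rfl }
      { g.comp ρ with commutes' := fun p ↦ (RingHom.congr_fun hfg p).symm }
  exact (hρ.2 C J inferInstance (f.comp ρ) (by rwa [Ideal.map_map])).unique rfl hρfg.symm

theorem ker_eq_map_ker (hρ₀ : IsHenselization (K.map π) ρ₀) (hπ : Function.Surjective π)
    (hρ : IsHenselization (K.map (algebraMap P R)) ρ)
    (hsurj : Function.Surjective (algebraMap P (R ⧸ K.map (algebraMap P R))))
    {β : H →+* B} (hβ : β.comp (ρ.comp (algebraMap P R)) = ρ₀.comp π) :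
    RingHom.ker β = (RingHom.ker π).map (ρ.comp (algebraMap P R)) := by
  set φ := ρ.comp (algebraMap P R)
  have := hρ.1
  let μ : H →+* H ⧸ (RingHom.ker π).map φ := Ideal.Quotient.mk _
  have hμ := henselianRing_map_of_surjective (J := (K.map (algebraMap P R)).map ρ) μ
    Ideal.Quotient.mk_surjective
  rw [Ideal.map_map, Ideal.map_map, RingHom.comp_assoc] at hμ
  have hle : RingHom.ker π ≤ RingHom.ker (μ.comp φ) := fun x hx ↦
    Ideal.Quotient.eq_zero_iff_mem.2 (Ideal.mem_map_of_mem φ hx)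
  let f : R₀ →+* H ⧸ (RingHom.ker π).map φ := π.liftOfSurjective hπ ⟨μ.comp φ, hle⟩
  have hf : f.comp π = μ.comp φ := π.liftOfRightInverse_comp _ _ ⟨μ.comp φ, hle⟩
  obtain ⟨g, hg, -⟩ := hρ₀.2 _ _ hμ f (by rw [Ideal.map_map, hf])
  have hgβ : g.comp β = μ := by
    have hP : (g.comp β).comp φ = μ.comp φ := by
      rw [RingHom.comp_assoc, hβ, ← RingHom.comp_assoc, hg, hf]
    exact hρ.ringHom_ext_of_finiteType hsurj (congrArg K.map hP).le hP
  refine le_antisymm (fun z hz ↦ Ideal.Quotient.eq_zero_iff_mem.1 ?_)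
    (Ideal.map_le_iff_le_comap.2 fun x hx ↦ ?_)
  · change μ z = 0
    rw [← hgβ, RingHom.comp_apply, RingHom.mem_ker.1 hz, map_zero]
  · refine (RingHom.congr_fun hβ x).trans ?_
    rw [RingHom.comp_apply, RingHom.mem_ker.1 hx, map_zero]

end IsHenselization

theorem IsHFormallySmooth.ker_le_map_pow {A B R H : Type u} [CommRing A] [CommRing B] [CommRing R]
    [CommRing H] [Algebra A B] [Algebra A R] {I : Ideal A}
    (hfs : IsHFormallySmooth (algebraMap A B) I) {ρ : R →+* H}
    (hρ : IsHenselization (I.map (algebraMap A R)) ρ) {τ : R →ₐ[A] B} {r : ℕ}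
    (hsurj : ∀ b, ∃ x, b - τ x ∈ (I ^ r).map (algebraMap A B))
    (hτ : (I.map (algebraMap A B)).comap τ ≤ I.map (algebraMap A R))
    {β : H →+* B} (hβ : β.comp ρ = τ) :
    RingHom.ker β ≤ (I ^ r).map (ρ.comp (algebraMap A R)) := by
  intro z hz
  obtain ⟨x, hx⟩ := hρ.exists_sub_mem_map_pow r z
  rw [← Ideal.map_pow, Ideal.map_map] at hx
  have hβx : β (ρ x) ∈ (I ^ r).map (algebraMap A B) := by
    have := Ideal.mem_map_of_mem β hx
    rwa [map_sub, RingHom.mem_ker.1 hz, zero_sub, neg_mem_iff, Ideal.map_map, ← RingHom.comp_assoc,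
      hβ, τ.comp_algebraMap] at this
  have hρx := Ideal.mem_map_of_mem ρ
    (hfs.comap_map_pow_le τ hsurj hτ ((RingHom.congr_fun hβ x) ▸ hβx))
  rw [Ideal.map_map] at hρx
  exact sub_add_cancel z (ρ x) ▸ add_mem hx hρx

end Presentation

section StructureTheorem

variable {A B R₀ : Type u} [CommRing A] [CommRing B] [CommRing R₀] [Algebra A B] {I : Ideal A}

theorem IsHFormallySmooth.exists_smooth_algHom (hfs : IsHFormallySmooth (algebraMap A B) I) {n : ℕ}
    [Algebra (MvPolynomial (Fin n) A) B] [IsScalarTower A (MvPolynomial (Fin n) A) B]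
    {π : MvPolynomial (Fin n) A →+* R₀} {ρ₀ : R₀ →+* B} (hπ : Function.Surjective π)
    (hfg : (RingHom.ker π).FG) (hB : ρ₀.comp π = algebraMap (MvPolynomial (Fin n) A) B)
    (hρ₀ : IsHenselization ((I.map (algebraMap A (MvPolynomial (Fin n) A))).map π) ρ₀) :
    ∃ (R : Type u) (_ : CommRing R) (_ : Algebra A R) (_ : Algebra (MvPolynomial (Fin n) A) R)
      (_ : IsScalarTower A (MvPolynomial (Fin n) A) R) (τ : R →ₐ[MvPolynomial (Fin n) A] B),
      Algebra.Smooth A R ∧ Algebra.FiniteType (MvPolynomial (Fin n) A) R ∧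
        (I.map (algebraMap A B)).comap τ ≤ I.map (algebraMap A R) := by
  let P := MvPolynomial (Fin n) A
  have hIB : (I.map (algebraMap A P)).map (algebraMap P B) = I.map (algebraMap A B) := by
    rw [Ideal.map_map, ← IsScalarTower.algebraMap_eq]
  have : HenselianRing B (I.map (algebraMap A B)) := by
    rw [← hIB, ← hB, ← Ideal.map_map]
    exact hρ₀.1
  have hJ : RingHom.ker π ≤ RingHom.ker (algebraMap P B) := by
    rw [← hB, ← RingHom.comap_ker]
    exact Ideal.comap_mono bot_le
  have hker := hρ₀.comap_map_comp_le hπ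
  have hsurj := hρ₀.exists_sub_comp_mem_map_pow hπ 1
  rw [hB, hIB] at hker
  rw [pow_one, hB, hIB] at hsurj
  have hsurj' := surjective_algebraMap_quotient hsurj
  obtain ⟨h, hs⟩ := hfs.exists_isConormalSplitting hJ hker hsurj'
  exact hs.exists_smooth_algHom hfg hJ hker hsurj'

theorem IsHFormallySmooth.exists_ringEquiv_quotient (hfs : IsHFormallySmooth (algebraMap A B) I)
    {P R H : Type u} [CommRing P] [CommRing R] [CommRing H] [Algebra A P] [Algebra A R]
    [Algebra P B] [Algebra P R] [IsScalarTower A P B] [IsScalarTower A P R]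
    [Algebra.FiniteType P R] {π : P →+* R₀} {ρ₀ : R₀ →+* B} {ρ : R →+* H}
    (hπ : Function.Surjective π) (hfg : (RingHom.ker π).FG) (hB : ρ₀.comp π = algebraMap P B)
    (hρ₀ : IsHenselization ((I.map (algebraMap A P)).map π) ρ₀)
    (hρ : IsHenselization (I.map (algebraMap A R)) ρ) (τ : R →ₐ[P] B)
    (hτ : (I.map (algebraMap A B)).comap τ ≤ I.map (algebraMap A R)) :
    ∃ J : Ideal H, J.FG ∧ (∀ r : ℕ, J ≤ (I ^ r).map (ρ.comp (algebraMap A R))) ∧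
      ∃ e : (H ⧸ J) ≃+* B,
        (e : (H ⧸ J) →+* B).comp
          ((Ideal.Quotient.mk J).comp (ρ.comp (algebraMap A R))) = algebraMap A B := by
  have hIB : (I.map (algebraMap A P)).map (algebraMap P B) = I.map (algebraMap A B) := by
    rw [Ideal.map_map, ← IsScalarTower.algebraMap_eq]
  have hIR : (I.map (algebraMap A P)).map (algebraMap P R) = I.map (algebraMap A R) := by
    rw [Ideal.map_map, ← IsScalarTower.algebraMap_eq]
  have hP (r : ℕ) (b : B) : ∃ p, b - τ (algebraMap P R p) ∈ (I ^ r).map (algebraMap A B) := by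
    obtain ⟨p, hp⟩ := hρ₀.exists_sub_comp_mem_map_pow hπ r b
    rw [hB, ← Ideal.map_pow, Ideal.map_map, ← IsScalarTower.algebraMap_eq] at hp
    exact ⟨p, (τ.commutes p).symm ▸ hp⟩
  have hRsurj : Function.Surjective
      (algebraMap P (R ⧸ (I.map (algebraMap A P)).map (algebraMap P R))) :=
    surjective_algebraMap_quotient fun x ↦ by
      obtain ⟨p, hp⟩ := hP 1 (τ x)
      rw [← map_sub, pow_one] at hp
      exact ⟨p, hIR ▸ hτ hp⟩
  have hτA : (τ : R →+* B).comp (algebraMap A R) = algebraMap A B :=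
    (τ.restrictScalars A).comp_algebraMap
  have hBhens := hρ₀.1
  rw [Ideal.map_map, hB, hIB] at hBhens
  obtain ⟨β, hβ, -⟩ := hρ.2 B _ hBhens τ (by rw [Ideal.map_map, hτA])
  have hβP : β.comp (ρ.comp (algebraMap P R)) = ρ₀.comp π := by
    rw [← RingHom.comp_assoc, hβ, hB, τ.comp_algebraMap]
  have hβA : β.comp (ρ.comp (algebraMap A R)) = algebraMap A B := by
    rw [← RingHom.comp_assoc, hβ, hτA]
  rw [← hIR] at hρ
  have : HenselianRing H ((I.map (algebraMap A P)).map (ρ.comp (algebraMap P R))) := by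
    rw [← Ideal.map_map]
    exact hρ.1
  refine ⟨RingHom.ker β, ?_, fun r ↦ ?_,
    RingHom.quotientKerEquivOfSurjective (hρ₀.surjective_of_comp_eq hπ hβP), hβA⟩
  · rw [hρ₀.ker_eq_map_ker hπ hρ hRsurj hβP]
    exact hfg.map _
  · exact hfs.ker_le_map_pow (hIR ▸ hρ) (τ := τ.restrictScalars A)
      (fun b ↦ have ⟨_, hp⟩ := hP r b; ⟨_, hp⟩) hτ hβ

theorem exists_smooth_henselization_quotient_of_isHFormallySmooth_general (I : Ideal A)
    (hhfp : IsHfp (algebraMap A B) I) (hfs : IsHFormallySmooth (algebraMap A B) I) :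
    ∃ (R : Type u) (_ : CommRing R) (_ : Algebra A R) (H : Type u) (_ : CommRing H)
      (ρ : R →+* H),
      Algebra.Smooth A R ∧
      IsHenselization (I.map (algebraMap A R)) ρ ∧
      ∃ J : Ideal H, J.FG ∧
        (∀ r : ℕ, 1 ≤ r → J ≤ (I ^ r).map (ρ.comp (algebraMap A R))) ∧
        ∃ e : (H ⧸ J) ≃+* B,
          (e : (H ⧸ J) →+* B).comp
            ((Ideal.Quotient.mk J).comp (ρ.comp (algebraMap A R))) = algebraMap A B := by
  obtain ⟨n, _, _, R₀, _, π, ρ₀, hπ, hfg, hB, hρ₀⟩ := hhfp.exists_mvPolynomial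
  obtain ⟨R, _, _, _, _, τ, hsmooth, _, hτ⟩ := hfs.exists_smooth_algHom hπ hfg hB hρ₀
  obtain ⟨H, _, ρ, hρ⟩ := exists_isHenselization (I.map (algebraMap A R))
  obtain ⟨J, hJfg, hJ, e, he⟩ := hfs.exists_ringEquiv_quotient hπ hfg hB hρ₀ hρ τ hτ
  exact ⟨R, _, _, H, _, ρ, hsmooth, hρ, J, hJfg, fun r _ ↦ hJ r, e, he⟩

end StructureTheorem

/-- Structure of h-formally smooth hfp algebras: such a `B` is the quotient of the
Henselization `H` of a smooth `A`-algebra `R` by a finitely generated ideal `J` contained in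
`⋂_{r ≥ 1} I^r·H`. -/
theorem exists_smooth_henselization_quotient_of_isHFormallySmooth
    {A B : Type u} [CommRing A] [CommRing B] [Algebra A B]
    (I : Ideal A) [HenselianRing A I]
    (hhfp : IsHfp (algebraMap A B) I)
    (hfs : IsHFormallySmooth (algebraMap A B) I) :
    ∃ (R : Type u) (_ : CommRing R) (_ : Algebra A R) (H : Type u) (_ : CommRing H)
      (ρ : R →+* H),
      Algebra.Smooth A R ∧
      IsHenselization (I.map (algebraMap A R)) ρ ∧
      ∃ J : Ideal H, J.FG ∧
        (∀ r : ℕ, 1 ≤ r → J ≤ (I ^ r).map (ρ.comp (algebraMap A R))) ∧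
        ∃ e : (H ⧸ J) ≃+* B,
          (e : (H ⧸ J) →+* B).comp
            ((Ideal.Quotient.mk J).comp (ρ.comp (algebraMap A R))) = algebraMap A B :=
  exists_smooth_henselization_quotient_of_isHFormallySmooth_general I hhfp hfs
end

section
/- Let (A, I) be a Henselian pair and let B be an A-algebra such that (B, I·B) is a Henselian pair. Then the following are equivalent: (i) B is hfp over A with respect to I, the map A → B is h-formally étale, and B is flat as an A-module; (ii) B is h-étale over A, i.e. there exist an étale A-algebra R and an A-algebra homomorphism R → B exhibiting B as a Henselization of the pair (R, I·R). -/
universe u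

/-!
Étale neighbourhoods of a pair `(R, K)` are étale `R`-algebras with the same Henselization. They
form a filtered category whose colimit is the Henselization, which is therefore flat over `R`.

A map into a ring in which `I` is nilpotent is a map to a Henselian pair, so `R` and its
Henselization `B` along `I·R` have the same lifting problems: `A → R` is h-formally étale if and
only if `A → B` is. An h-étale algebra is therefore h-formally étale, and it is flat as a
composition of flat maps.

Conversely, let `B` be the Henselization of a finitely presented `A`-algebra `R`. If `A → R` is
h-formally étale, then `R/IR` is unramified over `A`, so by Nakayama `R` is unramified at every
prime `q` of `V(IR)`. Such a `q` lifts to a prime `Q` of `B`, and `R_q → B_Q` is faithfully flat,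
so flatness of `A → B` descends to `A → R_q`. Flat and unramified is étale; hence the étale locus
is an open set containing `V(IR)`, so it contains some `D(f)` with `f ∈ 1 + IR`. The étale algebra
`R_f` has the same Henselization as `R`.
-/

open Polynomial TensorProduct CategoryTheory CategoryTheory.Limits

theorem existsUnique_ringHom_of_isPushout {R S R' S' C : Type*} [CommRing R] [CommRing S]
    [CommRing R'] [CommRing S'] [CommRing C] [Algebra R S] [Algebra R R'] [Algebra S S']
    [Algebra R' S'] [Algebra R S'] [IsScalarTower R S S'] [IsScalarTower R R' S']
    [Algebra.IsPushout R S R' S'] (g : S →+* C) (f : R' →+* C)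
    (h : g.comp (algebraMap R S) = f.comp (algebraMap R R')) :
    ∃! k : S' →+* C, k.comp (algebraMap S S') = g ∧ k.comp (algebraMap R' S') = f := by
  algebraize [f.comp (algebraMap R R')]
  let f' : R' →ₐ[R] C := { f with commutes' := fun _ ↦ rfl }
  let g' : S →ₐ[R] C := { g with commutes' := fun r ↦ congr($h r) }
  have hcomm (x y) : g' x * f' y = f' y * g' x := mul_comm _ _
  refine ⟨Algebra.pushoutDesc S' g' f' hcomm, ⟨?_, ?_⟩, ?_⟩
  · exact RingHom.ext (Algebra.pushoutDesc_left S' g' f' hcomm)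
  · exact RingHom.ext (Algebra.pushoutDesc_right S' g' f' hcomm)
  · rintro k ⟨hkg, hkf⟩
    let k' : S' →ₐ[R] C := { k with
      commutes' := fun r ↦ by
        rw [IsScalarTower.algebraMap_apply R R' S']
        exact congr($hkf (algebraMap R R' r)) }
    have hk' : k' = Algebra.pushoutDesc S' g' f' hcomm := by
      apply Algebra.IsPushout.algHom_ext (R := R) (S := S) (R' := R')
      · rw [Algebra.lift_algHom_comp_right]
        exact AlgHom.ext fun x ↦ congr($hkf x)
      · rw [Algebra.lift_algHom_comp_left]
        exact AlgHom.ext fun x ↦ congr($hkg x)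
    exact congr(RingHomClass.toRingHom $hk')

theorem henselianRing_of_isNilpotent {C : Type*} [CommRing C] {J : Ideal C} (hJ : IsNilpotent J) :
    HenselianRing C J := by
  obtain ⟨n, hn⟩ := hJ
  have : IsAdicComplete J C :=
    { haus' x hx := by simpa [hn, SModEq.bot] using hx n
      prec' x hx := ⟨x n, fun m ↦ by
        obtain hm | hm := le_total m n
        · exact hx hm
        · have h : x n = x m := by simpa [hn, SModEq.bot] using hx hm
          rw [h]⟩ }
  infer_instance

section HenselEquiv

variable {R S T : Type u} [CommRing R] [CommRing S] [CommRing T] {K : Ideal R}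

/-- `ρ : R →+* S` is a *Hensel equivalence* along `K` if maps from `(R, K)` to Henselian pairs
extend uniquely along `ρ`, i.e. if `ρ` identifies the Henselizations of `(R, K)` and `(S, K·S)`.
A Henselization is a Hensel equivalence to a Henselian pair. -/
def IsHenselEquiv (K : Ideal R) (ρ : R →+* S) : Prop :=
  ∀ (C : Type u) [CommRing C] (J : Ideal C), HenselianRing C J →
    ∀ f : R →+* C, K.map f ≤ J → ∃! g : S →+* C, g.comp ρ = f

theorem isHenselization_iff {ρ : R →+* S} :
    IsHenselization K ρ ↔ HenselianRing S (K.map ρ) ∧ IsHenselEquiv K ρ :=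
  Iff.rfl

theorem IsHenselization.isHenselEquiv {ρ : R →+* S} (h : IsHenselization K ρ) :
    IsHenselEquiv K ρ :=
  h.2

namespace IsHenselEquiv

theorem refl (K : Ideal R) : IsHenselEquiv K (RingHom.id R) :=
  fun _ _ _ _ f _ ↦ ⟨f, rfl, fun _ hg ↦ hg⟩

theorem of_equiv (K : Ideal R) (e : R ≃+* S) : IsHenselEquiv K (e : R →+* S) := by
  refine fun C _ J _ f _ ↦ ⟨f.comp e.symm, ?_, fun g hg ↦ ?_⟩
  · ext; simp
  · ext; simp [← hg]

theorem comp {ρ : R →+* S} {σ : S →+* T} (hσ : IsHenselEquiv (K.map ρ) σ)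
    (hρ : IsHenselEquiv K ρ) : IsHenselEquiv K (σ.comp ρ) := by
  intro C _ J hJ f hf
  obtain ⟨g, rfl, hg⟩ := hρ C J hJ f hf
  obtain ⟨h, rfl, hh⟩ := hσ C J hJ g (by rwa [Ideal.map_map])
  exact ⟨h, rfl, fun h' hh' ↦ hh h' (hg _ hh')⟩

theorem of_comp {ρ : R →+* S} {σ : S →+* T} (h : IsHenselEquiv K (σ.comp ρ))
    (hρ : IsHenselEquiv K ρ) : IsHenselEquiv (K.map ρ) σ := by
  intro C _ J hJ f hf
  rw [Ideal.map_map] at hf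
  obtain ⟨g, hg, hg'⟩ := h C J hJ (f.comp ρ) hf
  refine ⟨g, (hρ C J hJ (f.comp ρ) hf).unique hg rfl, ?_⟩
  rintro k rfl
  exact hg' k rfl

theorem baseChange {R' S' : Type u} [CommRing R'] [CommRing S'] [Algebra R S] [Algebra R R']
    [Algebra S S'] [Algebra R' S'] [Algebra R S'] [IsScalarTower R S S'] [IsScalarTower R R' S']
    [Algebra.IsPushout R S R' S'] (h : IsHenselEquiv K (algebraMap R S)) :
    IsHenselEquiv (K.map (algebraMap R R')) (algebraMap R' S') := by
  intro C _ J hJ f hf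
  rw [Ideal.map_map] at hf
  obtain ⟨g, hg, hg'⟩ := h C J hJ _ hf
  obtain ⟨k, ⟨-, hk⟩, hk'⟩ := existsUnique_ringHom_of_isPushout (S' := S') g f hg
  refine ⟨k, hk, fun l hl ↦ hk' l ⟨hg' _ ?_, hl⟩⟩
  change (l.comp _).comp _ = f.comp _
  rw [← hl, RingHom.comp_assoc, RingHom.comp_assoc, ← IsScalarTower.algebraMap_eq,
    ← IsScalarTower.algebraMap_eq]

theorem away [Algebra R S] (r : R) [IsLocalization.Away r S] (hr : r - 1 ∈ K) :
    IsHenselEquiv K (algebraMap R S) := by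
  intro C _ J hJ f hf
  have hunit : IsUnit (f r) := by
    have := isLocalHom_of_le_jacobson_bot J hJ.jac
    refine isUnit_of_map_unit (Ideal.Quotient.mk J) _ ?_
    have hfr : f r - 1 ∈ J := by simpa using hf (Ideal.mem_map_of_mem f hr)
    rw [Ideal.Quotient.eq.mpr hfr, map_one]
    exact isUnit_one
  refine ⟨IsLocalization.Away.lift r hunit, IsLocalization.Away.lift_comp r hunit, fun g hg ↦ ?_⟩
  exact IsLocalization.ringHom_ext (.powers r) (by rw [hg, IsLocalization.Away.lift_comp])

theorem mem_of_map_mem {ρ : R →+* S} (h : IsHenselEquiv K ρ) {x : R} (hx : ρ x ∈ K.map ρ) :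
    x ∈ K := by
  obtain ⟨g, hg, -⟩ := h (R ⧸ K) ⊥ (henselianRing_of_isNilpotent ⟨1, pow_one _⟩)
    (Ideal.Quotient.mk K) (Ideal.map_quotient_self K).le
  have hgx : g (ρ x) ∈ (K.map ρ).map g := Ideal.mem_map_of_mem g hx
  rwa [Ideal.map_map, hg, Ideal.map_quotient_self, Ideal.mem_bot, ← RingHom.comp_apply, hg,
    Ideal.Quotient.eq_zero_iff_mem] at hgx

theorem exists_liesOver [Algebra R S] (h : IsHenselEquiv K (algebraMap R S)) (q : Ideal R)
    [q.IsPrime] (hq : K ≤ q) : ∃ Q : Ideal S, Q.IsPrime ∧ Q.LiesOver q := by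
  have hK : K.map (algebraMap R q.ResidueField) = ⊥ := by
    rwa [Ideal.map_eq_bot_iff_le_ker, Ideal.ker_algebraMap_residueField]
  obtain ⟨g, hg, -⟩ := h q.ResidueField ⊥ (henselianRing_of_isNilpotent ⟨1, pow_one _⟩)
    (algebraMap R q.ResidueField) hK.le
  refine ⟨RingHom.ker g, RingHom.ker_isPrime g, ⟨?_⟩⟩
  rw [Ideal.under_def, RingHom.comap_ker, hg, Ideal.ker_algebraMap_residueField]

end IsHenselEquiv

end HenselEquiv

section SimpleRootPair

variable {R S : Type*} [CommRing R] [CommRing S]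

/-- The standard étale algebra adjoining to `R` the root of `f` close to the approximate root `a`.
Writing `f = f(a) + (X - a) q`, it is `R[X]/(f)` localized at `f' q`: inverting `q` singles out the
root congruent to `a` modulo `f(a)`, and inverting `f'` makes it simple. -/
noncomputable def simpleRootPair {f : R[X]} (hf : f.Monic) (a : R) : StandardEtalePair R where
  f := f
  monic_f := hf
  g := derivative f * (f /ₘ (X - C a))
  cond := ⟨f /ₘ (X - C a), 0, 1, by ring⟩

theorem simpleRootPair_map {f : R[X]} (hf : f.Monic) (a : R) (φ : R →+* S) :
    (simpleRootPair hf a).map φ = simpleRootPair (hf.map φ) (φ a) := by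
  simp [simpleRootPair, StandardEtalePair.map, map_divByMonic, monic_X_sub_C, derivative_map]

theorem eval_divByMonic_X_sub_C_self (f : R[X]) (a : R) :
    (f /ₘ (X - C a)).eval a = f.derivative.eval a := by
  have h := congr((derivative $(X_sub_C_mul_divByMonic_eq_sub_modByMonic f a)).eval a)
  simpa using h

theorem dvd_sub_of_simpleRootPair_hasMap [Algebra R S] {f : R[X]} {hf : f.Monic} {a : R} {y : S}
    (hy : (simpleRootPair hf a).HasMap y) :
    algebraMap R S (f.eval a) ∣ y - algebraMap R S a := by
  obtain ⟨hroot, hunit⟩ := hy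
  have hq : IsUnit (aeval y (f /ₘ (X - C a))) :=
    isUnit_of_mul_isUnit_right (by simpa [simpleRootPair] using hunit)
  have h : (y - algebraMap R S a) * aeval y (f /ₘ (X - C a)) = -algebraMap R S (f.eval a) := by
    have := congr(aeval y $(X_sub_C_mul_divByMonic_eq_sub_modByMonic f a))
    have hroot' : aeval y f = 0 := hroot
    simpa [hroot', modByMonic_X_sub_C_eq_C_eval] using this
  rw [← hq.dvd_mul_right, h, dvd_neg]

variable {J : Ideal R}

-- Taylor expansion: `f(y) = f(x) + (y - x) (f'(x) + c (y - x))`, and the last factor is a unit.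
theorem eq_of_eval_eq_zero_of_sub_mem (hJ : J ≤ Ideal.jacobson ⊥) {f : R[X]} {x y : R}
    (hx : f.eval x = 0) (hy : f.eval y = 0) (hyx : y - x ∈ J)
    (hu : IsUnit (f.derivative.eval x)) : x = y := by
  obtain ⟨c, hc⟩ := exists_mul_sq_add_linear_part_eq_eval_add f x (y - x)
  have hmul : (f.derivative.eval x + c * (y - x)) * (y - x) = 0 := by grind
  have hunit : IsUnit (f.derivative.eval x + c * (y - x)) := by
    have := isLocalHom_of_le_jacobson_bot J hJ
    refine isUnit_of_map_unit (Ideal.Quotient.mk J) _ ?_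
    rw [map_add, Ideal.Quotient.eq_zero_iff_mem.mpr (J.mul_mem_left c hyx), add_zero]
    exact hu.map _
  exact (sub_eq_zero.mp (hunit.mul_right_eq_zero.mp hmul)).symm

theorem existsUnique_simpleRootPair_hasMap [HenselianRing R J] {f : R[X]} (hf : f.Monic) {a : R}
    (ha : f.eval a ∈ J) (hu : IsUnit (Ideal.Quotient.mk J (f.derivative.eval a))) :
    ∃! y : R, (simpleRootPair hf a).HasMap y := by
  have hJ : J ≤ Ideal.jacobson ⊥ := HenselianRing.jac
  obtain ⟨y, hy, hya⟩ := HenselianRing.is_henselian f hf a ha hu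
  refine ⟨y, ⟨by simpa [simpleRootPair] using hy, ?_⟩, fun z hz ↦ ?_⟩
  · have := isLocalHom_of_le_jacobson_bot J hJ
    have heval (p : R[X]) : Ideal.Quotient.mk J (p.eval y) = Ideal.Quotient.mk J (p.eval a) :=
      Ideal.Quotient.eq.mpr (Ideal.mem_of_dvd _ (sub_dvd_eval_sub y a p) hya)
    refine isUnit_of_map_unit (Ideal.Quotient.mk J) _ ?_
    simpa [simpleRootPair, heval, eval_divByMonic_X_sub_C_self] using hu
  · have hza : z - a ∈ J := Ideal.mem_of_dvd J (dvd_sub_of_simpleRootPair_hasMap hz) ha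
    refine eq_of_eval_eq_zero_of_sub_mem hJ (f := f) (by simpa [simpleRootPair] using hz.1) hy
      (by simpa using J.sub_mem hya hza) ?_
    simpa [simpleRootPair] using hz.isUnit_derivative_f

end SimpleRootPair

theorem IsHenselEquiv.of_standardEtalePresentation {R S : Type u} [CommRing R] [CommRing S]
    [Algebra R S] {K : Ideal R} (P : StandardEtalePresentation R S) {f : R[X]} {hf : f.Monic}
    {a : R} (hP : P.P = simpleRootPair hf a) (ha : f.eval a ∈ K)
    (hu : IsUnit (Ideal.Quotient.mk K (f.derivative.eval a))) :
    IsHenselEquiv K (algebraMap R S) := by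
  intro C _ J _ φ hφ
  algebraize [φ]
  have hu' : IsUnit (Ideal.Quotient.mk J ((f.map φ).derivative.eval (φ a))) := by
    rw [derivative_map, eval_map_apply]
    exact hu.map (Ideal.quotientMap J φ (Ideal.map_le_iff_le_comap.mp hφ))
  obtain ⟨y, hy, hy'⟩ := existsUnique_simpleRootPair_hasMap (hf.map φ)
    (by rw [eval_map_apply]; exact hφ (Ideal.mem_map_of_mem φ ha)) hu'
  have hmap (z : C) : (simpleRootPair (hf.map φ) (φ a)).HasMap z ↔ P.P.HasMap z := by
    rw [← simpleRootPair_map hf, hP]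
    simp [StandardEtalePair.HasMap, ← RingHom.algebraMap_toAlgebra φ]
  let g : S →ₐ[R] C := (P.lift y ((hmap y).mp hy)).comp P.equivRing
  refine ⟨g, g.comp_algebraMap, fun k hk ↦ ?_⟩
  let k' : S →ₐ[R] C := { k with commutes' := fun r ↦ congr($hk r) }
  have hk' : k' = g := P.hom_ext <| by
    rw [hy' _ ((hmap _).mpr (P.hasMap.map k'))]
    simp [g]
  exact congr(RingHomClass.toRingHom $hk')

section EtaleNhd

variable {R S T : Type u} [CommRing R] [CommRing S] [CommRing T] [Algebra R S] [Algebra R T]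
  {K : Ideal R}

/-- `S` is an étale neighbourhood of the pair `(R, K)`: an étale `R`-algebra with the same
Henselization along `K` as `R`. The last condition replaces the usual requirement that
`R/K → S/KS` is bijective; it makes the permanence properties formal. -/
structure IsEtaleNhd (K : Ideal R) (S : Type u) [CommRing S] [Algebra R S] : Prop where
  etale : Algebra.Etale R S
  henselEquiv : IsHenselEquiv K (algebraMap R S)

namespace IsEtaleNhd

theorem refl (K : Ideal R) : IsEtaleNhd K R :=
  ⟨inferInstance, .refl K⟩

theorem of_equiv (h : IsEtaleNhd K S) (e : S ≃ₐ[R] T) : IsEtaleNhd K T where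
  etale := have := h.etale; .of_equiv e
  henselEquiv := by
    have he : (e : S →+* T).comp (algebraMap R S) = algebraMap R T := e.toAlgHom.comp_algebraMap
    rw [← he]
    exact (IsHenselEquiv.of_equiv _ e.toRingEquiv).comp h.henselEquiv

theorem trans [Algebra S T] [IsScalarTower R S T] (h : IsEtaleNhd K S)
    (h' : IsEtaleNhd (K.map (algebraMap R S)) T) : IsEtaleNhd K T where
  etale := have := h.etale; have := h'.etale; .comp R S T
  henselEquiv := by
    rw [IsScalarTower.algebraMap_eq R S T]
    exact h'.henselEquiv.comp h.henselEquiv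

theorem of_isScalarTower [Algebra S T] [IsScalarTower R S T] (hS : IsEtaleNhd K S)
    (hT : IsEtaleNhd K T) : IsEtaleNhd (K.map (algebraMap R S)) T where
  etale := have := hS.etale; have := hT.etale; .of_restrictScalars R S T
  henselEquiv := by
    have h := hT.henselEquiv
    rw [IsScalarTower.algebraMap_eq R S T] at h
    exact h.of_comp hS.henselEquiv

theorem tensorProduct_left (h : IsEtaleNhd K S) :
    IsEtaleNhd (K.map (algebraMap R T)) (T ⊗[R] S) where
  etale := have := h.etale; inferInstance
  henselEquiv :=
    let _ := Algebra.TensorProduct.rightAlgebra (R := R) (A := T) (B := S)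
    h.henselEquiv.baseChange

theorem tensorProduct (hS : IsEtaleNhd K S) (hT : IsEtaleNhd K T) : IsEtaleNhd K (S ⊗[R] T) :=
  hS.trans hT.tensorProduct_left

-- The coequalizer of `f, g : S → T` is the base change of `S ⊗ S → S` along `S ⊗ S → T`.
theorem exists_coequalizing (hS : IsEtaleNhd K S) (hT : IsEtaleNhd K T) (f g : S →ₐ[R] T) :
    ∃ (U : Type u) (_ : CommRing U) (_ : Algebra R U) (φ : T →ₐ[R] U),
      IsEtaleNhd K U ∧ φ.comp f = φ.comp g := by
  algebraize [(Algebra.TensorProduct.productMap f g).toRingHom,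
    (Algebra.TensorProduct.lmul' R (S := S)).toRingHom]
  have : IsScalarTower R (S ⊗[R] S) T := .of_algHom (Algebra.TensorProduct.productMap f g)
  have : IsScalarTower R (S ⊗[R] S) S := .of_algHom (Algebra.TensorProduct.lmul' R)
  have hU : IsEtaleNhd (K.map (algebraMap R T)) (T ⊗[S ⊗[R] S] S) := by
    have h := ((hS.tensorProduct hS).of_isScalarTower hS).tensorProduct_left (T := T)
    rwa [Ideal.map_map, ← IsScalarTower.algebraMap_eq] at h
  refine ⟨T ⊗[S ⊗[R] S] S, inferInstance, inferInstance, IsScalarTower.toAlgHom R T _,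
    hT.trans hU, AlgHom.ext fun s ↦ ?_⟩
  have hf : algebraMap (S ⊗[R] S) T (s ⊗ₜ 1) = f s := by
    simp [RingHom.algebraMap_toAlgebra]
  have hg : algebraMap (S ⊗[R] S) T (1 ⊗ₜ s) = g s := by
    simp [RingHom.algebraMap_toAlgebra]
  have hmul (x) : algebraMap T (T ⊗[S ⊗[R] S] S) (algebraMap (S ⊗[R] S) T x) =
      1 ⊗ₜ algebraMap (S ⊗[R] S) S x := by
    rw [← IsScalarTower.algebraMap_apply, Algebra.algebraMap_eq_smul_one,
      Algebra.algebraMap_eq_smul_one, Algebra.TensorProduct.one_def, TensorProduct.tmul_smul]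
  simp only [AlgHom.comp_apply, IsScalarTower.toAlgHom_apply, ← hf, ← hg, hmul]
  simp [RingHom.algebraMap_toAlgebra]

end IsEtaleNhd

/-- The étale neighbourhoods of `(R, K)`, presented as quotients of polynomial rings so that they
form a small category. -/
structure EtaleNhd (K : Ideal R) : Type u where
  numGenerators : ℕ
  relations : Ideal (MvPolynomial (Fin numGenerators) R)
  isEtaleNhd_quotient : IsEtaleNhd K (MvPolynomial (Fin numGenerators) R ⧸ relations)

namespace EtaleNhd

/-- The algebra underlying an étale neighbourhood. -/
def Ring (i : EtaleNhd K) : Type u :=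
  MvPolynomial (Fin i.numGenerators) R ⧸ i.relations

noncomputable instance (i : EtaleNhd K) : CommRing i.Ring :=
  inferInstanceAs (CommRing (MvPolynomial (Fin i.numGenerators) R ⧸ i.relations))

noncomputable instance (i : EtaleNhd K) : Algebra R i.Ring :=
  inferInstanceAs (Algebra R (MvPolynomial (Fin i.numGenerators) R ⧸ i.relations))

theorem isEtaleNhd (i : EtaleNhd K) : IsEtaleNhd K i.Ring :=
  i.isEtaleNhd_quotient

/-- A morphism of étale neighbourhoods, wrapping an algebra map so that it is not confused with a
categorical arrow. -/
@[ext]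
structure Hom (i j : EtaleNhd K) : Type u where
  toAlgHom : i.Ring →ₐ[R] j.Ring

noncomputable instance : SmallCategory.{u} (EtaleNhd K) where
  Hom i j := Hom i j
  id i := ⟨AlgHom.id R i.Ring⟩
  comp f g := ⟨g.toAlgHom.comp f.toAlgHom⟩

theorem exists_algEquiv (h : IsEtaleNhd K S) : ∃ i : EtaleNhd K, Nonempty (i.Ring ≃ₐ[R] S) := by
  have := h.etale
  obtain ⟨n, f, hf⟩ := Algebra.FiniteType.iff_quotient_mvPolynomial''.mp
    (inferInstance : Algebra.FiniteType R S)
  let e := Ideal.quotientKerAlgEquivOfSurjective hf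
  exact ⟨⟨n, RingHom.ker f, h.of_equiv e.symm⟩, ⟨e⟩⟩

instance : Nonempty (EtaleNhd K) :=
  (exists_algEquiv (IsEtaleNhd.refl K)).nonempty

instance : IsFiltered (EtaleNhd K) where
  cocone_objs i j := by
    obtain ⟨k, ⟨e⟩⟩ := exists_algEquiv (i.isEtaleNhd.tensorProduct j.isEtaleNhd)
    exact ⟨k, ⟨e.symm.toAlgHom.comp Algebra.TensorProduct.includeLeft⟩,
      ⟨e.symm.toAlgHom.comp Algebra.TensorProduct.includeRight⟩, trivial⟩
  cocone_maps i j f g := by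
    obtain ⟨U, _, _, φ, hU, h⟩ :=
      i.isEtaleNhd.exists_coequalizing j.isEtaleNhd f.toAlgHom g.toAlgHom
    obtain ⟨k, ⟨e⟩⟩ := exists_algEquiv hU
    refine ⟨k, ⟨e.symm.toAlgHom.comp φ⟩, Hom.ext ?_⟩
    change (e.symm.toAlgHom.comp φ).comp f.toAlgHom = (e.symm.toAlgHom.comp φ).comp g.toAlgHom
    rw [AlgHom.comp_assoc, h, AlgHom.comp_assoc]

variable (K) in
/-- The diagram of rings underlying the étale neighbourhoods of `(R, K)`. -/
noncomputable def toCommRingCat : EtaleNhd K ⥤ CommRingCat.{u} where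
  obj i := CommRingCat.of i.Ring
  map f := CommRingCat.ofHom f.toAlgHom.toRingHom

end EtaleNhd

end EtaleNhd

section Henselization

variable {R : Type u} [CommRing R]

/-- The Henselization of `(R, K)`, constructed as the filtered colimit of its étale
neighbourhoods. -/
def Henselization (K : Ideal R) : Type u :=
  (colimit (EtaleNhd.toCommRingCat K) : CommRingCat.{u})

namespace Henselization

variable {K : Ideal R}

noncomputable instance : CommRing (Henselization K) :=
  inferInstanceAs (CommRing (colimit (EtaleNhd.toCommRingCat K) : CommRingCat.{u}))

/-- The map from a stage of the colimit, before `Henselization K` is known to be an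
`R`-algebra. -/
noncomputable def ofStageRingHom (i : EtaleNhd K) : i.Ring →+* Henselization K :=
  (colimit.ι (EtaleNhd.toCommRingCat K) i).hom

theorem ofStageRingHom_comp {i j : EtaleNhd K} (φ : i ⟶ j) (x : i.Ring) :
    ofStageRingHom j (φ.toAlgHom x) = ofStageRingHom i x :=
  congr($(colimit.w (EtaleNhd.toCommRingCat K) φ).hom x)

noncomputable instance : Algebra R (Henselization K) :=
  ((ofStageRingHom (Classical.arbitrary (EtaleNhd K))).comp (algebraMap R _)).toAlgebra

/-- The map from an étale neighbourhood to the Henselization. -/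
noncomputable def ofStage (i : EtaleNhd K) : i.Ring →ₐ[R] Henselization K where
  __ := ofStageRingHom i
  commutes' r := by
    obtain ⟨k, f, g, -⟩ := IsFilteredOrEmpty.cocone_objs i (Classical.arbitrary (EtaleNhd K))
    calc ofStageRingHom i (algebraMap R i.Ring r)
      _ = ofStageRingHom k (algebraMap R k.Ring r) := by
        rw [← ofStageRingHom_comp f, AlgHom.commutes]
      _ = algebraMap R (Henselization K) r := by
        rw [← AlgHom.commutes g.toAlgHom, ofStageRingHom_comp]
        rfl

theorem ofStage_comp {i j : EtaleNhd K} (φ : i.Ring →ₐ[R] j.Ring) :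
    (ofStage j).comp φ = ofStage i :=
  AlgHom.ext (ofStageRingHom_comp (K := K) ⟨φ⟩)

theorem exists_ofStage_eq (x : Henselization K) :
    ∃ (i : EtaleNhd K) (y : i.Ring), ofStage i y = x :=
  Concrete.colimit_exists_rep (EtaleNhd.toCommRingCat K) x

theorem exists_eq_of_ofStage_eq {i : EtaleNhd K} {x y : i.Ring} (h : ofStage i x = ofStage i y) :
    ∃ (j : EtaleNhd K) (φ : i.Ring →ₐ[R] j.Ring), φ x = φ y := by
  obtain ⟨j, φ, hφ⟩ := ((colimit.isColimit (EtaleNhd.toCommRingCat K)).eq_iff' (i := i) x y).mp h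
  exact ⟨j, φ.toAlgHom, hφ⟩

theorem exists_subset_range_ofStage (s : Finset (Henselization K)) :
    ∃ i : EtaleNhd K, (s : Set (Henselization K)) ⊆ (ofStage i).range := by
  choose i y hy using exists_ofStage_eq (K := K)
  classical
  obtain ⟨k, hk⟩ := IsFiltered.sup_objs_exists (s.image i)
  refine ⟨k, fun x hx ↦ ?_⟩
  obtain ⟨φ⟩ := hk (Finset.mem_image_of_mem i hx)
  exact ⟨φ.toAlgHom (y x), congr($(ofStage_comp φ.toAlgHom) (y x)).trans (hy x)⟩

theorem ringHom_ext {C : Type*} [CommRing C] {f g : Henselization K →+* C}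
    (h : ∀ i : EtaleNhd K, f.comp (ofStage i : i.Ring →+* _) = g.comp (ofStage i : i.Ring →+* _)) :
    f = g := by
  ext x
  obtain ⟨i, y, rfl⟩ := exists_ofStage_eq x
  exact congr($(h i) y)

theorem exists_desc {C : Type u} [CommRing C] (g : ∀ i : EtaleNhd K, i.Ring →+* C)
    (hg : ∀ (i j : EtaleNhd K) (φ : i ⟶ j), (g j).comp (φ.toAlgHom : i.Ring →+* j.Ring) = g i) :
    ∃ G : Henselization K →+* C, ∀ i, G.comp (ofStage i : i.Ring →+* _) = g i := by
  let c : Cocone (EtaleNhd.toCommRingCat K) :=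
    { pt := CommRingCat.of C
      ι.app i := CommRingCat.ofHom (g i)
      ι.naturality i j φ := CommRingCat.hom_ext (hg i j φ) }
  exact ⟨(colimit.desc _ c).hom, fun i ↦ congr(($(colimit.ι_desc c i)).hom)⟩

theorem isHenselEquiv (K : Ideal R) : IsHenselEquiv K (algebraMap R (Henselization K)) := by
  intro C _ J hJ f hf
  choose g hg hg' using fun i : EtaleNhd K ↦ i.isEtaleNhd.henselEquiv C J hJ f hf
  have hcompat (i j : EtaleNhd K) (φ : i ⟶ j) : (g j).comp (φ.toAlgHom : i.Ring →+* j.Ring) = g i :=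
    hg' i _ <| by
      change ((g j).comp _).comp _ = f
      rw [RingHom.comp_assoc, AlgHom.comp_algebraMap]
      exact hg j
  obtain ⟨G, hG⟩ := exists_desc g hcompat
  refine ⟨G, ?_, fun G' hG' ↦ ringHom_ext fun i ↦ ?_⟩
  · change G.comp _ = f
    rw [← (ofStage (Classical.arbitrary (EtaleNhd K))).comp_algebraMap, ← RingHom.comp_assoc, hG]
    exact hg _
  · rw [hG]
    refine hg' i _ ?_
    change (G'.comp _).comp _ = f
    rw [RingHom.comp_assoc, AlgHom.comp_algebraMap]
    exact hG'

instance : Module.Flat R (Henselization K) := by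
  refine Module.Flat.iff_forall_isTrivialRelation.mpr fun {l f x} h ↦ ?_
  classical
  obtain ⟨i, hi⟩ := exists_subset_range_ofStage (Finset.univ.image x)
  have hx (k) : ∃ y : i.Ring, ofStage i y = x k := hi (by simp)
  choose y hy using hx
  have hsum : ofStage i (∑ k, f k • y k) = ofStage i 0 := by
    simp only [map_sum, map_smul, hy, h, map_zero]
  obtain ⟨j, φ, hφ⟩ := exists_eq_of_ofStage_eq hsum
  simp only [map_sum, map_smul, map_zero] at hφ
  have := j.isEtaleNhd.etale
  have hflat : Module.Flat R j.Ring := inferInstance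
  have htriv : Module.IsTrivialRelation f fun k ↦ φ (y k) :=
    hflat.isTrivialRelation_of_sum_smul_eq_zero hφ
  obtain ⟨m, a, z, hz, ha⟩ := htriv
  refine ⟨m, a, fun t ↦ ofStage j (z t), fun k ↦ ?_, ha⟩
  have hzk : φ (y k) = _ := hz k
  rw [← hy, ← ofStage_comp φ, AlgHom.comp_apply, hzk]
  simp only [map_sum, map_smul]

theorem isHenselEquiv_ofStage (i : EtaleNhd K) :
    IsHenselEquiv (K.map (algebraMap R i.Ring)) (ofStage i : i.Ring →+* Henselization K) := by
  refine IsHenselEquiv.of_comp ?_ i.isEtaleNhd.henselEquiv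
  rw [AlgHom.comp_algebraMap]
  exact isHenselEquiv K

theorem mem_of_ofStage_mem {i : EtaleNhd K} {x : i.Ring}
    (hx : ofStage i x ∈ K.map (algebraMap R (Henselization K))) :
    x ∈ K.map (algebraMap R i.Ring) := by
  refine (isHenselEquiv_ofStage i).mem_of_map_mem ?_
  rwa [Ideal.map_map, AlgHom.comp_algebraMap]

theorem exists_extend_ofStage (i : EtaleNhd K) {T : Type u} [CommRing T] [Algebra i.Ring T]
    (hT : IsEtaleNhd (K.map (algebraMap R i.Ring)) T) :
    ∃ σ : T →+* Henselization K, σ.comp (algebraMap i.Ring T) = ofStage i := by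
  algebraize [(algebraMap i.Ring T).comp (algebraMap R i.Ring)]
  have : IsScalarTower R i.Ring T := .of_algebraMap_eq' rfl
  obtain ⟨j, ⟨e⟩⟩ := EtaleNhd.exists_algEquiv (i.isEtaleNhd.trans hT)
  refine ⟨(ofStage j).comp e.symm.toAlgHom, ?_⟩
  exact congr(RingHomClass.toRingHom
    $(ofStage_comp (e.symm.toAlgHom.comp (IsScalarTower.toAlgHom R i.Ring T))))

theorem isUnit_of_sub_one_mem {x : Henselization K}
    (hx : x - 1 ∈ K.map (algebraMap R (Henselization K))) : IsUnit x := by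
  obtain ⟨i, t, rfl⟩ := exists_ofStage_eq x
  have ht : t - 1 ∈ K.map (algebraMap R i.Ring) := mem_of_ofStage_mem (by simpa using hx)
  obtain ⟨σ, hσ⟩ := exists_extend_ofStage i (T := Localization.Away t)
    ⟨.of_isLocalizationAway t, .away t ht⟩
  have hσt : σ (algebraMap _ _ t) = ofStage i t := congr($hσ t)
  exact hσt ▸ (IsLocalization.Away.algebraMap_isUnit t).map σ

theorem exists_stage_of_monic {f : (Henselization K)[X]} (hf : f.Monic) (a b : Henselization K) :
    ∃ (i : EtaleNhd K) (f₀ : i.Ring[X]) (a₀ b₀ : i.Ring), f₀.Monic ∧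
      f₀.map (ofStage i : i.Ring →+* Henselization K) = f ∧ ofStage i a₀ = a ∧
        ofStage i b₀ = b := by
  classical
  obtain ⟨i, hi⟩ := exists_subset_range_ofStage (f.coeffs ∪ {a, b})
  have hlift : f ∈ lifts (ofStage i : i.Ring →+* Henselization K) :=
    (lifts_iff_coeffs_subset_range f).mpr fun c hc ↦ hi (by simp [Finset.mem_coe.mp hc])
  obtain ⟨f₀, hf₀, -, hmonic⟩ := lifts_and_natDegree_eq_and_monic hlift hf
  obtain ⟨a₀, ha₀⟩ := hi (by simp : a ∈ _)
  obtain ⟨b₀, hb₀⟩ := hi (by simp : b ∈ _)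
  exact ⟨i, f₀, a₀, b₀, hmonic, hf₀, ha₀, hb₀⟩

theorem exists_root_sub_mem {f : (Henselization K)[X]} (hf : f.Monic) {a : Henselization K}
    (ha : f.eval a ∈ K.map (algebraMap R (Henselization K)))
    (hu : IsUnit (Ideal.Quotient.mk (K.map (algebraMap R (Henselization K)))
      (f.derivative.eval a))) :
    ∃ y, f.IsRoot y ∧ y - a ∈ K.map (algebraMap R (Henselization K)) := by
  obtain ⟨b', hb'⟩ := hu.exists_right_inv
  obtain ⟨b, rfl⟩ := Ideal.Quotient.mk_surjective b'
  rw [← map_mul, ← map_one (Ideal.Quotient.mk _), Ideal.Quotient.eq] at hb'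
  obtain ⟨i, f, a, b, hmonic, rfl, rfl, rfl⟩ := exists_stage_of_monic hf a b
  have heval (p : i.Ring[X]) : (p.map (ofStage i : i.Ring →+* Henselization K)).eval (ofStage i a) =
      ofStage i (p.eval a) := eval_map_apply (f := (ofStage i : i.Ring →+* Henselization K)) a
  rw [derivative_map, heval, ← map_mul, ← map_one (ofStage i), ← map_sub] at hb'
  rw [heval] at ha
  have hb : f.derivative.eval a * b - 1 ∈ K.map (algebraMap R i.Ring) := mem_of_ofStage_mem hb'
  have hunit : IsUnit (Ideal.Quotient.mk (K.map (algebraMap R i.Ring)) (f.derivative.eval a)) :=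
    .of_mul_eq_one (Ideal.Quotient.mk _ b) (by
      rw [← map_mul, ← map_one (Ideal.Quotient.mk _), Ideal.Quotient.eq]
      exact hb)
  let P := simpleRootPair hmonic a
  let P' : StandardEtalePresentation i.Ring P.Ring :=
    ⟨P, P.X, P.hasMap_X, by simpa [StandardEtalePair.lift_X_left] using Function.bijective_id⟩
  obtain ⟨σ, hσ⟩ := exists_extend_ofStage i (T := P.Ring)
    ⟨inferInstance, .of_standardEtalePresentation P' rfl (mem_of_ofStage_mem ha) hunit⟩
  algebraize [(ofStage i : i.Ring →+* Henselization K)]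
  let σ' : P.Ring →ₐ[i.Ring] Henselization K := { σ with commutes' := fun r ↦ congr($hσ r) }
  have hmap : P.HasMap (σ' P.X) := P.hasMap_X.map σ'
  exact ⟨σ' P.X, (eval_map_algebraMap ..).trans hmap.1,
    Ideal.mem_of_dvd _ (dvd_sub_of_simpleRootPair_hasMap hmap) ha⟩

theorem henselianRing (K : Ideal R) :
    HenselianRing (Henselization K) (K.map (algebraMap R (Henselization K))) where
  jac x hx := Ideal.mem_jacobson_bot.mpr fun y ↦
    isUnit_of_sub_one_mem (by simpa using Ideal.mul_mem_right y _ hx)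
  is_henselian _ hf _ ha hu := exists_root_sub_mem hf ha hu

theorem isHenselization (K : Ideal R) : IsHenselization K (algebraMap R (Henselization K)) :=
  isHenselization_iff.mpr ⟨henselianRing K, isHenselEquiv K⟩

end Henselization

end Henselization

section IsHenselization

variable {R S T : Type u} [CommRing R] [CommRing S] [CommRing T] {K : Ideal R}

theorem IsHenselization.exists_algEquiv [Algebra R S] [Algebra R T]
    (hS : IsHenselization K (algebraMap R S)) (hT : IsHenselization K (algebraMap R T)) :
    Nonempty (S ≃ₐ[R] T) := by
  obtain ⟨f, hf, -⟩ := hS.2 T _ hT.1 (algebraMap R T) le_rfl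
  obtain ⟨g, hg, -⟩ := hT.2 S _ hS.1 (algebraMap R S) le_rfl
  let f' : S →ₐ[R] T := { f with commutes' := fun r ↦ congr($hf r) }
  let g' : T →ₐ[R] S := { g with commutes' := fun r ↦ congr($hg r) }
  have hgf : g.comp f = RingHom.id S := (hS.2 S _ hS.1 (algebraMap R S) le_rfl).unique
    (by rw [RingHom.comp_assoc, hf, hg]) (RingHom.id_comp _)
  have hfg : f.comp g = RingHom.id T := (hT.2 T _ hT.1 (algebraMap R T) le_rfl).unique
    (by rw [RingHom.comp_assoc, hg, hf]) (RingHom.id_comp _)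
  exact ⟨.ofAlgHom f' g' (AlgHom.ext fun x ↦ congr($hfg x)) (AlgHom.ext fun x ↦ congr($hgf x))⟩

theorem IsHenselization.flat [Algebra R S] (h : IsHenselization K (algebraMap R S)) :
    Module.Flat R S := by
  obtain ⟨e⟩ := h.exists_algEquiv (Henselization.isHenselization K)
  exact .of_linearEquiv e.toLinearEquiv

theorem IsHenselization.of_comp {ρ : R →+* S} {σ : S →+* T} (h : IsHenselization K (σ.comp ρ))
    (hρ : IsHenselEquiv K ρ) : IsHenselization (K.map ρ) σ := by
  rw [isHenselization_iff, ← Ideal.map_map] at *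
  exact ⟨h.1, h.2.of_comp hρ⟩

theorem IsHenselization.exists_away {ρ : R →+* S} (h : IsHenselization K ρ) {f : R}
    (hf : f - 1 ∈ K) :
    ∃ σ : Localization.Away f →+* S, σ.comp (algebraMap R _) = ρ ∧
      IsHenselization (K.map (algebraMap R _)) σ := by
  have haway : IsHenselEquiv K (algebraMap R (Localization.Away f)) := .away f hf
  obtain ⟨σ, rfl, -⟩ := haway S _ h.1 ρ le_rfl
  exact ⟨σ, rfl, h.of_comp haway⟩

end IsHenselization

section HFormallyEtale

variable {A R S : Type u} [CommRing A] [CommRing R] [CommRing S] {I : Ideal A}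

theorem IsHenselEquiv.isHFormallyEtale_comp_iff {ψ : A →+* R} {ρ : R →+* S}
    (hρ : IsHenselEquiv (I.map ψ) ρ) :
    IsHFormallyEtale (ρ.comp ψ) I ↔ IsHFormallyEtale ψ I := by
  have hext {E : Type u} [CommRing E] {e : A →+* E} (he : ∃ N, 1 ≤ N ∧ (I ^ N).map e = ⊥)
      (f : R →+* E) (hf : f.comp ψ = e) : ∃! g : S →+* E, g.comp ρ = f := by
    obtain ⟨N, -, hN⟩ := he
    refine hρ E (I.map e) (henselianRing_of_isNilpotent ⟨N, by rw [← Ideal.map_pow, hN]; rfl⟩) f ?_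
    rw [Ideal.map_map, hf]
  constructor <;> intro h E C _ _ e c p u hpe huc ⟨N, hN, hNE, hNC⟩ hp hM
  · obtain ⟨u', hu', hu''⟩ := hext ⟨N, hN, hNC⟩ u huc
    obtain ⟨v', ⟨hve, hvp⟩, hv''⟩ := h E C e c p u' hpe
      (by rw [← RingHom.comp_assoc, hu', huc]) ⟨N, hN, hNE, hNC⟩ hp hM
    refine ⟨v'.comp ρ, ⟨by rw [RingHom.comp_assoc, hve],
      by rw [← RingHom.comp_assoc, hvp, hu']⟩, ?_⟩
    rintro w ⟨hwe, hwp⟩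
    obtain ⟨w', rfl, -⟩ := hext ⟨N, hN, hNE⟩ w hwe
    have hwp' : p.comp w' = u' := hu'' _ hwp
    rw [hv'' w' ⟨hwe, hwp'⟩]
  · obtain ⟨v, ⟨hve, hvp⟩, hv'⟩ := h E C e c p (u.comp ρ) hpe
      (by rw [RingHom.comp_assoc, huc]) ⟨N, hN, hNE, hNC⟩ hp hM
    obtain ⟨v', rfl, hv''⟩ := hext ⟨N, hN, hNE⟩ v hve
    refine ⟨v', ⟨by rw [← RingHom.comp_assoc, hve], ?_⟩, ?_⟩
    · exact (hext ⟨N, hN, hNC⟩ (u.comp ρ) (by rw [RingHom.comp_assoc, huc])).unique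
        (by rw [RingHom.comp_assoc, hvp]) rfl
    · rintro w ⟨hwe, hwp⟩
      exact hv'' w (hv' _ ⟨by rw [RingHom.comp_assoc, hwe], by rw [← RingHom.comp_assoc, hwp]⟩)

theorem isHFormallyEtale_of_formallyEtale [Algebra A R] [Algebra.FormallyEtale A R] (I : Ideal A) :
    IsHFormallyEtale (algebraMap A R) I := by
  rintro E C _ _ e c p u hpe huc - hp ⟨M, -, hM⟩
  algebraize [e, c]
  let p' : E →ₐ[A] C := { p with commutes' := fun a ↦ congr($hpe a) }
  let u' : R →ₐ[A] C := { u with commutes' := fun a ↦ congr($huc a) }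
  have hnil : IsNilpotent (RingHom.ker (p' : E →+* C)) := ⟨M, hM⟩
  let v := Algebra.FormallySmooth.liftOfSurjective u' p' hp hnil
  have hv : p'.comp v = u' := Algebra.FormallySmooth.comp_liftOfSurjective u' p' hp hnil
  refine ⟨v, ⟨v.comp_algebraMap, congr(RingHomClass.toRingHom $hv)⟩, ?_⟩
  rintro w ⟨hwe, hwp⟩
  let w' : R →ₐ[A] E := { w with commutes' := fun a ↦ congr($hwe a) }
  have hw : w' = v := Algebra.FormallyUnramified.lift_unique' p' hnil _ _ <| by
    rw [hv]
    exact AlgHom.ext fun x ↦ congr($hwp x)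
  exact congr(RingHomClass.toRingHom $hw)

theorem IsHFormallyEtale.formallyUnramified_quotient [Algebra A R]
    (h : IsHFormallyEtale (algebraMap A R) I) :
    Algebra.FormallyUnramified A (R ⧸ I.map (algebraMap A R)) := by
  rw [Algebra.FormallyUnramified.iff_comp_injective]
  intro E _ _ J hJ g₁ g₂ hg
  let π := Ideal.Quotient.mkₐ A (I.map (algebraMap A R))
  have hE : I.map (algebraMap A E) = ⊥ := by
    rw [← (g₁.comp π).comp_algebraMap, ← Ideal.map_map, Ideal.map_eq_bot_iff_le_ker]
    intro x hx
    have hπ : π x = 0 := Ideal.Quotient.eq_zero_iff_mem.mpr hx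
    change g₁ (π x) = 0
    rw [hπ, map_zero]
  have hEJ : I.map (algebraMap A (E ⧸ J)) = ⊥ := by
    rw [IsScalarTower.algebraMap_eq A E, ← Ideal.map_map, hE, Ideal.map_bot]
  have hlift := h E (E ⧸ J) (algebraMap A E) (algebraMap A (E ⧸ J)) (Ideal.Quotient.mk J)
    ((Ideal.Quotient.mkₐ A J).comp (g₁.comp π)) rfl (AlgHom.comp_algebraMap _)
    ⟨1, le_rfl, by rw [pow_one, hE], by rw [pow_one, hEJ]⟩ Ideal.Quotient.mk_surjective
    ⟨2, one_le_two, by rw [Ideal.mk_ker, hJ]⟩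
  have hπ : g₁.comp π = g₂.comp π := AlgHom.coe_ringHom_injective <|
    hlift.unique ⟨(g₁.comp π).comp_algebraMap, rfl⟩ ⟨(g₂.comp π).comp_algebraMap,
      RingHom.ext fun x ↦ congr($hg (π x)).symm⟩
  exact (AlgHom.cancel_right (Ideal.Quotient.mkₐ_surjective A _)).mp hπ

end HFormallyEtale

section FlatDescent

theorem flat_of_flat_of_faithfullyFlat (A S T : Type*) [CommRing A] [CommRing S] [CommRing T]
    [Algebra A S] [Algebra A T] [Algebra S T] [IsScalarTower A S T] [Module.Flat A T]
    [Module.FaithfullyFlat S T] : Module.Flat A S := by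
  rw [Module.Flat.iff_lTensor_injectiveₛ]
  intro M _ _ P
  have h : Function.Injective
      ((AlgebraTensorModule.lTensor S S P.subtype).lTensor T) := by
    rw [← AlgebraTensorModule.coe_lTensor (A := T),
      ← EquivLike.comp_injective _ (AlgebraTensorModule.cancelBaseChange A S T T M),
      ← LinearEquiv.coe_coe, ← LinearMap.coe_comp,
      ← AlgebraTensorModule.lTensor_comp_cancelBaseChange, LinearMap.coe_comp,
      LinearEquiv.coe_coe, EquivLike.injective_comp]
    exact Module.Flat.lTensor_preserves_injective_linearMap _ Subtype.val_injective
  exact (Module.FaithfullyFlat.lTensor_injective_iff_injective S T _).mp h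

theorem flat_localization_of_liesOver (A : Type*) {R S : Type*} [CommRing A] [CommRing R]
    [CommRing S] [Algebra A R] [Algebra R S] [Algebra A S] [IsScalarTower A R S]
    [Module.Flat A S] [Module.Flat R S] (q : Ideal R) [q.IsPrime] (Q : Ideal S) [Q.IsPrime]
    [Q.LiesOver q] : Module.Flat A (Localization.AtPrime q) := by
  let := Localization.AtPrime.algebraOfLiesOver q Q
  have : Module.Flat (Localization.AtPrime q) (Localization.AtPrime Q) := by
    rw [Module.flat_iff_of_isLocalization (Localization.AtPrime q) q.primeCompl]
    exact .trans R S _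
  have : Module.FaithfullyFlat (Localization.AtPrime q) (Localization.AtPrime Q) :=
    .of_flat_of_isLocalHom
  have : Module.Flat A (Localization.AtPrime Q) := .trans A S _
  exact flat_of_flat_of_faithfullyFlat A _ (Localization.AtPrime Q)

end FlatDescent

section Etale

variable {A R : Type*} [CommRing A] [CommRing R] [Algebra A R]

theorem formallySmooth_of_formallyUnramified_of_flat_of_isLocalRing {S : Type*} [CommRing S]
    [IsLocalRing A] [IsLocalRing S] [Algebra A S] [IsLocalHom (algebraMap A S)] [Algebra R S]
    [IsScalarTower A R S] (M : Submonoid R) [IsLocalization M S]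
    [Algebra.FinitePresentation A R] [Algebra.FormallyUnramified A S] [Module.Flat A S] :
    Algebra.FormallySmooth A S := by
  have : Algebra.EssFiniteType R S := .of_isLocalization S M
  have : Algebra.EssFiniteType A S := .comp A R S
  let k := IsLocalRing.ResidueField A
  have : Algebra.FormallyEtale k (k ⊗[A] S) := .of_formallyUnramified_of_field _ _
  exact .of_formallySmooth_residueField_tensor M

theorem formallySmooth_localization_of_formallyUnramified_of_flat [Algebra.FinitePresentation A R]
    (q : Ideal R) [q.IsPrime] [Algebra.FormallyUnramified A (Localization.AtPrime q)]
    [Module.Flat A (Localization.AtPrime q)] :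
    Algebra.FormallySmooth A (Localization.AtPrime q) := by
  let p := q.under A
  let Ap := Localization.AtPrime p
  let Rq := Localization.AtPrime q
  let := Localization.AtPrime.algebraOfLiesOver p q
  have : Algebra.FormallyUnramified Ap Rq := .of_restrictScalars A Ap Rq
  have : Module.Flat Ap Rq := by
    rwa [Module.flat_iff_of_isLocalization Ap p.primeCompl]
  let φ : Ap ⊗[A] R →ₐ[Ap] Rq :=
    Algebra.TensorProduct.productLeftAlgHom (Algebra.ofId Ap Rq) (IsScalarTower.toAlgHom A R Rq)
  algebraize [φ.toRingHom]
  let := Algebra.TensorProduct.rightAlgebra (R := A) (A := Ap) (B := R)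
  have : IsScalarTower R (Ap ⊗[A] R) Rq :=
    .of_algebraMap_eq fun x ↦ by simp [φ, RingHom.algebraMap_toAlgebra]
  have : IsLocalization (q.primeCompl.map (algebraMap R (Ap ⊗[A] R))) Rq := by
    refine IsLocalization.isLocalization_of_submonoid_le (Ap ⊗[A] R) Rq
      (Algebra.algebraMapSubmonoid R p.primeCompl) q.primeCompl ?_
    rintro _ ⟨a, ha, rfl⟩
    exact ha
  have : Algebra.FormallySmooth Ap Rq :=
    formallySmooth_of_formallyUnramified_of_flat_of_isLocalRing
      (q.primeCompl.map (algebraMap R (Ap ⊗[A] R)))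
  exact .comp A Ap Rq

end Etale

section Locus

variable {A R : Type*} [CommRing A] [CommRing R] [Algebra A R] {I : Ideal A}

theorem top_le_map_smul_kaehlerDifferential
    [Algebra.FormallyUnramified A (R ⧸ I.map (algebraMap A R))] :
    ⊤ ≤ I.map (algebraMap A R) • (⊤ : Submodule R Ω[R⁄A]) := by
  have : Algebra.FormallyUnramified (A ⧸ I) (R ⧸ I.map (algebraMap A R)) :=
    .of_restrictScalars A _ _
  let := Algebra.TensorProduct.rightAlgebra (R := A) (A := A ⧸ I) (B := R)
  have : Algebra.FormallyUnramified (A ⧸ I) ((A ⧸ I) ⊗[A] R) :=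
    .of_equiv (Algebra.TensorProduct.quotIdealMapEquivQuotTensor R I)
  have : Subsingleton ((A ⧸ I) ⊗[A] Ω[R⁄A]) :=
    (KaehlerDifferential.tensorKaehlerEquivBase A (A ⧸ I) R ((A ⧸ I) ⊗[A] R)).subsingleton
  have : Subsingleton (Ω[R⁄A] ⧸ (I • ⊤ : Submodule A Ω[R⁄A])) :=
    (TensorProduct.quotTensorEquivQuotSMul Ω[R⁄A] I).symm.subsingleton
  have htop : (I • ⊤ : Submodule A Ω[R⁄A]) = ⊤ := Submodule.Quotient.subsingleton_iff.mp this
  have hmap : (I.map (algebraMap A R) • (⊤ : Submodule R Ω[R⁄A])).restrictScalars A = ⊤ := by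
    rw [Ideal.smul_restrictScalars, Submodule.restrictScalars_top, htop]
  exact ((Submodule.restrictScalars_eq_top_iff A R _).mp hmap).ge

theorem zeroLocus_subset_unramifiedLocus [Algebra.FiniteType A R]
    [Algebra.FormallyUnramified A (R ⧸ I.map (algebraMap A R))] :
    PrimeSpectrum.zeroLocus (I.map (algebraMap A R)) ⊆ Algebra.unramifiedLocus A R := by
  obtain ⟨r, hr, hr0⟩ := Submodule.exists_sub_one_mem_and_smul_eq_zero_of_fg_of_le_smul
    (I.map (algebraMap A R)) _ Module.Finite.fg_top top_le_map_smul_kaehlerDifferential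
  intro q hq
  have hrq : r ∉ q.asIdeal := fun hrq ↦ q.asIdeal.one_notMem <| by
    simpa using q.asIdeal.sub_mem hrq (hq hr)
  rw [Algebra.unramifiedLocus_eq_compl_support, Set.mem_compl_iff, Module.notMem_support_iff']
  exact fun m ↦ ⟨r, hrq, hr0 m trivial⟩

theorem exists_basicOpen_subset_of_zeroLocus_subset {K : Ideal R} {U : Set (PrimeSpectrum R)}
    (hU : IsOpen U) (hKU : PrimeSpectrum.zeroLocus K ⊆ U) :
    ∃ f : R, f - 1 ∈ K ∧ ↑(PrimeSpectrum.basicOpen f) ⊆ U := by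
  obtain ⟨J, hJ⟩ := (PrimeSpectrum.isClosed_iff_zeroLocus_ideal _).mp hU.isClosed_compl
  have hdisj : PrimeSpectrum.zeroLocus (J : Set R) ∩ PrimeSpectrum.zeroLocus K = ∅ := by
    rw [← hJ, ← Set.disjoint_iff_inter_eq_empty, Set.disjoint_compl_left_iff_subset]
    exact hKU
  have htop : J ⊔ K = ⊤ := by
    rw [← PrimeSpectrum.zeroLocus_empty_iff_eq_top, PrimeSpectrum.zeroLocus_sup, hdisj]
  obtain ⟨f, hf, k, hk, hfk⟩ := Submodule.mem_sup.mp ((Ideal.eq_top_iff_one _).mp htop)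
  refine ⟨f, by rw [← hfk]; simpa using hk, ?_⟩
  rw [← compl_compl U, hJ, Set.subset_compl_comm, PrimeSpectrum.basicOpen_eq_zeroLocus_compl,
    compl_compl]
  exact PrimeSpectrum.zeroLocus_anti_mono (Set.singleton_subset_iff.mpr hf)

end Locus

section HEtale

variable {A R B : Type u} [CommRing A] [CommRing R] [CommRing B] [Algebra A R] [Algebra R B]
  [Algebra A B] [IsScalarTower A R B] {I : Ideal A}

theorem IsHenselization.zeroLocus_subset_etaleLocus [Algebra.FinitePresentation A R]
    [Module.Flat A B] (h : IsHenselization (I.map (algebraMap A R)) (algebraMap R B))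
    (hB : IsHFormallyEtale (algebraMap A B) I) :
    PrimeSpectrum.zeroLocus (I.map (algebraMap A R)) ⊆ Algebra.etaleLocus A R := by
  have hR : IsHFormallyEtale (algebraMap A R) I := by
    rwa [← h.isHenselEquiv.isHFormallyEtale_comp_iff, ← IsScalarTower.algebraMap_eq]
  have := hR.formallyUnramified_quotient
  intro q hq
  have hunr : Algebra.FormallyUnramified A (Localization.AtPrime q.asIdeal) :=
    zeroLocus_subset_unramifiedLocus hq
  obtain ⟨Q, _, _⟩ := h.isHenselEquiv.exists_liesOver q.asIdeal hq
  have := h.flat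
  have := flat_localization_of_liesOver A q.asIdeal Q
  rw [Algebra.etaleLocus_eq_unramfiedLocus_inter_smoothLocus]
  exact ⟨hunr, formallySmooth_localization_of_formallyUnramified_of_flat q.asIdeal⟩

theorem IsHenselization.exists_etale_away [Algebra.FinitePresentation A R]
    [Module.Flat A B] (h : IsHenselization (I.map (algebraMap A R)) (algebraMap R B))
    (hB : IsHFormallyEtale (algebraMap A B) I) :
    ∃ f : R, f - 1 ∈ I.map (algebraMap A R) ∧ Algebra.Etale A (Localization.Away f) := by
  obtain ⟨f, hf, hfU⟩ := exists_basicOpen_subset_of_zeroLocus_subset Algebra.isOpen_etaleLocus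
    (h.zeroLocus_subset_etaleLocus hB)
  exact ⟨f, hf, Algebra.basicOpen_subset_etaleLocus_iff_etale.mp hfU⟩

end HEtale

section Equivalence

variable {A B : Type u} [CommRing A] [CommRing B] [Algebra A B] {I : Ideal A}

theorem IsHfp.isHEtale (h : IsHfp (algebraMap A B) I) (hB : IsHFormallyEtale (algebraMap A B) I)
    [Module.Flat A B] : IsHEtale (algebraMap A B) I := by
  obtain ⟨R, _, ψ, ρ, hψ, hψρ, hρ⟩ := h
  algebraize [ψ, ρ]
  have : IsScalarTower A R B := .of_algebraMap_eq' hψρ.symm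
  obtain ⟨f, hf, hfe⟩ := IsHenselization.exists_etale_away hρ hB
  obtain ⟨σ, hσ, hσH⟩ := hρ.exists_away hf
  refine ⟨Localization.Away f, _, _, σ, hfe, ?_, ?_⟩
  · rw [IsScalarTower.algebraMap_eq A R, ← RingHom.comp_assoc, hσ]
    exact hψρ
  · rw [IsScalarTower.algebraMap_eq A R, ← Ideal.map_map]
    exact hσH

theorem IsHEtale.isHfp (h : IsHEtale (algebraMap A B) I) : IsHfp (algebraMap A B) I := by
  obtain ⟨R, _, _, ρ, _, hρ, hH⟩ := h
  exact ⟨R, _, algebraMap A R, ρ, RingHom.finitePresentation_algebraMap.mpr inferInstance, hρ, hH⟩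

theorem IsHEtale.isHFormallyEtale (h : IsHEtale (algebraMap A B) I) :
    IsHFormallyEtale (algebraMap A B) I := by
  obtain ⟨R, _, _, ρ, _, hρ, hH⟩ := h
  rw [← hρ, hH.isHenselEquiv.isHFormallyEtale_comp_iff]
  exact isHFormallyEtale_of_formallyEtale I

theorem IsHEtale.flat (h : IsHEtale (algebraMap A B) I) : Module.Flat A B := by
  obtain ⟨R, _, _, ρ, _, hρ, hH⟩ := h
  algebraize [ρ]
  have : IsScalarTower A R B := .of_algebraMap_eq' hρ.symm
  have : Module.Flat R B := IsHenselization.flat hH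
  exact .trans A R B

end Equivalence

theorem isHEtale_iff_isHfp_isHFormallyEtale_flat_general
    {A B : Type u} [CommRing A] [CommRing B] [Algebra A B] (I : Ideal A) :
    (IsHfp (algebraMap A B) I ∧ IsHFormallyEtale (algebraMap A B) I ∧ Module.Flat A B) ↔
      IsHEtale (algebraMap A B) I :=
  ⟨fun ⟨hfp, hfe, _⟩ ↦ hfp.isHEtale hfe, fun h ↦ ⟨h.isHfp, h.isHFormallyEtale, h.flat⟩⟩

/-- `B` is hfp, h-formally étale and flat over the Henselian pair `(A, I)` iff `B` is
h-étale over `A`. -/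
theorem isHEtale_iff_isHfp_isHFormallyEtale_flat
    {A B : Type u} [CommRing A] [CommRing B] [Algebra A B]
    (I : Ideal A) [HenselianRing A I]
    [HenselianRing B (I.map (algebraMap A B))] :
    (IsHfp (algebraMap A B) I ∧ IsHFormallyEtale (algebraMap A B) I ∧ Module.Flat A B) ↔
      IsHEtale (algebraMap A B) I :=
  isHEtale_iff_isHfp_isHFormallyEtale_flat_general I
end
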